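/- Suppose n ≥ 3 is odd. Fix an integer m ≥ 2, a real α with 1/(n−Δ) < α < 1/(n−1), ε > 0, and S > 0. Define J(s) = (1/(2π))·lim_{R→∞} ∫_{−R}^{R} sin(2π(y^n + sy))·(dy/y) (the integrand being extended by its limiting value 2πs at y = 0). Then there exist C > 0 and t₁ > 0 such that for every t ∈ (0, t₁] which either (i) is irrational and lies in ℬ_{m,α}, or (ii) is a rational with reduced form u/q satisfying t ≤ m·q^{−1/(α(n−Δ))}, for every s ∈ [−S, S] and each sign σ ∈ {+1, −1}, the limit J(s) exists, the limit defining U(t, σγ + s·t^{1/n}) exists, and |U(t, σγ + s·t^{1/n}) − (1/2 − σ·J(s))| ≤ C·( t^{αΔ/2^{n−1} − ε} + t^{αn−1} ). -/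

import Mathlib

open Filter Finset MeasureTheory

/-- An approximant to a real number `t`: a reduced fraction `u/q` with `q ≥ 1`
and `|t - u/q| < 1/q²`. -/
def IsApproximant (t : ℝ) (u q : ℤ) : Prop :=
  1 ≤ q ∧ Int.gcd u q = 1 ∧ |t - (u : ℝ) / (q : ℝ)| < 1 / (q : ℝ) ^ 2

/-- The set `𝒜_m`: `t ∈ [0,1]` such that for every real `M ≥ m` there is an
approximant `u/q` to `t` with `M^Δ < q ≤ M^(n-Δ)`. -/
def Aset (n : ℕ) (Δ : ℝ) (m : ℤ) : Set ℝ :=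
  {t | t ∈ Set.Icc (0 : ℝ) 1 ∧ ∀ M : ℝ, (m : ℝ) ≤ M →
    ∃ u q : ℤ, IsApproximant t u q ∧ M ^ Δ < (q : ℝ) ∧ (q : ℝ) ≤ M ^ ((n : ℝ) - Δ)}

/-- The set `𝒜`: `t ∈ [0,1]` such that for all sufficiently large `M` there is an
approximant `u/q` to `t` with `M^Δ < q ≤ M^(n-Δ)`. -/
def Aall (n : ℕ) (Δ : ℝ) : Set ℝ :=
  {t | t ∈ Set.Icc (0 : ℝ) 1 ∧ ∃ M₀ : ℝ, ∀ M : ℝ, M₀ ≤ M →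
    ∃ u q : ℤ, IsApproximant t u q ∧ M ^ Δ < (q : ℝ) ∧ (q : ℝ) ≤ M ^ ((n : ℝ) - Δ)}

/-- The set `ℬ_{m,α}`: `t ∈ (0,1]` such that for every real `M ≥ m·t^(-α)` there is an
approximant `u/q` to `t` with `M^Δ < q ≤ M^(n-Δ)`. -/
def Bset (n : ℕ) (Δ : ℝ) (m : ℤ) (α : ℝ) : Set ℝ :=
  {t | t ∈ Set.Ioc (0 : ℝ) 1 ∧ ∀ M : ℝ, (m : ℝ) * t ^ (-α) ≤ M →
    ∃ u q : ℤ, IsApproximant t u q ∧ M ^ Δ < (q : ℝ) ∧ (q : ℝ) ≤ M ^ ((n : ℝ) - Δ)}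

/-- `e(ξ) = exp(2πiξ)`. -/
noncomputable def ee (ξ : ℝ) : ℂ := Complex.exp (2 * Real.pi * Complex.I * ξ)

/-- The partial sum defining `U(t,x)`:
`2γ + Σ_{0<|k|≤K} (sin(2πγk)/(πk))·e(t·k^n + x·k)`. -/
noncomputable def Upartial (n : ℕ) (γ t x : ℝ) (K : ℕ) : ℂ :=
  Complex.ofReal (2 * γ) +
    ∑ k ∈ (Finset.Icc (-(K : ℤ)) (K : ℤ)).filter (· ≠ 0),
      Complex.ofReal (Real.sin (2 * Real.pi * γ * (k : ℝ)) / (Real.pi * (k : ℝ))) *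
        ee (t * (k : ℝ) ^ n + x * (k : ℝ))

/-- The truncated integral `∫_{−R}^{R} sin(2π(y^n + sy))·dy/y`, the integrand extended by its
limiting value `2πs` at `y = 0`. -/
noncomputable def Jint (n : ℕ) (s R : ℝ) : ℝ :=
  ∫ y in (-R)..R,
    (if y = 0 then 2 * Real.pi * s else Real.sin (2 * Real.pi * (y ^ n + s * y)) / y)

/-! Since `n` is odd, pairing `k` with `-k` turns the partial sums of `U(t, x)` into
`2γ + W(x + γ) - W(x - γ)`, where `W(y) = ∑ sin (2π(tk^n + yk)) / (πk)` over `k ≥ 1`. At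
`x = σγ + s t^{1/n}` one of the two arguments is `s t^{1/n}` and the other stays away from the
integers. Put `τ = t^{1/(3n-2)}` and choose `β` with `α < β < 1/(n-1)`.

* For `k ≤ τ⁻³`, the sum away from the integers is close to that of the sawtooth `1/2 - y`, because
  `tk^n` varies slowly against `yk`; at `y = s t^{1/n}` it is a Riemann sum of step `t^{1/n}` for
  the integral `J(s)`.
* For `τ⁻³ ≤ k ≤ t^{-β}`, the phase increments stay off the integers since `β(n-1) < 1`, and the
  Kusmin–Landau inequality applies.
* For `k ≥ t^{-β}`, Weyl's inequality at the approximants of `t` and partial summation bound the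
  sum. When `t = u/q` and `k` exceeds `q`, no approximant is large enough; there one expands
  `e(uk^n/q)` into a finite Fourier series, whose coefficients are real because `n` is odd, so that
  the tail is a combination of tails of the sawtooth series.

The strict inequality `α < β` absorbs both the factor `m` and the `ε`-loss in Weyl's inequality.
-/

section Exponential

lemma ee_eq_fourierChar (x : ℝ) : ee x = Real.fourierChar x := by
  rw [Real.fourierChar_apply, ee]
  congr 1
  push_cast
  ring

lemma ee_eq_exp (x : ℝ) : ee x = Complex.exp (((2 * Real.pi * x : ℝ) : ℂ) * Complex.I) := by
  rw [ee_eq_fourierChar, Real.fourierChar_apply]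

lemma ee_add (x y : ℝ) : ee (x + y) = ee x * ee y := by
  simp only [ee_eq_fourierChar, AddChar.map_add_eq_mul, Circle.coe_mul]

lemma ee_zero : ee 0 = 1 := by simp [ee]

lemma norm_ee (x : ℝ) : ‖ee x‖ = 1 := by
  rw [ee_eq_fourierChar, Circle.norm_coe]

lemma ee_re (x : ℝ) : (ee x).re = Real.cos (2 * Real.pi * x) := by
  rw [ee_eq_exp, Complex.exp_ofReal_mul_I_re]

lemma ee_im (x : ℝ) : (ee x).im = Real.sin (2 * Real.pi * x) := by
  rw [ee_eq_exp, Complex.exp_ofReal_mul_I_im]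

lemma ee_neg (x : ℝ) : ee (-x) = starRingEnd ℂ (ee x) := by
  simp only [ee_eq_fourierChar, ← Circle.star_addChar, starRingEnd_apply]

lemma ee_sub (x y : ℝ) : ee (x - y) = ee x * starRingEnd ℂ (ee y) := by
  rw [sub_eq_add_neg, ee_add, ee_neg]

lemma ee_intCast (k : ℤ) : ee k = 1 := by
  rw [ee, Complex.exp_eq_one_iff]
  exact ⟨k, by push_cast; ring⟩

lemma ee_add_intCast (x : ℝ) (k : ℤ) : ee (x + k) = ee x := by
  rw [ee_add, ee_intCast, mul_one]

lemma ee_mul_natCast (x : ℝ) (k : ℕ) : ee (x * k) = ee x ^ k := by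
  rw [ee, ee, ← Complex.exp_nat_mul]
  congr 1
  push_cast
  ring

lemma norm_ee_sub_one (x : ℝ) : ‖ee x - 1‖ = 2 * |Real.sin (Real.pi * x)| := by
  rw [ee_eq_exp, mul_comm, Complex.norm_exp_I_mul_ofReal_sub_one, norm_mul, Real.norm_ofNat,
    Real.norm_eq_abs, mul_assoc, mul_div_cancel_left₀ _ two_ne_zero]

lemma norm_ee_sub_ee_le (x y : ℝ) : ‖ee x - ee y‖ ≤ 2 * Real.pi * |x - y| := by
  have hfactor : ee x - ee y = ee y * (ee (x - y) - 1) := by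
    rw [mul_sub, ← ee_add, mul_one, add_sub_cancel]
  have hsin := Real.abs_sin_le_abs (x := Real.pi * (x - y))
  rw [abs_mul, abs_of_pos Real.pi_pos] at hsin
  rw [hfactor, norm_mul, norm_ee, one_mul, norm_ee_sub_one]
  linarith

end Exponential

section DistInt

/-- The distance from a real number to the nearest integer, usually written `‖x‖`. -/
noncomputable def distInt (x : ℝ) : ℝ := |x - round x|

lemma distInt_nonneg (x : ℝ) : 0 ≤ distInt x := abs_nonneg _

lemma distInt_le_abs_sub_intCast (x : ℝ) (k : ℤ) : distInt x ≤ |x - k| := round_le x k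

lemma distInt_le_half (x : ℝ) : distInt x ≤ 1 / 2 := abs_sub_round x

lemma distInt_le_distInt_add_abs_sub (x y : ℝ) : distInt x ≤ distInt y + |x - y| :=
  calc distInt x ≤ |x - round y| := distInt_le_abs_sub_intCast x (round y)
    _ ≤ |x - y| + |y - round y| := abs_sub_le _ _ _
    _ = distInt y + |x - y| := add_comm _ _

lemma distInt_add_intCast (x : ℝ) (k : ℤ) : distInt (x + k) = distInt x := by
  rw [distInt, distInt, round_add_intCast, Int.cast_add, add_sub_add_right_eq_sub]

lemma le_distInt_of_mem_Icc {x δ : ℝ} (hx : x ∈ Set.Icc δ (1 - δ)) : δ ≤ distInt x := by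
  obtain ⟨h0, h1⟩ := hx
  rcases le_or_gt (round x) 0 with h | h
  · have : ((round x : ℤ) : ℝ) ≤ 0 := by exact_mod_cast h
    exact le_trans (by linarith) (le_abs_self _)
  · have : (1 : ℝ) ≤ ((round x : ℤ) : ℝ) := by exact_mod_cast h
    exact le_trans (by linarith) (neg_le_abs _)

lemma four_mul_distInt_le_norm_ee_sub_one (x : ℝ) : 4 * distInt x ≤ ‖ee x - 1‖ := by
  have hround : ee x = ee (x - round x) := by
    rw [← ee_add_intCast (x - round x) (round x), sub_add_cancel]
  have hpi : |Real.pi * (x - round x)| = Real.pi * distInt x := by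
    rw [abs_mul, abs_of_pos Real.pi_pos, distInt]
  have hsin := Real.mul_abs_le_abs_sin (x := Real.pi * (x - round x)) (by
    rw [hpi]; nlinarith [Real.pi_pos, distInt_le_half x])
  rw [hpi, div_mul_eq_mul_div, ← mul_assoc, mul_right_comm,
    mul_div_cancel_right₀ _ Real.pi_ne_zero] at hsin
  rw [hround, norm_ee_sub_one]
  linarith

lemma norm_inv_ee_sub_one_sub_le {δ x y : ℝ} (hδ : 0 < δ) (hx : δ ≤ distInt x)
    (hy : δ ≤ distInt y) :
    ‖(ee x - 1)⁻¹ - (ee y - 1)⁻¹‖ ≤ |x - y| / (2 * δ ^ 2) := by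
  have hx' : 4 * δ ≤ ‖ee x - 1‖ := by linarith [four_mul_distInt_le_norm_ee_sub_one x]
  have hy' : 4 * δ ≤ ‖ee y - 1‖ := by linarith [four_mul_distInt_le_norm_ee_sub_one y]
  have hx0 : ee x - 1 ≠ 0 := norm_pos_iff.1 (by linarith)
  have hy0 : ee y - 1 ≠ 0 := norm_pos_iff.1 (by linarith)
  have hdiff : ‖ee y - 1 - (ee x - 1)‖ ≤ 8 * |x - y| := by
    rw [sub_sub_sub_cancel_right, abs_sub_comm]
    refine (norm_ee_sub_ee_le y x).trans ?_
    nlinarith [Real.pi_le_four, abs_nonneg (y - x)]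
  calc ‖(ee x - 1)⁻¹ - (ee y - 1)⁻¹‖
      = ‖ee x - 1‖⁻¹ * ‖ee y - 1 - (ee x - 1)‖ * ‖ee y - 1‖⁻¹ := by
        rw [inv_sub_inv' hx0 hy0, norm_mul, norm_mul, norm_inv, norm_inv]
    _ ≤ (4 * δ)⁻¹ * (8 * |x - y|) * (4 * δ)⁻¹ := by gcongr
    _ = |x - y| / (2 * δ ^ 2) := by field_simp; ring

end DistInt

section SummationByParts

lemma sum_Ico_mul_eq_sub_sum_Ico {R : Type*} [CommRing R] (w z : ℕ → R) {a b : ℕ} (hab : a ≤ b) :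
    ∑ k ∈ Ico a b, w k * z k = w b * ∑ k ∈ Ico a b, z k
      - ∑ k ∈ Ico a b, (w (k + 1) - w k) * ∑ j ∈ Ico a (k + 1), z j := by
  induction b, hab using Nat.le_induction with
  | base => simp
  | succ b hb ih =>
    simp only [sum_Ico_succ_top hb, ih]
    ring

lemma norm_sum_Ico_mul_le {R : Type*} [NormedCommRing R] (w z : ℕ → R) {a b : ℕ} (hab : a ≤ b)
    {P : ℝ} (hP : ∀ j, a ≤ j → j ≤ b → ‖∑ k ∈ Ico a j, z k‖ ≤ P) :
    ‖∑ k ∈ Ico a b, w k * z k‖ ≤ P * (‖w b‖ + ∑ k ∈ Ico a b, ‖w (k + 1) - w k‖) := by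
  rw [sum_Ico_mul_eq_sub_sum_Ico w z hab, mul_add,
    mul_sum _ fun k => ‖w (k + 1) - w k‖]
  refine (norm_sub_le _ _).trans
    (add_le_add ?_ ((norm_sum_le _ _).trans (sum_le_sum fun k hk => ?_)))
  · rw [mul_comm]
    exact (norm_mul_le _ _).trans (by gcongr; exact hP b hab le_rfl)
  · rw [mem_Ico] at hk
    rw [mul_comm]
    exact (norm_mul_le _ _).trans (by gcongr; exact hP _ (by lia) (by lia))

lemma norm_sum_Ico_div_natCast_le (z : ℕ → ℂ) {a b : ℕ} (ha : 1 ≤ a) (hab : a ≤ b) {P : ℝ}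
    (hP : ∀ j, a ≤ j → j ≤ b → ‖∑ k ∈ Ico a j, z k‖ ≤ P) :
    ‖∑ k ∈ Ico a b, z k / k‖ ≤ P / a := by
  have hvar : ∀ k ∈ Ico a b,
      ‖((k + 1 : ℕ) : ℂ)⁻¹ - (k : ℂ)⁻¹‖ = -((k + 1 : ℕ) : ℝ)⁻¹ - -(k : ℝ)⁻¹ := by
    intro k hk
    have hk0 : (0 : ℝ) < k := by exact_mod_cast ha.trans (mem_Ico.1 hk).1
    have hle : ((k + 1 : ℕ) : ℝ)⁻¹ ≤ (k : ℝ)⁻¹ := inv_anti₀ hk0 (by push_cast; linarith)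
    rw [← Complex.ofReal_natCast, ← Complex.ofReal_natCast, ← Complex.ofReal_inv,
      ← Complex.ofReal_inv, ← Complex.ofReal_sub, Complex.norm_real, Real.norm_eq_abs,
      abs_sub_comm, abs_of_nonneg (sub_nonneg.2 hle)]
    ring
  calc ‖∑ k ∈ Ico a b, z k / k‖ = ‖∑ k ∈ Ico a b, (k : ℂ)⁻¹ * z k‖ := by
        simp only [div_eq_inv_mul]
    _ ≤ P * (‖(b : ℂ)⁻¹‖ + ∑ k ∈ Ico a b, ‖((k + 1 : ℕ) : ℂ)⁻¹ - (k : ℂ)⁻¹‖) :=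
        norm_sum_Ico_mul_le _ z hab hP
    _ = P / a := by
        rw [sum_congr rfl hvar, sum_Ico_sub (fun k : ℕ => -(k : ℝ)⁻¹) hab, norm_inv,
          Complex.norm_natCast]
        ring

/-- A crude form of the Kusmin–Landau inequality. -/
lemma norm_sum_ee_le_of_monotone_diff (f : ℕ → ℝ) {δ : ℝ} (hδ : 0 < δ) {a b : ℕ} (hab : a ≤ b)
    (hf : ∀ k, a ≤ k → k ≤ b → f (k + 1) - f k ∈ Set.Icc δ (1 - δ))
    (hmono : ∀ k, a ≤ k → k < b → f (k + 1) - f k ≤ f (k + 2) - f (k + 1)) :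
    ‖∑ k ∈ Ico a b, ee (f k)‖ ≤ 2 / δ ^ 2 := by
  set g : ℕ → ℝ := fun k => f (k + 1) - f k with hg
  have hdist : ∀ k, a ≤ k → k ≤ b → δ ≤ distInt (g k) := fun k hak hkb =>
    le_distInt_of_mem_Icc (hf k hak hkb)
  have hnorm : ∀ k, a ≤ k → k ≤ b → 4 * δ ≤ ‖ee (g k) - 1‖ := fun k hak hkb =>
    le_trans (by linarith [hdist k hak hkb]) (four_mul_distInt_le_norm_ee_sub_one _)
  have htele : ∀ k ∈ Ico a b,
      ee (f k) = (ee (g k) - 1)⁻¹ * (ee (f (k + 1)) - ee (f k)) := by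
    intro k hk
    rw [mem_Ico] at hk
    have hne : ee (g k) - 1 ≠ 0 := norm_pos_iff.1 (by linarith [hnorm k hk.1 hk.2.le])
    have hstep : ee (f (k + 1)) - ee (f k) = (ee (g k) - 1) * ee (f k) := by
      rw [sub_mul, ← ee_add, hg, sub_add_cancel, one_mul]
    rw [hstep, inv_mul_cancel_left₀ hne]
  have hpartial : ∀ j, a ≤ j → j ≤ b → ‖∑ k ∈ Ico a j, (ee (f (k + 1)) - ee (f k))‖ ≤ 2 := by
    intro j hj _
    rw [sum_Ico_sub (fun k => ee (f k)) hj]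
    exact (norm_sub_le _ _).trans (by rw [norm_ee, norm_ee]; norm_num)
  have hlast : ‖(ee (g b) - 1)⁻¹‖ ≤ (4 * δ)⁻¹ := by
    rw [norm_inv]
    exact inv_anti₀ (by positivity) (hnorm b hab le_rfl)
  have hvar : ∑ k ∈ Ico a b, ‖(ee (g (k + 1)) - 1)⁻¹ - (ee (g k) - 1)⁻¹‖ ≤ 1 / (2 * δ ^ 2) := by
    calc _ ≤ ∑ k ∈ Ico a b, (g (k + 1) - g k) / (2 * δ ^ 2) := by
          refine sum_le_sum fun k hk => ?_
          rw [mem_Ico] at hk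
          refine (norm_inv_ee_sub_one_sub_le hδ (hdist _ (by lia) (by lia))
            (hdist k hk.1 hk.2.le)).trans_eq ?_
          rw [abs_of_nonneg (sub_nonneg.2 (hmono k hk.1 hk.2))]
      _ = (g b - g a) / (2 * δ ^ 2) := by rw [← sum_div, sum_Ico_sub g hab]
      _ ≤ 1 / (2 * δ ^ 2) := by
          gcongr
          linarith [(hf a le_rfl hab).1, (hf b hab le_rfl).2]
  rw [sum_congr rfl htele]
  refine (norm_sum_Ico_mul_le _ _ hab hpartial).trans ?_
  have hδ2 : δ ≤ 1 / 2 := (hdist a le_rfl hab).trans (distInt_le_half _)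
  have hinv : (4 * δ)⁻¹ ≤ 1 / (2 * δ ^ 2) := by
    rw [inv_eq_one_div]
    exact one_div_le_one_div_of_le (by positivity) (by nlinarith)
  calc _ ≤ 2 * (1 / (2 * δ ^ 2) + 1 / (2 * δ ^ 2)) := by gcongr; exact hlast.trans hinv
    _ = 2 / δ ^ 2 := by ring

lemma norm_sum_ee_mul_natCast_mul_distInt_le (c : ℝ) {a b : ℕ} (hab : a ≤ b) :
    ‖∑ k ∈ Ico a b, ee (c * k)‖ * distInt c ≤ 1 / 2 := by
  have hgeom : (∑ k ∈ Ico a b, ee (c * k)) * (ee c - 1) = ee c ^ b - ee c ^ a := by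
    simp_rw [ee_mul_natCast]
    exact geom_sum_Ico_mul (ee c) hab
  have htwo : ‖∑ k ∈ Ico a b, ee (c * k)‖ * ‖ee c - 1‖ ≤ 2 := by
    rw [← norm_mul, hgeom]
    refine (norm_sub_le _ _).trans ?_
    rw [norm_pow, norm_pow, norm_ee]
    norm_num
  nlinarith [four_mul_distInt_le_norm_ee_sub_one c, norm_nonneg (∑ k ∈ Ico a b, ee (c * k))]

end SummationByParts

section WeylDifferencing

lemma norm_sq_sum_range_eq (z : ℕ → ℂ) (N : ℕ) :
    ‖∑ k ∈ range N, z k‖ ^ 2 = ∑ k ∈ range N, ‖z k‖ ^ 2 +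
      2 * (∑ h ∈ Icc 1 N, ∑ k ∈ range (N - h), z (k + h) * starRingEnd ℂ (z k)).re := by
  induction N with
  | zero => simp
  | succ N ih =>
    have hlast : ∑ h ∈ Icc 1 N, z N * starRingEnd ℂ (z (N - h))
        = z N * starRingEnd ℂ (∑ k ∈ range N, z k) := by
      rw [map_sum, mul_sum]
      refine sum_nbij' (fun h => N - h) (fun k => N - k) ?_ ?_ ?_ ?_ ?_ <;>
        simp only [mem_Icc, mem_range] <;> intros <;> lia
    have hcorr : ∑ h ∈ Icc 1 (N + 1), ∑ k ∈ range (N + 1 - h), z (k + h) * starRingEnd ℂ (z k)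
        = ∑ h ∈ Icc 1 N, ∑ k ∈ range (N - h), z (k + h) * starRingEnd ℂ (z k)
          + z N * starRingEnd ℂ (∑ k ∈ range N, z k) := by
      rw [sum_Icc_succ_top (by lia), Nat.sub_self, range_zero, sum_empty, add_zero, ← hlast,
        ← sum_add_distrib]
      refine sum_congr rfl fun h hh => ?_
      rw [mem_Icc] at hh
      rw [Nat.sub_add_comm hh.2, sum_range_succ, Nat.sub_add_cancel hh.2]
    rw [hcorr, sum_range_succ, sum_range_succ, add_comm, ← Complex.normSq_eq_norm_sq,
      Complex.normSq_add, Complex.normSq_eq_norm_sq, Complex.normSq_eq_norm_sq, ih, Complex.add_re]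
    ring

lemma norm_sq_sum_range_le (z : ℕ → ℂ) (N : ℕ) :
    ‖∑ k ∈ range N, z k‖ ^ 2 ≤ ∑ k ∈ range N, ‖z k‖ ^ 2 +
      2 * ∑ h ∈ Icc 1 N, ‖∑ k ∈ range (N - h), z (k + h) * starRingEnd ℂ (z k)‖ := by
  rw [norm_sq_sum_range_eq z N]
  gcongr
  exact (Complex.re_le_norm _).trans (norm_sum_le _ _)

lemma sum_sum_mul_le_card_divisors_mul_sum {g : ℕ → ℝ} (hg : ∀ m, 0 ≤ g m) {N X D : ℕ}
    (hD : ∀ m, 1 ≤ m → m ≤ N * X → #m.divisors ≤ D) :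
    ∑ h ∈ Icc 1 N, ∑ m ∈ Icc 1 X, g (h * m) ≤ D * ∑ r ∈ Icc 1 (N * X), g r := by
  have hmaps : ∀ x ∈ Icc 1 N ×ˢ Icc 1 X, x.1 * x.2 ∈ Icc 1 (N * X) := by
    intro x hx
    simp only [mem_product, mem_Icc] at hx ⊢
    exact ⟨Nat.mul_pos hx.1.1 hx.2.1, Nat.mul_le_mul hx.1.2 hx.2.2⟩
  rw [← sum_product' (Icc 1 N) (Icc 1 X) (fun h m => g (h * m)),
    ← sum_fiberwise_of_maps_to hmaps, mul_sum]
  refine sum_le_sum fun r hr => ?_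
  rw [mem_Icc] at hr
  have hfiber : #{x ∈ Icc 1 N ×ˢ Icc 1 X | x.1 * x.2 = r} ≤ #r.divisors := by
    rw [← card_map ⟨fun d => (d, r / d), fun _ _ => congrArg Prod.fst⟩,
      Nat.map_div_right_divisors]
    refine card_le_card fun x hx => ?_
    rw [Nat.mem_divisorsAntidiagonal]
    exact ⟨(mem_filter.1 hx).2, by lia⟩
  rw [sum_congr rfl fun x hx => congrArg g (mem_filter.1 hx).2, sum_const, nsmul_eq_mul]
  exact mul_le_mul_of_nonneg_right (mod_cast hfiber.trans (hD r hr.1 hr.2)) (hg r)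

open Polynomial in
lemma natDegree_taylor_sub_le {R : Type*} [CommRing R] {p : R[X]} {d : ℕ}
    (hp : p.natDegree ≤ d + 1) (h : R) : (taylor h p - p).natDegree ≤ d := by
  rw [natDegree_le_iff_coeff_eq_zero]
  intro N hN
  rw [coeff_sub, taylor_coeff]
  rcases Nat.lt_or_ge (d + 1) N with hlt | hle
  · rw [coeff_eq_zero_of_natDegree_lt (by lia), sub_zero,
      hasseDeriv_eq_zero_of_lt_natDegree _ _ (by lia), eval_zero]
  · obtain rfl : N = d + 1 := by lia
    have hconst : (hasseDeriv (d + 1) p).natDegree ≤ 0 :=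
      (natDegree_hasseDeriv_le p (d + 1)).trans (by lia)
    rw [eq_C_of_natDegree_le_zero hconst, eval_C, hasseDeriv_coeff]
    simp

open Polynomial in
lemma coeff_taylor_sub {R : Type*} [CommRing R] {p : R[X]} {d : ℕ}
    (hp : p.natDegree ≤ d + 1) (h : R) :
    (taylor h p - p).coeff d = (d + 1) * h * p.coeff (d + 1) := by
  have hlin : (hasseDeriv d p).natDegree ≤ 1 := (natDegree_hasseDeriv_le p d).trans (by lia)
  rw [coeff_sub, taylor_coeff, eval_eq_sum_range' (n := 2) (by lia), sum_range_succ,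
    sum_range_one, hasseDeriv_coeff, hasseDeriv_coeff, zero_add, Nat.choose_self, add_comm 1 d,
    Nat.choose_succ_self_right]
  push_cast
  ring

/-- Up to a constant, the bound `min (N, 1/‖x‖)` for a geometric sum of length `N` and ratio
`e(x)`, where `‖x‖` is the distance from `x` to the nearest integer. -/
noncomputable def geomBound (N x : ℝ) : ℝ := (1 / N + distInt x)⁻¹

lemma geomBound_nonneg {N : ℝ} (hN : 0 ≤ N) (x : ℝ) : 0 ≤ geomBound N x := by
  have := distInt_nonneg x
  unfold geomBound
  positivity

/-- The quantity `1/N + D^d N^{-(d+1)} ∑_{m ≤ N^d} min (N, 1/‖mx‖)` which, when `D` bounds the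
number of divisors of the integers up to `N^d`, dominates the `2^d`-th power of the normalised
Weyl sum of a polynomial of degree `d + 1` with leading coefficient `x/(d+1)!`. -/
noncomputable def weylMajorant (d N D : ℕ) (x : ℝ) : ℝ :=
  1 / N + (D : ℝ) ^ d / (N : ℝ) ^ (d + 1) * ∑ m ∈ Icc 1 (N ^ d), geomBound N (m * x)

lemma one_div_le_weylMajorant (d N D : ℕ) (x : ℝ) : 1 / (N : ℝ) ≤ weylMajorant d N D x :=
  le_add_of_nonneg_right
    (mul_nonneg (by positivity) (sum_nonneg fun _ _ => geomBound_nonneg N.cast_nonneg _))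

lemma sum_weylMajorant_mul_div_le {d N D : ℕ} (hN : 1 ≤ N)
    (hD : ∀ m, 1 ≤ m → m ≤ N ^ (d + 1) → #m.divisors ≤ D) (x : ℝ) :
    (∑ h ∈ Icc 1 N, weylMajorant d N D (h * x)) / N ≤ weylMajorant (d + 1) N D x := by
  have hN0 : (0 : ℝ) < N := by exact_mod_cast hN
  have hcollect : ∑ h ∈ Icc 1 N, ∑ m ∈ Icc 1 (N ^ d), geomBound N (m * (h * x))
      ≤ D * ∑ r ∈ Icc 1 (N ^ (d + 1)), geomBound N (r * x) := by
    rw [pow_succ'] at hD ⊢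
    refine (sum_le_sum fun h _ => (sum_congr rfl fun m _ => ?_).le).trans
      (sum_sum_mul_le_card_divisors_mul_sum (fun r => geomBound_nonneg hN0.le (r * x)) hD)
    rw [← mul_assoc, mul_comm (m : ℝ), Nat.cast_mul]
  simp only [weylMajorant]
  rw [sum_add_distrib, ← mul_sum, sum_const, Nat.card_Icc, Nat.add_sub_cancel, nsmul_eq_mul,
    mul_one_div_cancel hN0.ne', add_div]
  gcongr 1 / _ + ?_
  calc (D : ℝ) ^ d / (N : ℝ) ^ (d + 1)
        * (∑ h ∈ Icc 1 N, ∑ m ∈ Icc 1 (N ^ d), geomBound N (m * (h * x))) / N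
      ≤ (D : ℝ) ^ d / (N : ℝ) ^ (d + 1)
        * (D * ∑ r ∈ Icc 1 (N ^ (d + 1)), geomBound N (r * x)) / N := by gcongr
    _ = (D : ℝ) ^ (d + 1) / (N : ℝ) ^ (d + 1 + 1)
        * ∑ r ∈ Icc 1 (N ^ (d + 1)), geomBound N (r * x) := by
        rw [pow_succ (N : ℝ) (d + 1)]
        ring

open Polynomial in
lemma norm_sum_ee_eval_div_le_of_natDegree_le_one {p : ℝ[X]} (hp : p.natDegree ≤ 1) {N K : ℕ}
    (hN : 1 ≤ N) (hK : K ≤ N) (D : ℕ) :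
    ‖∑ k ∈ range K, ee (p.eval (k : ℝ))‖ / N ≤ 3 / 2 * weylMajorant 0 N D (p.coeff 1) := by
  have hN0 : (0 : ℝ) < N := by exact_mod_cast hN
  have heval : ∀ k : ℕ, ee (p.eval (k : ℝ)) = ee (p.coeff 1 * k) * ee (p.coeff 0) := by
    intro k
    rw [← ee_add, eval_eq_sum_range' (n := 2) (by lia), sum_range_succ, sum_range_one, pow_zero,
      mul_one, pow_one, add_comm]
  simp_rw [heval]
  rw [← sum_mul, norm_mul, norm_ee, mul_one]
  set s := ‖∑ k ∈ range K, ee (p.coeff 1 * k)‖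
  have hgeom : s * distInt (p.coeff 1) ≤ 1 / 2 := by
    have := norm_sum_ee_mul_natCast_mul_distInt_le (p.coeff 1) (Nat.zero_le K)
    rwa [Nat.Ico_zero_eq_range] at this
  have htriv : s ≤ N := by
    refine (norm_sum_le _ _).trans ?_
    simpa [norm_ee] using hK
  have hs : s ≤ 3 / 2 * geomBound N (p.coeff 1) := by
    have hdist := distInt_nonneg (p.coeff 1)
    rw [geomBound, ← div_eq_mul_inv, le_div_iff₀ (by positivity), mul_add, mul_one_div]
    linarith [(div_le_one hN0).2 htriv]
  have hmaj : weylMajorant 0 N D (p.coeff 1) = 1 / N + geomBound N (p.coeff 1) / N := by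
    simp [weylMajorant, div_eq_inv_mul]
  rw [hmaj, div_le_iff₀ hN0, mul_assoc, add_mul, one_div_mul_cancel hN0.ne',
    div_mul_cancel₀ _ hN0.ne']
  linarith

open Polynomial in
lemma sq_norm_sum_ee_eval_div_le (p : ℝ[X]) {N K : ℕ} (hN : 1 ≤ N) (hK : K ≤ N) :
    (‖∑ k ∈ range K, ee (p.eval (k : ℝ))‖ / N) ^ 2 ≤ 1 / N + 2 * ((∑ h ∈ Icc 1 N,
      ‖∑ k ∈ range (K - h), ee ((taylor (h : ℝ) p - p).eval (k : ℝ))‖ / N) / N) := by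
  have : (0 : ℝ) < N := by exact_mod_cast hN
  set A : ℕ → ℝ := fun h => ‖∑ k ∈ range (K - h), ee ((taylor (h : ℝ) p - p).eval (k : ℝ))‖
  have hcorr : ∀ h : ℕ, ‖∑ k ∈ range (K - h), ee (p.eval ((k + h : ℕ) : ℝ)) *
      starRingEnd ℂ (ee (p.eval (k : ℝ)))‖ = A h := by
    intro h
    simp only [A, eval_sub, taylor_eval, Nat.cast_add, ee_sub]
  have hdiff : ‖∑ k ∈ range K, ee (p.eval (k : ℝ))‖ ^ 2 ≤ N + 2 * ∑ h ∈ Icc 1 N, A h := by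
    refine (norm_sq_sum_range_le _ K).trans ?_
    simp_rw [hcorr, norm_ee, one_pow, sum_const, card_range, nsmul_one]
    gcongr
  rw [div_pow, div_le_iff₀ (by positivity), ← sum_div]
  refine hdiff.trans_eq ?_
  change _ = (1 / N + 2 * ((∑ h ∈ Icc 1 N, A h) / N / N)) * (N : ℝ) ^ 2
  field_simp

lemma add_two_mul_pow_le {x a : ℝ} (hx0 : 0 ≤ x) (hx1 : x ≤ 1) (ha : 0 ≤ a) {r : ℕ}
    (hr : r ≠ 0) : (x + 2 * a) ^ r ≤ 2 ^ r * (x + 2 ^ r * a ^ r) :=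
  calc (x + 2 * a) ^ r ≤ 2 ^ (r - 1) * (x ^ r + (2 * a) ^ r) := add_pow_le hx0 (by positivity) r
    _ ≤ 2 ^ r * (x + 2 ^ r * a ^ r) := by
        rw [mul_pow]
        gcongr
        · norm_num
        · exact Nat.sub_le _ _
        · exact pow_le_of_le_one hx0 hx1 hr

lemma sum_Icc_div_pow_le {A : ℕ → ℝ} (hA : ∀ h, 0 ≤ A h) {N : ℕ} (hN : 1 ≤ N) {r : ℕ}
    (hr : r ≠ 0) : ((∑ h ∈ Icc 1 N, A h) / N) ^ r ≤ (∑ h ∈ Icc 1 N, A h ^ r) / N := by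
  obtain ⟨r, rfl⟩ := Nat.exists_eq_succ_of_ne_zero hr
  have hjensen := pow_sum_div_card_le_sum_pow (s := Icc 1 N) (fun h _ => hA h) r
  rw [Nat.card_Icc, Nat.add_sub_cancel] at hjensen
  rw [div_pow, pow_succ (N : ℝ), ← div_div]
  gcongr

lemma sum_Icc_div_pow_le_mul_weylMajorant {d N D M : ℕ} {A : ℕ → ℝ} {C x : ℝ} (hC : 0 ≤ C)
    (hN : 1 ≤ N) (hD : ∀ m, 1 ≤ m → m ≤ N ^ (d + 1) → #m.divisors ≤ D) (hA0 : ∀ h, 0 ≤ A h)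
    (hM : M ≠ 0) (hA : ∀ h : ℕ, A h ^ M ≤ C * weylMajorant d N D (h * x)) :
    ((∑ h ∈ Icc 1 N, A h) / N) ^ M ≤ C * weylMajorant (d + 1) N D x :=
  calc _ ≤ (∑ h ∈ Icc 1 N, A h ^ M) / N := sum_Icc_div_pow_le hA0 hN (by lia)
    _ ≤ (∑ h ∈ Icc 1 N, C * weylMajorant d N D (h * x)) / N := by
        gcongr with h
        exact hA h
    _ ≤ C * weylMajorant (d + 1) N D x := by
        rw [← mul_sum, mul_div_assoc]
        gcongr
        exact sum_weylMajorant_mul_div_le hN hD x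

open Polynomial in
/-- **Weyl's inequality**, before the divisor sum is evaluated. -/
lemma norm_sum_ee_eval_div_pow_le (d : ℕ) : ∃ C > (0 : ℝ), ∀ N D : ℕ, 1 ≤ N →
    (∀ m, 1 ≤ m → m ≤ N ^ d → #m.divisors ≤ D) →
    ∀ p : ℝ[X], p.natDegree ≤ d + 1 → ∀ K ≤ N,
    (‖∑ k ∈ range K, ee (p.eval (k : ℝ))‖ / N) ^ (2 ^ d) ≤
      C * weylMajorant d N D ((d + 1).factorial * p.coeff (d + 1)) := by
  induction d with
  | zero =>
    refine ⟨3 / 2, by norm_num, fun N D hN _ p hp K hK => ?_⟩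
    simpa using norm_sum_ee_eval_div_le_of_natDegree_le_one hp hN hK D
  | succ d ih =>
    obtain ⟨C, hC, ih⟩ := ih
    refine ⟨2 ^ (2 ^ d) * (1 + 2 ^ (2 ^ d) * C), by positivity, fun N D hN hdiv p hp K hK => ?_⟩
    set x : ℝ := (d + 1 + 1).factorial * p.coeff (d + 1 + 1) with hx
    set A : ℕ → ℝ := fun h => ‖∑ k ∈ range (K - h),
      ee ((taylor (h : ℝ) p - p).eval (k : ℝ))‖ / N
    have hA0 : ∀ h, 0 ≤ A h := fun h => by positivity
    have hind : ∀ h, A h ^ (2 ^ d) ≤ C * weylMajorant d N D (h * x) := by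
      intro h
      have hdiv' : ∀ m, 1 ≤ m → m ≤ N ^ d → #m.divisors ≤ D := fun m hm hmN =>
        hdiv m hm (hmN.trans (Nat.pow_le_pow_right hN (Nat.le_succ d)))
      refine (ih N D hN hdiv' _ (natDegree_taylor_sub_le hp (h : ℝ)) (K - h) (by lia)).trans_eq ?_
      rw [coeff_taylor_sub hp, hx, Nat.factorial_succ (d + 1)]
      push_cast
      ring_nf
    have hmean : ((∑ h ∈ Icc 1 N, A h) / N) ^ (2 ^ d) ≤ C * weylMajorant (d + 1) N D x :=
      sum_Icc_div_pow_le_mul_weylMajorant hC.le hN hdiv hA0 (by positivity) hind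
    calc (‖∑ k ∈ range K, ee (p.eval (k : ℝ))‖ / N) ^ 2 ^ (d + 1)
        = ((‖∑ k ∈ range K, ee (p.eval (k : ℝ))‖ / N) ^ 2) ^ 2 ^ d := by
          rw [← pow_mul, ← pow_succ']
      _ ≤ (1 / N + 2 * ((∑ h ∈ Icc 1 N, A h) / N)) ^ 2 ^ d := by
          gcongr
          exact sq_norm_sum_ee_eval_div_le p hN hK
      _ ≤ 2 ^ 2 ^ d * (1 / N + 2 ^ 2 ^ d * ((∑ h ∈ Icc 1 N, A h) / N) ^ 2 ^ d) :=
          add_two_mul_pow_le (by positivity)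
            (div_le_one_of_le₀ (by exact_mod_cast hN) (by positivity))
            (div_nonneg (sum_nonneg fun h _ => hA0 h) (by positivity)) (by positivity)
      _ ≤ 2 ^ 2 ^ d * (weylMajorant (d + 1) N D x
            + 2 ^ 2 ^ d * (C * weylMajorant (d + 1) N D x)) := by
          gcongr
          exact one_div_le_weylMajorant _ _ _ _
      _ = 2 ^ 2 ^ d * (1 + 2 ^ 2 ^ d * C) * weylMajorant (d + 1) N D x := by ring

end WeylDifferencing

section DivisorBound

lemma natCast_add_one_le_pow_rpow {x ε : ℝ} (hx : 0 ≤ x) (h : 2 ≤ x ^ ε) (a : ℕ) :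
    (a : ℝ) + 1 ≤ (x ^ a) ^ ε := by
  have htwo : a + 1 ≤ 2 ^ a := Nat.lt_two_pow_self
  calc (a : ℝ) + 1 ≤ 2 ^ a := by exact_mod_cast htwo
    _ ≤ (x ^ ε) ^ a := by gcongr
    _ = (x ^ a) ^ ε := Real.rpow_pow_comm hx ε a

lemma natCast_add_one_le_mul_pow_rpow {x ε : ℝ} (hx : 2 ≤ x) (hε : 0 < ε) (a : ℕ) :
    (a : ℝ) + 1 ≤ (1 + 1 / (ε * Real.log 2)) * (x ^ a) ^ ε := by
  have : 0 < Real.log 2 := Real.log_pos one_lt_two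
  have hexp : 1 + a * (ε * Real.log 2) ≤ (x ^ a) ^ ε :=
    calc 1 + a * (ε * Real.log 2) ≤ Real.exp (a * (Real.log 2 * ε)) := by
          linarith [Real.add_one_le_exp (a * (Real.log 2 * ε))]
      _ = (2 ^ ε) ^ a := by rw [Real.rpow_def_of_pos two_pos, ← Real.exp_nat_mul]
      _ ≤ (x ^ ε) ^ a := by gcongr
      _ = (x ^ a) ^ ε := Real.rpow_pow_comm (by linarith) ε a
  calc (a : ℝ) + 1 ≤ a + 1 + (1 / (ε * Real.log 2) + a * (ε * Real.log 2)) :=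
        le_add_of_nonneg_right (by positivity)
    _ = (1 + 1 / (ε * Real.log 2)) * (1 + a * (ε * Real.log 2)) := by field_simp; ring
    _ ≤ _ := by gcongr

lemma card_divisors_le_mul_rpow {ε : ℝ} (hε : 0 < ε) : ∃ C ≥ (1 : ℝ), ∀ m : ℕ, 1 ≤ m →
    (#m.divisors : ℝ) ≤ C * (m : ℝ) ^ ε := by
  set B : ℝ := 1 + 1 / (ε * Real.log 2)
  have hB : 1 ≤ B := le_add_of_nonneg_right (by have := Real.log_pos one_lt_two; positivity)
  set P : ℕ := ⌈(2 : ℝ) ^ (1 / ε)⌉₊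
  refine ⟨B ^ P, one_le_pow₀ hB, fun m hm => ?_⟩
  have hm0 : m ≠ 0 := by lia
  have hlocal : ∀ p ∈ m.primeFactors, ((m.factorization p : ℝ) + 1)
      ≤ (if p < P then B else 1) * ((p : ℝ) ^ m.factorization p) ^ ε := by
    intro p hp
    split_ifs with hpP
    · exact natCast_add_one_le_mul_pow_rpow
        (by exact_mod_cast (Nat.prime_of_mem_primeFactors hp).two_le) hε _
    · have hp2 : (2 : ℝ) ^ (1 / ε) ≤ p := (Nat.le_ceil _).trans (by exact_mod_cast not_lt.1 hpP)
      rw [one_mul]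
      refine natCast_add_one_le_pow_rpow p.cast_nonneg ?_ _
      rwa [one_div, Real.rpow_inv_le_iff_of_pos zero_le_two p.cast_nonneg hε] at hp2
  have hprod : ∏ p ∈ m.primeFactors, ((p : ℝ) ^ m.factorization p) ^ ε = (m : ℝ) ^ ε := by
    rw [Real.finsetProd_rpow _ _ fun p _ => by positivity]
    exact_mod_cast congrArg (fun k : ℕ => (k : ℝ) ^ ε)
      (Nat.prod_primeFactors_pow_factorization hm0).symm
  have hsmall : #{p ∈ m.primeFactors | p < P} ≤ P :=
    (card_le_card fun p hp => mem_range.2 (mem_filter.1 hp).2).trans_eq (card_range P)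
  calc (#m.divisors : ℝ) = ∏ p ∈ m.primeFactors, ((m.factorization p : ℝ) + 1) := by
        rw [Nat.card_divisors hm0]
        push_cast
        rfl
    _ ≤ ∏ p ∈ m.primeFactors, (if p < P then B else 1) * ((p : ℝ) ^ m.factorization p) ^ ε :=
        prod_le_prod (fun p _ => by positivity) hlocal
    _ = B ^ #{p ∈ m.primeFactors | p < P} * (m : ℝ) ^ ε := by
        rw [prod_mul_distrib, hprod, prod_ite, prod_const, prod_const_one, mul_one]
    _ ≤ B ^ P * (m : ℝ) ^ ε := by gcongr

end DivisorBound

section WellSpacedPoints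

lemma sum_range_emod_toNat {M : Type*} [AddCommMonoid M] (f : ℕ → M) {u : ℤ} {q : ℕ} (hq : 1 ≤ q)
    (huq : Int.gcd u q = 1) (c : ℤ) :
    ∑ j ∈ range q, f ((u * j + c) % q).toNat = ∑ r ∈ range q, f r := by
  have hmaps : Set.MapsTo (fun j : ℕ => ((u * j + c) % q).toNat) (range q) (range q) := by
    intro j _
    have := Int.emod_lt_of_pos (u * j + c) (by lia : (0 : ℤ) < q)
    simp only [coe_range, Set.mem_Iio]
    lia
  have hinj : Set.InjOn (fun j : ℕ => ((u * j + c) % q).toNat) (range q) := by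
    intro a ha b hb hab
    simp only [coe_range, Set.mem_Iio] at ha hb
    have hemod : (u * a + c) % (q : ℤ) = (u * b + c) % q := by
      have ha' := Int.emod_nonneg (u * a + c) (by lia : (q : ℤ) ≠ 0)
      have hb' := Int.emod_nonneg (u * b + c) (by lia : (q : ℤ) ≠ 0)
      simp only at hab
      lia
    have hdvd : (q : ℤ) ∣ u * (a - b) := by
      have := Int.dvd_of_emod_eq_zero (Int.emod_eq_emod_iff_emod_sub_eq_zero.1 hemod)
      rwa [add_sub_add_right_eq_sub, ← mul_sub] at this
    have hcop : IsCoprime (q : ℤ) u := by rwa [Int.isCoprime_iff_gcd_eq_one, Int.gcd_comm]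
    have := Int.eq_zero_of_abs_lt_dvd (hcop.dvd_of_dvd_mul_left hdvd) (by rw [abs_lt]; lia)
    lia
  exact sum_nbij _ hmaps hinj (surjOn_of_injOn_of_card_le _ hmaps hinj le_rfl) fun _ _ => rfl

/-- A majorant for `geomBound N y` when `y` is at distance at least `(r - 2)/q` from the
integers. -/
noncomputable def spacedBound (N : ℝ) (q r : ℕ) : ℝ :=
  (if r < 3 then N else 0) + 4 * q / (r + 1)

lemma spacedBound_nonneg {N : ℝ} (hN : 0 ≤ N) (q r : ℕ) : 0 ≤ spacedBound N q r := by
  unfold spacedBound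
  split_ifs <;> positivity

lemma geomBound_le_spacedBound {N y : ℝ} (hN : 0 < N) {q r : ℕ} (hq : 1 ≤ q)
    (h : ((r : ℝ) - 2) / q ≤ distInt y) : geomBound N y ≤ spacedBound N q r := by
  have hdist := distInt_nonneg y
  have : (0 : ℝ) < q := by exact_mod_cast hq
  unfold geomBound spacedBound
  split_ifs with hr
  · calc (1 / N + distInt y)⁻¹ ≤ (1 / N)⁻¹ := by
          gcongr
          exact le_add_of_nonneg_right hdist
      _ = N := by rw [one_div, inv_inv]
      _ ≤ N + 4 * q / (r + 1) := le_add_of_nonneg_right (by positivity)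
  · have hr3 : (3 : ℝ) ≤ r := by exact_mod_cast not_lt.1 hr
    have hr2 : (0 : ℝ) < r - 2 := by linarith
    calc (1 / N + distInt y)⁻¹ ≤ ((r - 2) / q : ℝ)⁻¹ := by
          gcongr
          exact h.trans (le_add_of_nonneg_left (by positivity))
      _ = q / (r - 2) := inv_div _ _
      _ ≤ 4 * q / (r + 1) := by
          rw [div_le_div_iff₀ hr2 (by positivity)]
          nlinarith
      _ = 0 + 4 * q / (r + 1) := (zero_add _).symm

lemma sum_range_spacedBound_le {N : ℝ} (hN : 0 ≤ N) (q : ℕ) :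
    ∑ r ∈ range q, spacedBound N q r ≤ 3 * N + 4 * q * (1 + Real.log q) := by
  have hharm : ∑ r ∈ range q, ((r : ℝ) + 1)⁻¹ ≤ 1 + Real.log q := by
    have := harmonic_le_one_add_log q
    rw [harmonic] at this
    push_cast at this
    exact this
  have hcard : #{r ∈ range q | r < 3} ≤ 3 :=
    (card_le_card fun r hr => mem_range.2 (mem_filter.1 hr).2).trans_eq (card_range 3)
  simp only [spacedBound, div_eq_mul_inv (4 * (q : ℝ))]
  rw [sum_add_distrib, ← mul_sum, ← sum_filter, sum_const, nsmul_eq_mul]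
  gcongr
  exact_mod_cast hcard

lemma min_div_le_distInt_div {r q : ℕ} (hr : r < q) :
    ((min r (q - 1 - r) : ℕ) : ℝ) / q ≤ distInt (r / q : ℝ) := by
  have hq0 : (0 : ℝ) < q := by exact_mod_cast (by lia : 0 < q)
  have hmin_le : ((min r (q - 1 - r) : ℕ) : ℝ) + r ≤ q := by exact_mod_cast (by lia)
  refine le_distInt_of_mem_Icc ⟨by gcongr; exact min_le_left _ _, ?_⟩
  rw [le_sub_iff_add_le, ← add_div, div_le_one hq0]
  linarith

lemma min_sub_two_div_le_distInt {x t : ℝ} {u : ℤ} {q j : ℕ} (hj : j < q)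
    (ht : |t - u / q| ≤ 1 / (q : ℝ) ^ 2) {r : ℕ} (hr : (r : ℤ) = (u * j + round (q * x)) % q) :
    (((min r (q - 1 - r) : ℕ) : ℝ) - 2) / q ≤ distInt (x + j * t) := by
  have hq0 : (0 : ℝ) < q := by exact_mod_cast (by lia : 0 < q)
  set c := round (q * x)
  have hrq : r < q := by
    have := Int.emod_lt_of_pos (u * j + c) (by lia : (0 : ℤ) < q)
    lia
  have hmin := min_div_le_distInt_div hrq
  have hmod : (r / q : ℝ) = (u * j + c) / q + ((-((u * j + c) / q) : ℤ) : ℝ) := by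
    have h : (r : ℝ) + q * (((u * j + c) / q : ℤ) : ℝ) = u * j + c := by
      exact_mod_cast hr ▸ Int.emod_add_mul_ediv (u * j + c) q
    rw [← h]
    push_cast
    field_simp
    ring
  have hshift : |(u * j + c : ℝ) / q - (x + j * t)| ≤ 2 / q := by
    have hround : |q * x - c| / q ≤ 1 / q := by
      gcongr
      linarith [abs_sub_round (q * x)]
    have hdrift : j * |t - u / q| ≤ 1 / q := by
      calc (j : ℝ) * |t - u / q| ≤ q * (1 / (q : ℝ) ^ 2) := by gcongr
        _ = 1 / q := by field_simp
    calc |(u * j + c : ℝ) / q - (x + j * t)| = |(q * x - c) / q + j * (t - u / q)| := by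
          rw [← abs_neg]
          congr 1
          field_simp
          ring
      _ ≤ |q * x - c| / q + j * |t - u / q| := by
          refine (abs_add_le _ _).trans_eq ?_
          rw [abs_div, abs_mul, Nat.abs_cast, Nat.abs_cast]
      _ ≤ 1 / q + 1 / q := add_le_add hround hdrift
      _ = 2 / q := by ring
  rw [hmod, distInt_add_intCast] at hmin
  rw [sub_div]
  linarith [distInt_le_distInt_add_abs_sub ((u * j + c : ℝ) / q) (x + j * t)]

lemma sum_range_geomBound_le {N : ℝ} (hN : 0 < N) {u : ℤ} {q : ℕ} (hq : 1 ≤ q)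
    (huq : Int.gcd u q = 1) {t : ℝ} (ht : |t - u / q| ≤ 1 / (q : ℝ) ^ 2) (x : ℝ) :
    ∑ j ∈ range q, geomBound N (x + j * t) ≤ 6 * N + 8 * q * (1 + Real.log q) := by
  have hpoint : ∀ j ∈ range q, geomBound N (x + j * t) ≤
      (fun r => spacedBound N q r + spacedBound N q (q - 1 - r))
        ((u * j + round (q * x)) % q).toNat := by
    intro j hj
    have hr := Int.toNat_of_nonneg (Int.emod_nonneg (u * j + round (q * x)) (by lia : (q : ℤ) ≠ 0))
    refine (geomBound_le_spacedBound hN hq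
      (min_sub_two_div_le_distInt (mem_range.1 hj) ht hr)).trans ?_
    rcases min_choice ((u * j + round (q * x)) % q).toNat
      (q - 1 - ((u * j + round (q * x)) % q).toNat) with h | h <;> rw [h]
    · exact le_add_of_nonneg_right (spacedBound_nonneg hN.le _ _)
    · exact le_add_of_nonneg_left (spacedBound_nonneg hN.le _ _)
  refine (sum_le_sum hpoint).trans ?_
  rw [sum_range_emod_toNat (fun r => spacedBound N q r + spacedBound N q (q - 1 - r)) hq huq,
    sum_add_distrib, sum_range_reflect (spacedBound N q) q]
  linarith [sum_range_spacedBound_le hN.le q]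

lemma sum_range_mul_eq_sum_sum {M : Type*} [AddCommMonoid M] (f : ℕ → M) (q B : ℕ) :
    ∑ m ∈ range (B * q), f m = ∑ b ∈ range B, ∑ j ∈ range q, f (b * q + j) := by
  induction B with
  | zero => simp
  | succ B ih => rw [sum_range_succ, ← ih, Nat.succ_mul, sum_range_add]

lemma sum_Icc_geomBound_mul_le {N : ℝ} (hN : 0 < N) {u : ℤ} {q : ℕ} (hq : 1 ≤ q)
    (huq : Int.gcd u q = 1) {t : ℝ} (ht : |t - u / q| ≤ 1 / (q : ℝ) ^ 2) {F : ℕ} (hF : 1 ≤ F)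
    (X : ℕ) : ∑ m ∈ Icc 1 X, geomBound N (m * (F * t)) ≤
      (F * X / q + 1 : ℝ) * (6 * N + 8 * q * (1 + Real.log q)) := by
  set B := F * X / q + 1 with hB
  have hblocks : ∑ m ∈ Icc 1 X, geomBound N (m * (F * t)) ≤
      ∑ m ∈ range (B * q), geomBound N (m * t) := by
    rw [sum_congr rfl fun m _ => by rw [← mul_assoc, mul_comm (m : ℝ), ← Nat.cast_mul],
      ← sum_image (f := fun m : ℕ => geomBound N (m * t)) fun a _ b _ h =>
        Nat.eq_of_mul_eq_mul_left hF h]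
    refine sum_le_sum_of_subset_of_nonneg (fun m hm => ?_) fun _ _ _ => geomBound_nonneg hN.le _
    obtain ⟨k, hk, rfl⟩ := mem_image.1 hm
    rw [mem_range, hB, Nat.add_mul, one_mul]
    exact (Nat.mul_le_mul_left F (mem_Icc.1 hk).2).trans_lt (Nat.lt_div_mul_add hq)
  have hblock : ∀ b ∈ range B, ∑ j ∈ range q, geomBound N ((b * q + j : ℕ) * t) ≤
      6 * N + 8 * q * (1 + Real.log q) := by
    intro b _
    refine (sum_congr rfl fun j _ => ?_).trans_le (sum_range_geomBound_le hN hq huq ht (b * q * t))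
    push_cast
    rw [add_mul]
  have hBle : (B : ℝ) ≤ F * X / q + 1 := by
    rw [hB, Nat.cast_add_one]
    gcongr
    exact_mod_cast Nat.cast_div_le (α := ℝ) (m := F * X) (n := q)
  calc ∑ m ∈ Icc 1 X, geomBound N (m * (F * t))
      ≤ ∑ b ∈ range B, ∑ j ∈ range q, geomBound N ((b * q + j : ℕ) * t) :=
        hblocks.trans_eq (sum_range_mul_eq_sum_sum _ _ _)
    _ ≤ B * (6 * N + 8 * q * (1 + Real.log q)) := by
        refine (sum_le_sum hblock).trans_eq ?_
        rw [sum_const, card_range, nsmul_eq_mul]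
    _ ≤ _ := by
        have := Real.log_natCast_nonneg q
        gcongr

end WellSpacedPoints

section WeylInequality

lemma div_add_one_mul_add_mul_div_eq {N q : ℝ} (hN : 0 < N) (hq : 0 < q) (d : ℕ) :
    (N ^ d / q + 1) * (N + q) / N ^ (d + 1) = 1 / q + 1 / N ^ d + 1 / N + q / N ^ (d + 1) := by
  field_simp
  ring

lemma sum_Icc_pow_geomBound_mul_le {N d : ℕ} (hN : 1 ≤ N) {u : ℤ} {q : ℕ} (hq : 1 ≤ q)
    (huq : Int.gcd u q = 1) {t : ℝ} (ht : |t - u / q| ≤ 1 / (q : ℝ) ^ 2) {F : ℕ} (hF : 1 ≤ F) :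
    ∑ m ∈ Icc 1 (N ^ d), geomBound N (m * (F * t)) ≤
      8 * F * (1 + Real.log q) * (((N : ℝ) ^ d / q + 1) * (N + q)) := by
  have hN0 : (0 : ℝ) < N := by exact_mod_cast hN
  have hF1 : (1 : ℝ) ≤ F := by exact_mod_cast hF
  have hlog := Real.log_natCast_nonneg q
  refine (sum_Icc_geomBound_mul_le hN0 hq huq ht hF (N ^ d)).trans ?_
  calc (F * (N ^ d : ℕ) / q + 1 : ℝ) * (6 * N + 8 * q * (1 + Real.log q))
      ≤ (F * ((N : ℝ) ^ d / q + 1)) * (8 * (1 + Real.log q) * (N + q)) := by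
        gcongr
        · push_cast
          rw [mul_add, mul_one, mul_div_assoc]
          gcongr
        · nlinarith
    _ = _ := by ring

lemma weylMajorant_le {d : ℕ} (hd : 1 ≤ d) {N D : ℕ} (hN : 1 ≤ N) (hD : 1 ≤ D) {u : ℤ} {q : ℕ}
    (hq : 1 ≤ q) (huq : Int.gcd u q = 1) {t : ℝ} (ht : |t - u / q| ≤ 1 / (q : ℝ) ^ 2) {F : ℕ}
    (hF : 1 ≤ F) : weylMajorant d N D (F * t) ≤
      17 * F * (D : ℝ) ^ d * (1 + Real.log q) * (1 / q + 1 / N + q / (N : ℝ) ^ (d + 1)) := by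
  have hN1 : (1 : ℝ) ≤ N := by exact_mod_cast hN
  have hN0 : (0 : ℝ) < N := by linarith
  have hq0 : (0 : ℝ) < q := by exact_mod_cast hq
  set G : ℝ := 1 / q + 1 / N + q / (N : ℝ) ^ (d + 1)
  have hG0 : 0 ≤ G := by positivity
  have hNG : 1 / (N : ℝ) ≤ G := by
    have : 0 ≤ 1 / (q : ℝ) + q / (N : ℝ) ^ (d + 1) := by positivity
    linarith
  have hNd : 1 / (N : ℝ) ^ d ≤ 1 / N :=
    one_div_le_one_div_of_le hN0 (le_self_pow₀ hN1 (by lia))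
  set E : ℝ := F * (D : ℝ) ^ d * (1 + Real.log q)
  have hE : 1 ≤ E := one_le_mul_of_one_le_of_one_le
    (one_le_mul_of_one_le_of_one_le (by exact_mod_cast hF) (one_le_pow₀ (by exact_mod_cast hD)))
    (le_add_of_nonneg_right (Real.log_natCast_nonneg q))
  calc weylMajorant d N D (F * t)
      ≤ 1 / N + (D : ℝ) ^ d / (N : ℝ) ^ (d + 1)
        * (8 * F * (1 + Real.log q) * (((N : ℝ) ^ d / q + 1) * (N + q))) := by
        unfold weylMajorant
        gcongr
        exact sum_Icc_pow_geomBound_mul_le hN hq huq ht hF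
    _ = 1 / N + 8 * E * (1 / q + 1 / N ^ d + 1 / N + q / N ^ (d + 1)) := by
        rw [← div_add_one_mul_add_mul_div_eq hN0 hq0]
        ring
    _ = 1 / N + 8 * E * (G + 1 / N ^ d) := by ring
    _ ≤ E * G + 8 * E * (G + G) := by
        gcongr
        · exact hNG.trans (le_mul_of_one_le_left hG0 hE)
        · exact hNd.trans hNG
    _ = 17 * E * G := by ring
    _ = _ := by ring

lemma exists_natCast_le_rpow_forall_card_divisors_le {d : ℕ} (hd : 1 ≤ d) {ε : ℝ} (hε : 0 < ε) :
    ∃ C > (0 : ℝ), ∀ N : ℕ, 1 ≤ N → ∃ D : ℕ, 1 ≤ D ∧ (D : ℝ) ^ d ≤ C * (N : ℝ) ^ ε ∧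
      ∀ m, 1 ≤ m → m ≤ N ^ d → #m.divisors ≤ D := by
  have : (0 : ℝ) < d := by exact_mod_cast hd
  obtain ⟨C, hC, hdiv⟩ := card_divisors_le_mul_rpow (ε := ε / d / d) (by positivity)
  refine ⟨C ^ d, by positivity, fun N hN => ⟨⌊C * ((N ^ d : ℕ) : ℝ) ^ (ε / d / d)⌋₊, ?_, ?_, ?_⟩⟩
  · have hN1 : (1 : ℝ) ≤ (N ^ d : ℕ) := by exact_mod_cast Nat.one_le_pow _ _ hN
    refine Nat.le_floor ?_
    rw [Nat.cast_one]
    exact one_le_mul_of_one_le_of_one_le hC (Real.one_le_rpow hN1 (by positivity))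
  · calc (⌊C * ((N ^ d : ℕ) : ℝ) ^ (ε / d / d)⌋₊ : ℝ) ^ d
        ≤ (C * ((N ^ d : ℕ) : ℝ) ^ (ε / d / d)) ^ d := by
          gcongr
          exact Nat.floor_le (by positivity)
      _ = C ^ d * (N : ℝ) ^ ε := by
          rw [mul_pow, Nat.cast_pow, ← Real.rpow_natCast_mul (by positivity),
            ← Real.rpow_mul_natCast (by positivity)]
          congr 2
          field_simp
  · intro m hm hmN
    refine Nat.le_floor ((hdiv m hm).trans ?_)
    gcongr

open Polynomial in
/-- **Weyl's inequality**. -/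
theorem norm_sum_ee_eval_div_pow_le_rpow {d : ℕ} (hd : 1 ≤ d) {ε : ℝ} (hε : 0 < ε) :
    ∃ C > (0 : ℝ), ∀ p : ℝ[X], p.natDegree ≤ d + 1 → ∀ (u : ℤ) (q : ℕ), 1 ≤ q →
      Int.gcd u q = 1 → |p.coeff (d + 1) - u / q| ≤ 1 / (q : ℝ) ^ 2 → ∀ N : ℕ, 1 ≤ N →
      ∀ K ≤ N, (‖∑ k ∈ range K, ee (p.eval (k : ℝ))‖ / N) ^ (2 ^ d) ≤
        C * (N : ℝ) ^ ε * (1 + Real.log q) * (1 / q + 1 / N + q / (N : ℝ) ^ (d + 1)) := by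
  obtain ⟨C, hC, hweyl⟩ := norm_sum_ee_eval_div_pow_le d
  obtain ⟨C', hC', hdiv⟩ := exists_natCast_le_rpow_forall_card_divisors_le hd hε
  refine ⟨C * (17 * (d + 1).factorial * C'), by positivity,
    fun p hp u q hq huq hpq N hN K hK => ?_⟩
  obtain ⟨D, hD, hDN, hdivD⟩ := hdiv N hN
  have := Real.log_natCast_nonneg q
  calc (‖∑ k ∈ range K, ee (p.eval (k : ℝ))‖ / N) ^ (2 ^ d)
      ≤ C * weylMajorant d N D ((d + 1).factorial * p.coeff (d + 1)) :=
        hweyl N D hN hdivD p hp K hK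
    _ ≤ C * (17 * (d + 1).factorial * (D : ℝ) ^ d * (1 + Real.log q)
          * (1 / q + 1 / N + q / (N : ℝ) ^ (d + 1))) := by
        gcongr
        exact weylMajorant_le hd hN hD hq huq hpq (Nat.factorial_pos _)
    _ ≤ C * (17 * (d + 1).factorial * (C' * (N : ℝ) ^ ε) * (1 + Real.log q)
          * (1 / q + 1 / N + q / (N : ℝ) ^ (d + 1))) := by gcongr
    _ = _ := by ring

lemma one_div_add_one_div_add_div_pow_le {N q Δ : ℝ} (hN : 1 ≤ N) (hΔ1 : Δ ≤ 1) {n : ℕ}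
    (hqN : N ^ Δ < q) (hqN' : q ≤ N ^ (n - Δ)) : 1 / q + 1 / N + q / N ^ n ≤ 3 * N ^ (-Δ) := by
  have hN0 : 0 < N := by linarith
  have hq : 1 / q ≤ N ^ (-Δ) := by
    rw [Real.rpow_neg hN0.le, ← one_div]
    gcongr
  have hN' : 1 / N ≤ N ^ (-Δ) := by
    rw [one_div, ← Real.rpow_neg_one]
    gcongr
  have hqn : q / N ^ n ≤ N ^ (-Δ) := by
    rw [div_le_iff₀ (by positivity), ← Real.rpow_natCast, ← Real.rpow_add hN0]
    rwa [neg_add_eq_sub]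
  linarith

lemma one_add_log_le_mul_rpow {N q e A : ℝ} (hN : 1 ≤ N) (hq : 0 < q) (he : 0 < e) (hA : 0 ≤ A)
    (hqN : q ≤ N ^ A) : 1 + Real.log q ≤ (1 + A / e) * N ^ e := by
  have hN0 : 0 < N := by linarith
  have hlog : Real.log q ≤ A * (N ^ e / e) :=
    calc Real.log q ≤ A * Real.log N := by
          rw [← Real.log_rpow hN0]
          gcongr
      _ ≤ A * (N ^ e / e) := by
          gcongr
          exact Real.log_le_rpow_div hN0.le he
  have hone : 1 ≤ N ^ e := Real.one_le_rpow hN he.le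
  calc 1 + Real.log q ≤ N ^ e + A * (N ^ e / e) := add_le_add hone hlog
    _ = (1 + A / e) * N ^ e := by ring

lemma le_mul_rpow_of_div_pow_le {s B N a : ℝ} {M : ℕ} (hB : 0 ≤ B) (hN : 0 < N) (hM : M ≠ 0)
    (h : (s / N) ^ M ≤ B * N ^ a) : s ≤ (1 + B) * N ^ (1 + a / M) := by
  have hpow : (s / N) ^ M ≤ ((1 + B) * N ^ (a / M)) ^ M :=
    calc (s / N) ^ M ≤ B * N ^ a := h
      _ ≤ (1 + B) ^ M * N ^ a := by
          gcongr
          exact (le_add_of_nonneg_left zero_le_one).trans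
            (le_self_pow₀ (le_add_of_nonneg_right hB) hM)
      _ = ((1 + B) * N ^ (a / M)) ^ M := by
          rw [mul_pow, ← Real.rpow_mul_natCast hN.le, div_mul_cancel₀ _ (by exact_mod_cast hM)]
  calc s ≤ (1 + B) * N ^ (a / M) * N :=
        (div_le_iff₀ hN).1 (le_of_pow_le_pow_left₀ hM (by positivity) hpow)
    _ = (1 + B) * N ^ (1 + a / M) := by
        rw [mul_assoc, ← Real.rpow_add_one hN.ne', add_comm (a / M)]

open Polynomial in
lemma norm_sum_ee_eval_le_of_isApproximant {d : ℕ} (hd : 1 ≤ d) {Δ : ℝ} (hΔ1 : Δ ≤ 1) {ε : ℝ}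
    (hε : 0 < ε) : ∃ C > (0 : ℝ), ∀ p : ℝ[X], p.natDegree ≤ d + 1 → ∀ (u q : ℤ) (N : ℕ), 1 ≤ N →
      IsApproximant (p.coeff (d + 1)) u q → (N : ℝ) ^ Δ < q →
      (q : ℝ) ≤ (N : ℝ) ^ (((d + 1 : ℕ) : ℝ) - Δ) → ∀ K ≤ N,
      ‖∑ k ∈ range K, ee (p.eval (k : ℝ))‖ ≤ C * (N : ℝ) ^ (1 - Δ / 2 ^ d + ε) := by
  set e : ℝ := 2 ^ d * ε / 2
  have he : 0 < e := by positivity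
  obtain ⟨C, hC, hweyl⟩ := norm_sum_ee_eval_div_pow_le_rpow hd he
  set A : ℝ := ((d + 1 : ℕ) : ℝ) - Δ
  have hA : 0 ≤ A := by
    have : Δ ≤ (d + 1 : ℕ) := hΔ1.trans (by exact_mod_cast Nat.le_add_left 1 d)
    exact sub_nonneg.2 this
  set B : ℝ := C * (1 + A / e) * 3
  have hB : 0 < B := by positivity
  refine ⟨1 + B, by positivity, fun p hp u q N hN happ hqN hqN' K hK => ?_⟩
  obtain ⟨hq, huq, hpq⟩ := happ
  lift q to ℕ using by lia
  have hN1 : (1 : ℝ) ≤ N := by exact_mod_cast hN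
  have hN0 : (0 : ℝ) < N := by linarith
  have hq0 : (0 : ℝ) < q := by exact_mod_cast hq
  rw [Int.cast_natCast] at *
  set s := ‖∑ k ∈ range K, ee (p.eval (k : ℝ))‖
  have hpow : (s / N) ^ 2 ^ d ≤ B * (N : ℝ) ^ (2 * e - Δ) :=
    calc (s / N) ^ 2 ^ d
        ≤ C * N ^ e * (1 + Real.log q) * (1 / q + 1 / N + q / N ^ (d + 1)) :=
          hweyl p hp u q (by lia) huq hpq.le N hN K hK
      _ ≤ C * N ^ e * ((1 + A / e) * N ^ e) * (3 * N ^ (-Δ)) := by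
          gcongr
          · exact one_add_log_le_mul_rpow hN1 hq0 he hA hqN'
          · exact one_div_add_one_div_add_div_pow_le hN1 hΔ1 hqN hqN'
      _ = B * N ^ (2 * e - Δ) := by
          rw [sub_eq_add_neg, two_mul, Real.rpow_add hN0, Real.rpow_add hN0]
          ring
  refine (le_mul_rpow_of_div_pow_le hB.le hN0 (by positivity) hpow).trans_eq ?_
  congr 2
  simp only [e]
  push_cast
  field_simp
  ring

open Polynomial in
lemma norm_sum_Ico_ee_le_of_isApproximant {n : ℕ} (hn : 2 ≤ n) {Δ : ℝ} (hΔ1 : Δ ≤ 1) {ε : ℝ}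
    (hε : 0 < ε) : ∃ C > (0 : ℝ), ∀ (t y : ℝ) (u q : ℤ) (b : ℕ), 1 ≤ b → IsApproximant t u q →
      (b : ℝ) ^ Δ < q → (q : ℝ) ≤ (b : ℝ) ^ ((n : ℝ) - Δ) → ∀ a : ℕ,
      ‖∑ k ∈ Ico a b, ee (t * (k : ℝ) ^ n + y * k)‖ ≤
        C * (b : ℝ) ^ (1 - Δ / 2 ^ (n - 1) + ε) := by
  obtain ⟨d, rfl⟩ : ∃ d, n = d + 1 := ⟨n - 1, by lia⟩
  obtain ⟨C₀, hC₀, hweyl⟩ := norm_sum_ee_eval_le_of_isApproximant (d := d) (by lia) hΔ1 hε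
  refine ⟨C₀, hC₀, fun t y u q b hb happ hqb hqb' a => ?_⟩
  set p : ℝ[X] := C t * X ^ (d + 1) + C y * X with hp
  have hdeg : p.natDegree ≤ d + 1 := by
    refine natDegree_add_le_of_degree_le (natDegree_C_mul_X_pow_le _ _) ?_
    exact (natDegree_C_mul_le _ _).trans (natDegree_X_le.trans (by lia))
  have hdeg' : (taylor (a : ℝ) p).natDegree ≤ d + 1 := by rwa [natDegree_taylor]
  have hcoeff : (taylor (a : ℝ) p).coeff (d + 1) = t := by
    have := coeff_eq_zero_of_natDegree_lt (Nat.lt_succ_of_le (natDegree_taylor_sub_le hdeg (a : ℝ)))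
    rw [coeff_sub, sub_eq_zero] at this
    rw [this, hp, coeff_add, coeff_C_mul_X_pow, coeff_C_mul, coeff_X_of_ne_one (by lia)]
    simp
  rw [← hcoeff] at happ
  refine (congrArg norm ?_).trans_le (hweyl _ hdeg' u q b hb happ hqb hqb' (b - a) (by lia))
  rw [sum_Ico_eq_sum_range]
  refine sum_congr rfl fun k _ => ?_
  rw [taylor_eval, hp]
  simp [add_comm]

end WeylInequality

section SineSum

/-- The sine sum `W_K(y) = Σ_{1≤k<K} sin(2π(t·k^n + y·k))/(πk)` attached to the phase `t·k^n`;
for odd `n` the partial sums of `U(t,x)` are differences of two such sums. -/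
noncomputable def sineSum (n : ℕ) (t y : ℝ) (K : ℕ) : ℝ :=
  ∑ k ∈ Ico 1 K, Real.sin (2 * Real.pi * (t * (k : ℝ) ^ n + y * k)) / (Real.pi * k)

lemma abs_sineSum_sub_le_abs_sum (n : ℕ) (t y : ℝ) {a b : ℕ} (ha : 1 ≤ a) (hab : a ≤ b) :
    |sineSum n t y b - sineSum n t y a|
      ≤ |∑ k ∈ Ico a b, Real.sin (2 * Real.pi * (t * (k : ℝ) ^ n + y * k)) / k| := by
  have hdiff : sineSum n t y b - sineSum n t y a
      = Real.pi⁻¹ * ∑ k ∈ Ico a b, Real.sin (2 * Real.pi * (t * (k : ℝ) ^ n + y * k)) / k := by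
    unfold sineSum
    rw [← sum_Ico_consecutive _ ha hab, add_sub_cancel_left, mul_sum]
    exact sum_congr rfl fun k _ => by rw [mul_comm Real.pi, div_mul_eq_div_div]; ring
  rw [hdiff, abs_mul, abs_of_pos (inv_pos.2 Real.pi_pos)]
  exact mul_le_of_le_one_left (abs_nonneg _)
    (inv_le_one_of_one_le₀ (by linarith [Real.pi_gt_three]))

lemma sum_sin_div_eq_im (f : ℕ → ℝ) (s : Finset ℕ) :
    ∑ k ∈ s, Real.sin (2 * Real.pi * f k) / k = (∑ k ∈ s, ee (f k) / k).im := by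
  simp only [Complex.im_sum, Complex.div_natCast_im, ee_im]

lemma abs_sineSum_sub_le_norm_sum (n : ℕ) (t y : ℝ) {a b : ℕ} (ha : 1 ≤ a) (hab : a ≤ b) :
    |sineSum n t y b - sineSum n t y a| ≤ ‖∑ k ∈ Ico a b, ee (t * (k : ℝ) ^ n + y * k) / k‖ := by
  refine (abs_sineSum_sub_le_abs_sum n t y ha hab).trans ?_
  rw [sum_sin_div_eq_im fun k : ℕ => t * (k : ℝ) ^ n + y * k]
  exact Complex.abs_im_le_norm _

lemma cauchySeq_of_abs_sub_le {f B : ℕ → ℝ} {N : ℕ} (hB : Tendsto B atTop (nhds 0))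
    (h : ∀ a b, N ≤ a → a ≤ b → |f b - f a| ≤ B a) : CauchySeq f := by
  rw [Metric.cauchySeq_iff']
  intro ε hε
  obtain ⟨M, hM⟩ := (hB.eventually (gt_mem_nhds hε)).exists_forall_of_atTop
  exact ⟨max N M, fun b hb => (h _ b (le_max_left _ _) hb).trans_lt (hM _ (le_max_right _ _))⟩

end SineSum

section PartialSummation

lemma add_one_rpow_neg_div_le {η x : ℝ} (hη : 0 < η) (hx : 1 ≤ x) :
    (x + 1) ^ (-η) / x ≤ 2 / η * (x ^ (-η) - (x + 1) ^ (-η)) := by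
  have hx0 : 0 < x := by linarith
  have hfactor : x ^ (-η) = (x + 1) ^ (-η) * ((x + 1) / x) ^ η := by
    rw [Real.div_rpow (by positivity) hx0.le, Real.rpow_neg (by positivity : 0 ≤ x + 1),
      Real.rpow_neg hx0.le]
    field_simp
  have hlog : 1 / (2 * x) ≤ Real.log ((x + 1) / x) := by
    refine le_trans ?_ (Real.one_sub_inv_le_log_of_pos (by positivity))
    rw [inv_div, one_sub_div (by positivity), div_le_div_iff₀ (by positivity) (by positivity)]
    linarith
  have hpow : η / (2 * x) ≤ ((x + 1) / x) ^ η - 1 := by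
    rw [Real.rpow_def_of_pos (by positivity), le_sub_iff_add_le]
    refine le_trans ?_ (Real.add_one_le_exp _)
    calc η / (2 * x) + 1 = 1 / (2 * x) * η + 1 := by ring
      _ ≤ _ := by gcongr
  calc (x + 1) ^ (-η) / x = 2 / η * ((x + 1) ^ (-η) * (η / (2 * x))) := by field_simp
    _ ≤ 2 / η * ((x + 1) ^ (-η) * (((x + 1) / x) ^ η - 1)) := by gcongr
    _ = _ := by rw [hfactor]; ring

lemma norm_sum_Ico_div_natCast_le_add_sum (z : ℕ → ℂ) {a b : ℕ} (ha : 1 ≤ a) (hab : a ≤ b) :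
    ‖∑ k ∈ Ico a b, z k / k‖ ≤ ‖∑ k ∈ Ico a b, z k‖ / b
      + ∑ k ∈ Ico a b, ‖∑ j ∈ Ico a (k + 1), z j‖ / (k * (k + 1)) := by
  have habel := sum_Ico_mul_eq_sub_sum_Ico (fun k : ℕ => (k : ℂ)⁻¹) z hab
  simp only [← div_eq_inv_mul] at habel
  rw [habel]
  refine (norm_sub_le _ _).trans (add_le_add (by simp) ?_)
  refine (norm_sum_le _ _).trans (sum_le_sum fun k hk => le_of_eq ?_)
  have hk0 : (k : ℂ) ≠ 0 := Nat.cast_ne_zero.2 (by have := (mem_Ico.1 hk).1; lia)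
  have hweight : ((k + 1 : ℕ) : ℂ)⁻¹ - (k : ℂ)⁻¹ = -((k * (k + 1) : ℕ) : ℂ)⁻¹ := by
    have : (k : ℂ) + 1 ≠ 0 := by exact_mod_cast k.succ_ne_zero
    push_cast
    field_simp
    ring
  rw [hweight, norm_mul, norm_neg, norm_inv, Complex.norm_natCast, ← div_eq_inv_mul]
  push_cast
  rfl

lemma norm_sum_Ico_div_natCast_le_rpow {η C : ℝ} (hη : 0 < η) (hC : 0 ≤ C) (z : ℕ → ℂ) {a b : ℕ}
    (ha : 1 ≤ a) (hab : a ≤ b)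
    (hz : ∀ j, a ≤ j → j ≤ b → ‖∑ k ∈ Ico a j, z k‖ ≤ C * (j : ℝ) ^ (1 - η)) :
    ‖∑ k ∈ Ico a b, z k / k‖ ≤ C * (1 + 2 / η) * (a : ℝ) ^ (-η) := by
  have hdiv : ∀ j, a ≤ j → j ≤ b → ‖∑ k ∈ Ico a j, z k‖ / j ≤ C * (j : ℝ) ^ (-η) := by
    intro j haj hjb
    have hj : (0 : ℝ) < j := by exact_mod_cast ha.trans haj
    rw [div_le_iff₀ hj, mul_assoc, ← Real.rpow_add_one hj.ne', neg_add_eq_sub]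
    exact hz j haj hjb
  have hterm : ∀ k ∈ Ico a b, ‖∑ j ∈ Ico a (k + 1), z j‖ / (k * (k + 1))
      ≤ C * (2 / η) * (-((k + 1 : ℕ) : ℝ) ^ (-η) - -(k : ℝ) ^ (-η)) := by
    intro k hk
    rw [mem_Ico] at hk
    have hk1 : (1 : ℝ) ≤ k := by exact_mod_cast ha.trans hk.1
    calc ‖∑ j ∈ Ico a (k + 1), z j‖ / (k * (k + 1))
        = ‖∑ j ∈ Ico a (k + 1), z j‖ / ((k + 1 : ℕ) : ℝ) / k := by
          push_cast; rw [div_div, mul_comm]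
      _ ≤ C * ((k + 1 : ℕ) : ℝ) ^ (-η) / k := by gcongr; exact hdiv _ (by lia) (by lia)
      _ = C * (((k : ℝ) + 1) ^ (-η) / k) := by push_cast; ring
      _ ≤ C * (2 / η * ((k : ℝ) ^ (-η) - ((k : ℝ) + 1) ^ (-η))) := by
          gcongr; exact add_one_rpow_neg_div_le hη hk1
      _ = _ := by push_cast; ring
  have hb : (b : ℝ) ^ (-η) ≤ (a : ℝ) ^ (-η) :=
    Real.rpow_le_rpow_of_nonpos (by exact_mod_cast ha) (by exact_mod_cast hab) (by linarith)
  calc ‖∑ k ∈ Ico a b, z k / k‖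
      ≤ C * (b : ℝ) ^ (-η) + ∑ k ∈ Ico a b,
          C * (2 / η) * (-((k + 1 : ℕ) : ℝ) ^ (-η) - -(k : ℝ) ^ (-η)) :=
        (norm_sum_Ico_div_natCast_le_add_sum z ha hab).trans
          (add_le_add (hdiv b hab le_rfl) (sum_le_sum hterm))
    _ = C * (b : ℝ) ^ (-η) + C * (2 / η) * ((a : ℝ) ^ (-η) - (b : ℝ) ^ (-η)) := by
        rw [← mul_sum, sum_Ico_sub (fun k : ℕ => -(k : ℝ) ^ (-η)) hab]; ring
    _ ≤ C * (a : ℝ) ^ (-η) + C * (2 / η) * ((a : ℝ) ^ (-η) - 0) := by gcongr; positivity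
    _ = C * (1 + 2 / η) * (a : ℝ) ^ (-η) := by ring

lemma exists_abs_sineSum_sub_le_of_isApproximant {n : ℕ} (hn : 2 ≤ n) {Δ : ℝ} (hΔ1 : Δ ≤ 1)
    {η : ℝ} (hη : 0 < η) (hηΔ : η < Δ / 2 ^ (n - 1)) :
    ∃ C > (0 : ℝ), ∀ (t y : ℝ) (a b : ℕ), 1 ≤ a → a ≤ b →
      (∀ j : ℕ, a ≤ j → j ≤ b → ∃ u q : ℤ, IsApproximant t u q ∧ (j : ℝ) ^ Δ < (q : ℝ) ∧
        (q : ℝ) ≤ (j : ℝ) ^ ((n : ℝ) - Δ)) →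
      |sineSum n t y b - sineSum n t y a| ≤ C * (a : ℝ) ^ (-η) := by
  obtain ⟨C, hC, hweyl⟩ := norm_sum_Ico_ee_le_of_isApproximant hn hΔ1 (sub_pos.2 hηΔ)
  refine ⟨C * (1 + 2 / η), by positivity, fun t y a b ha hab happrox => ?_⟩
  refine (abs_sineSum_sub_le_norm_sum n t y ha hab).trans
    (norm_sum_Ico_div_natCast_le_rpow hη hC.le (fun k => ee (t * (k : ℝ) ^ n + y * k)) ha hab ?_)
  intro j haj hjb
  obtain ⟨u, q, happ, hq1, hq2⟩ := happrox j haj hjb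
  have := hweyl t y u q j (ha.trans haj) happ hq1 hq2 a
  rwa [show 1 - Δ / 2 ^ (n - 1) + (Δ / 2 ^ (n - 1) - η) = 1 - η by ring] at this

end PartialSummation

section LinearPhase

lemma abs_sum_sin_div_mul_le (θ : ℝ) {a b : ℕ} (ha : 1 ≤ a) (hab : a ≤ b) :
    |∑ k ∈ Ico a b, Real.sin (2 * Real.pi * (θ * k)) / k| * (a * distInt θ) ≤ 1 / 2 := by
  have : (0 : ℝ) < a := by exact_mod_cast ha
  rcases (distInt_nonneg θ).eq_or_lt with hθ | hθ
  · rw [← hθ]; simp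
  rw [← le_div_iff₀ (by positivity), sum_sin_div_eq_im fun k : ℕ => θ * k, mul_comm,
    ← div_div]
  refine (Complex.abs_im_le_norm _).trans
    (norm_sum_Ico_div_natCast_le (fun k => ee (θ * k)) ha hab fun j haj _ => ?_)
  rw [le_div_iff₀ hθ]
  exact norm_sum_ee_mul_natCast_mul_distInt_le θ haj

lemma abs_sin_two_pi_mul_natCast_le (θ : ℝ) (k : ℕ) :
    |Real.sin (2 * Real.pi * (θ * k))| ≤ 2 * Real.pi * distInt θ * k := by
  have hround : θ * k = (θ - round θ) * k + (round θ * k : ℤ) := by push_cast; ring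
  rw [← ee_im, hround, ee_add_intCast, ee_im]
  refine Real.abs_sin_le_abs.trans (le_of_eq ?_)
  rw [abs_mul, abs_of_pos Real.two_pi_pos, abs_mul, Nat.abs_cast, distInt, mul_assoc _ |_|]

lemma abs_sum_sin_div_le_natCast_mul_distInt (θ : ℝ) {a : ℕ} (ha : 1 ≤ a) (b : ℕ) :
    |∑ k ∈ Ico a b, Real.sin (2 * Real.pi * (θ * k)) / k| ≤ 2 * Real.pi * (b * distInt θ) := by
  have hterm : ∀ k ∈ Ico a b,
      |Real.sin (2 * Real.pi * (θ * k)) / k| ≤ 2 * Real.pi * distInt θ := by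
    intro k hk
    have hk0 : (0 : ℝ) < k := by exact_mod_cast ha.trans (mem_Ico.1 hk).1
    rw [abs_div, Nat.abs_cast, div_le_iff₀ hk0]
    exact abs_sin_two_pi_mul_natCast_le θ k
  have := distInt_nonneg θ
  calc _ ≤ ((b - a : ℕ) : ℝ) * (2 * Real.pi * distInt θ) := by
        rw [← Nat.card_Ico, ← nsmul_eq_mul]
        exact (abs_sum_le_sum_abs _ _).trans (sum_le_card_nsmul _ _ _ hterm)
    _ ≤ (b : ℝ) * (2 * Real.pi * distInt θ) := by
        gcongr; exact Nat.sub_le _ _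
    _ = _ := by ring

lemma abs_sum_sin_div_le_const (θ : ℝ) {a b : ℕ} (ha : 1 ≤ a) (hab : a ≤ b) :
    |∑ k ∈ Ico a b, Real.sin (2 * Real.pi * (θ * k)) / k| ≤ 21 / 2 := by
  have hnear : ∀ c : ℕ, (c : ℝ) * distInt θ ≤ 3 / 2 →
      |∑ k ∈ Ico a c, Real.sin (2 * Real.pi * (θ * k)) / k| ≤ 10 := fun c hc => by
    refine (abs_sum_sin_div_le_natCast_mul_distInt θ ha c).trans ?_
    nlinarith [Real.pi_lt_d2, Real.pi_pos]
  have hfar : ∀ c, 1 ≤ c → c ≤ b → 1 ≤ (c : ℝ) * distInt θ →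
      |∑ k ∈ Ico c b, Real.sin (2 * Real.pi * (θ * k)) / k| ≤ 1 / 2 := fun c hc hcb hθ =>
    (le_mul_of_one_le_right (abs_nonneg _) hθ).trans (abs_sum_sin_div_mul_le θ hc hcb)
  by_cases hb : (b : ℝ) * distInt θ ≤ 3 / 2
  · linarith [hnear b hb]
  by_cases ha' : 1 ≤ (a : ℝ) * distInt θ
  · linarith [hfar a ha hab ha']
  push Not at hb ha'
  have hθ : 0 < distInt θ := (distInt_nonneg θ).lt_of_ne' fun h => by norm_num [h] at hb
  set c := ⌈1 / distInt θ⌉₊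
  have hc1 : 1 ≤ (c : ℝ) * distInt θ := by
    rw [← div_le_iff₀ hθ]; exact Nat.le_ceil _
  have hc2 : (c : ℝ) * distInt θ ≤ 3 / 2 := by
    calc (c : ℝ) * distInt θ ≤ (1 / distInt θ + 1) * distInt θ := by
          gcongr; exact (Nat.ceil_lt_add_one (by positivity)).le
      _ = 1 + distInt θ := by field_simp
      _ ≤ 3 / 2 := by linarith [distInt_le_half θ]
  have hac : a ≤ c := by exact_mod_cast (lt_of_mul_lt_mul_right (ha'.trans_le hc1) hθ.le).le
  have hcb : c ≤ b := by exact_mod_cast (lt_of_mul_lt_mul_right (hc2.trans_lt hb) hθ.le).le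
  rw [← sum_Ico_consecutive _ hac hcb]
  exact (abs_add_le _ _).trans
    ((add_le_add (hnear c hc2) (hfar c (ha.trans hac) hcb hc1)).trans (by norm_num))

lemma abs_sum_sin_div_le_geomBound (θ : ℝ) {a b : ℕ} (ha : 1 ≤ a) (hab : a ≤ b) :
    |∑ k ∈ Ico a b, Real.sin (2 * Real.pi * (θ * k)) / k| ≤ 11 / a * geomBound a θ := by
  have : (0 : ℝ) < a := by exact_mod_cast ha
  have hθ := distInt_nonneg θ
  have hbound : 11 / a * geomBound a θ = 11 / (1 + a * distInt θ) := by
    unfold geomBound; field_simp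
  rw [hbound, le_div_iff₀ (by positivity)]
  linarith [abs_sum_sin_div_mul_le θ ha hab, abs_sum_sin_div_le_const θ ha hab]

end LinearPhase

section RationalPhase

open ZMod

variable (n : ℕ) (u : ℤ) (q : ℕ) [NeZero q]

lemma ee_intCast_div_natCast (j : ℤ) : ee ((j : ℝ) / q) = stdAddChar (j : ZMod q) := by
  rw [stdAddChar_coe, ee]
  push_cast
  ring_nf

lemma sum_zmod_eq_sum_range {M : Type*} [AddCommMonoid M] (f : ZMod q → M) :
    ∑ k, f k = ∑ k ∈ range q, f (k : ℕ) :=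
  sum_nbij' val (fun k => (k : ZMod q)) (fun k _ => mem_range.2 k.val_lt) (fun _ _ => mem_univ _)
    (fun k _ => natCast_zmod_val k) (fun _ hk => val_cast_of_lt (mem_range.1 hk))
    (fun k _ => by rw [natCast_zmod_val])

/-- The complete exponential sum `Σ_{k mod q} e((u·k^n - b·k)/q)`, as the discrete Fourier transform
of the `q`-periodic sequence `e(u·k^n/q)`. -/
noncomputable def powerGaussSum : ZMod q → ℂ :=
  dft fun k => stdAddChar ((u : ZMod q) * k ^ n)

lemma powerGaussSum_natCast (b : ℕ) :
    powerGaussSum n u q b = ∑ k ∈ Ico 0 q, ee ((u : ℝ) / q * (k : ℝ) ^ n + -(b : ℝ) / q * k) := by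
  rw [powerGaussSum, dft_apply, sum_zmod_eq_sum_range, range_eq_Ico]
  refine sum_congr rfl fun k _ => ?_
  rw [smul_eq_mul, ← AddChar.map_add_eq_mul]
  convert (ee_intCast_div_natCast q (-(k * b) + u * k ^ n)).symm using 2 <;> push_cast <;> ring

lemma ee_div_mul_pow_eq (k : ℕ) :
    ee ((u : ℝ) / q * (k : ℝ) ^ n)
      = (q : ℂ)⁻¹ * ∑ b ∈ range q, powerGaussSum n u q b * ee ((b : ℝ) / q * k) := by
  have hinv := invDFT_apply (powerGaussSum n u q) (k : ZMod q)
  rw [powerGaussSum, LinearEquiv.symm_apply_apply, ← powerGaussSum, sum_zmod_eq_sum_range,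
    smul_eq_mul] at hinv
  have hchar (j : ℤ) (x : ℝ) (hx : x = j / q) : ee x = stdAddChar (j : ZMod q) := by
    rw [hx, ee_intCast_div_natCast]
  rw [hchar (u * k ^ n) _ (by push_cast; ring)]
  push_cast
  rw [hinv]
  congr 1
  refine sum_congr rfl fun b _ => ?_
  rw [hchar (b * k) _ (by push_cast; ring), smul_eq_mul, mul_comm]
  push_cast
  rfl

lemma conj_powerGaussSum (hn : Odd n) (b : ZMod q) :
    starRingEnd ℂ (powerGaussSum n u q b) = powerGaussSum n u q b := by
  have hconj (j : ZMod q) :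
      starRingEnd ℂ (stdAddChar j : ℂ) = stdAddChar (-j) := by
    rw [AddChar.map_neg_eq_conj]
  simp only [powerGaussSum, dft_apply, smul_eq_mul, map_sum, map_mul, hconj]
  rw [← Equiv.sum_comp (Equiv.neg (ZMod q))]
  refine sum_congr rfl fun k _ => ?_
  simp only [Equiv.neg_apply, hn.neg_pow, mul_neg, neg_mul, neg_neg]

lemma sum_sin_div_eq_sum_powerGaussSum (hn : Odd n) (y : ℝ) (s : Finset ℕ) :
    ∑ k ∈ s, Real.sin (2 * Real.pi * ((u : ℝ) / q * (k : ℝ) ^ n + y * k)) / k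
      = (q : ℝ)⁻¹ * ∑ b ∈ range q, (powerGaussSum n u q b).re *
          ∑ k ∈ s, Real.sin (2 * Real.pi * ((y + b * (1 / q)) * k)) / k := by
  have hexpand : ∑ k ∈ s, ee ((u : ℝ) / q * (k : ℝ) ^ n + y * k) / k
      = (q : ℝ)⁻¹ * ∑ b ∈ range q, powerGaussSum n u q b *
          ∑ k ∈ s, ee ((y + b * (1 / q)) * k) / k := by
    simp only [mul_sum]
    rw [sum_comm]
    refine sum_congr rfl fun k _ => ?_
    rw [ee_add, ee_div_mul_pow_eq, mul_assoc, sum_mul, mul_div_assoc, sum_div, mul_sum]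
    refine sum_congr rfl fun b _ => ?_
    rw [add_mul, ee_add, mul_one_div]
    push_cast
    ring
  rw [sum_sin_div_eq_im fun k : ℕ => (u : ℝ) / q * (k : ℝ) ^ n + y * k, hexpand,
    Complex.im_ofReal_mul, Complex.im_sum]
  congr 1
  refine sum_congr rfl fun b _ => ?_
  rw [sum_sin_div_eq_im fun k : ℕ => (y + b * (1 / q)) * k, Complex.mul_im,
    Complex.conj_eq_iff_im.1 (conj_powerGaussSum n u q hn b), zero_mul, add_zero]

lemma abs_sineSum_sub_le_sum_powerGaussSum (hn : Odd n) (y : ℝ) {a b : ℕ} (ha : 1 ≤ a)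
    (hab : a ≤ b) :
    |sineSum n (u / q) y b - sineSum n (u / q) y a|
      ≤ (q : ℝ)⁻¹ * ∑ j ∈ range q, ‖powerGaussSum n u q j‖ *
          |∑ k ∈ Ico a b, Real.sin (2 * Real.pi * ((y + j * (1 / q)) * k)) / k| := by
  refine (abs_sineSum_sub_le_abs_sum n _ y ha hab).trans ?_
  rw [sum_sin_div_eq_sum_powerGaussSum n u q hn, abs_mul, abs_inv, Nat.abs_cast]
  gcongr
  refine (abs_sum_le_sum_abs _ _).trans (sum_le_sum fun j _ => ?_)
  rw [abs_mul]
  gcongr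
  exact Complex.abs_re_le_norm _

lemma cauchySeq_sineSum_intCast_div_natCast (hn : Odd n) (y : ℝ) :
    CauchySeq (sineSum n (u / q) y) := by
  have hbound (θ : ℝ) {a b : ℕ} (ha : 1 ≤ a) (hab : a ≤ b) :
      |∑ k ∈ Ico a b, Real.sin (2 * Real.pi * (θ * k)) / k| ≤ (distInt θ)⁻¹ / a := by
    have ha0 : (0 : ℝ) < a := by exact_mod_cast ha
    rcases (distInt_nonneg θ).eq_or_lt with hθ | hθ
    · simpa [← hθ] using abs_sum_sin_div_le_natCast_mul_distInt θ ha b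
    · rw [le_div_iff₀ ha0, ← mul_le_mul_iff_left₀ hθ, inv_mul_cancel₀ hθ.ne', mul_assoc]
      linarith [abs_sum_sin_div_mul_le θ ha hab]
  set D : ℝ := (q : ℝ)⁻¹ * ∑ j ∈ range q,
    ‖powerGaussSum n u q j‖ * (distInt (y + j * (1 / q)))⁻¹
  refine cauchySeq_of_abs_sub_le (N := 1) (tendsto_const_div_atTop_nhds_zero_nat D)
    fun a b ha hab => (abs_sineSum_sub_le_sum_powerGaussSum n u q hn y ha hab).trans ?_
  rw [mul_div_assoc, sum_div]
  gcongr with j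
  rw [mul_div_assoc]
  gcongr
  exact hbound _ ha hab

end RationalPhase

section RationalTail

lemma exists_norm_powerGaussSum_le {n : ℕ} (hn : 2 ≤ n) {Δ : ℝ} (hΔ1 : Δ < 1) {ε : ℝ}
    (hε : 0 < ε) :
    ∃ C > (0 : ℝ), ∀ (u : ℤ) (q : ℕ) [NeZero q], 2 ≤ q → Int.gcd u q = 1 → ∀ b : ℕ,
      ‖powerGaussSum n u q b‖ ≤ C * (q : ℝ) ^ (1 - Δ / 2 ^ (n - 1) + ε) := by
  obtain ⟨C, hC, hweyl⟩ := norm_sum_Ico_ee_le_of_isApproximant hn hΔ1.le hε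
  refine ⟨C, hC, fun u q _ hq huq b => ?_⟩
  have hq1 : (1 : ℝ) < q := by exact_mod_cast hq
  have hn2 : (2 : ℝ) ≤ n := by exact_mod_cast hn
  have happ : IsApproximant ((u : ℝ) / q) u q :=
    ⟨by lia, huq, by simp only [Int.cast_natCast, sub_self, abs_zero]; positivity⟩
  rw [powerGaussSum_natCast]
  refine hweyl _ _ u q q (by lia) happ ?_ ?_ 0
  · simpa using Real.rpow_lt_rpow_of_exponent_lt hq1 hΔ1
  · simpa using Real.rpow_le_rpow_of_exponent_le hq1.le (by linarith : 1 ≤ (n : ℝ) - Δ)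

lemma exists_abs_sineSum_sub_le_of_rational {n : ℕ} (hn : 2 ≤ n) (hodd : Odd n) {Δ : ℝ}
    (hΔ1 : Δ < 1) {η : ℝ} (hηΔ : η < Δ / 2 ^ (n - 1)) :
    ∃ C > (0 : ℝ), ∀ (u : ℤ) (q : ℕ), 2 ≤ q → Int.gcd u q = 1 → ∀ (y : ℝ) (b : ℕ), q ≤ b →
      |sineSum n (u / q) y b - sineSum n (u / q) y q| ≤ C * (q : ℝ) ^ (-η) := by
  set ε := (Δ / 2 ^ (n - 1) - η) / 2 with hεdef
  have hε : 0 < ε := half_pos (sub_pos.2 hηΔ)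
  obtain ⟨C, hC, hgauss⟩ := exists_norm_powerGaussSum_le hn hΔ1 hε
  refine ⟨C * (11 * (14 + 8 / ε)), by positivity, fun u q hq huq y b hb => ?_⟩
  have : NeZero q := ⟨by lia⟩
  have hq1 : (1 : ℝ) ≤ q := by exact_mod_cast (by lia : 1 ≤ q)
  have hq0 : (0 : ℝ) < q := by linarith
  have hspaced : ∑ j ∈ range q, geomBound q (y + j * (1 / q))
      ≤ 6 * q + 8 * q * (1 + Real.log q) :=
    sum_range_geomBound_le hq0 (u := 1) (by lia) (by simp) (by simp) y
  have hlog : 14 + 8 * Real.log q ≤ (14 + 8 / ε) * (q : ℝ) ^ ε := by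
    have hlogq : Real.log q ≤ (q : ℝ) ^ ε / ε := Real.log_le_rpow_div hq0.le hε
    have hone : 1 ≤ (q : ℝ) ^ ε := Real.one_le_rpow hq1 hε.le
    calc 14 + 8 * Real.log q ≤ 14 * (q : ℝ) ^ ε + 8 * ((q : ℝ) ^ ε / ε) := by linarith
      _ = _ := by ring
  calc |sineSum n (u / q) y b - sineSum n (u / q) y q|
      ≤ (q : ℝ)⁻¹ * ∑ j ∈ range q, C * (q : ℝ) ^ (1 - Δ / 2 ^ (n - 1) + ε)
          * (11 / q * geomBound q (y + j * (1 / q))) := by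
        refine (abs_sineSum_sub_le_sum_powerGaussSum n u q hodd y (by lia) hb).trans ?_
        gcongr with j
        exacts [hgauss u q hq huq j, abs_sum_sin_div_le_geomBound _ (by lia) hb]
    _ ≤ (q : ℝ)⁻¹ * (C * (q : ℝ) ^ (1 + (-η - ε)) * (11 / q *
          (6 * q + 8 * q * (1 + Real.log q)))) := by
        rw [← mul_sum, ← mul_sum, show 1 - Δ / 2 ^ (n - 1) + ε = 1 + (-η - ε) by
          rw [hεdef]; ring]
        gcongr
    _ = C * (q : ℝ) ^ (-η - ε) * (11 * (14 + 8 * Real.log q)) := by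
        rw [Real.rpow_add hq0, Real.rpow_one]; field_simp; ring
    _ ≤ C * (q : ℝ) ^ (-η - ε) * (11 * ((14 + 8 / ε) * (q : ℝ) ^ ε)) := by gcongr
    _ = C * (11 * (14 + 8 / ε)) * (q : ℝ) ^ (-η - ε + ε) := by rw [Real.rpow_add hq0]; ring
    _ = _ := by rw [sub_add_cancel]

end RationalTail

section Admissible

/-- The hypothesis under which `U(t, ·)` converges, covering both alternatives of the theorem:
`t` lies in `ℬ_{m,α}`, or `t` is rational with a small enough denominator. -/
def IsAdmissible (n : ℕ) (Δ : ℝ) (m : ℤ) (α t : ℝ) : Prop :=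
  t ∈ Bset n Δ m α ∨
    ∃ u q : ℤ, 1 ≤ q ∧ Int.gcd u q = 1 ∧ t = (u : ℝ) / (q : ℝ) ∧
      t ≤ (m : ℝ) * (q : ℝ) ^ (-(1 / (α * ((n : ℝ) - Δ))))

lemma eventually_mul_rpow_le (c : ℝ) {δ r : ℝ} (hδ : 0 < δ) (hr : 0 < r) :
    ∀ᶠ t : ℝ in nhdsWithin 0 (Set.Ioi 0), c * t ^ δ ≤ r := by
  have h : Tendsto (fun t : ℝ => c * t ^ δ) (nhds 0) (nhds (c * 0 ^ δ)) :=
    ((Real.continuous_rpow_const hδ.le).tendsto 0).const_mul c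
  rw [Real.zero_rpow hδ.ne', mul_zero] at h
  exact (h.mono_left nhdsWithin_le_nhds).eventually_le_const hr

variable {n : ℕ} {Δ α : ℝ} {m : ℤ}

lemma le_rpow_of_le_mul_rpow {t q M κ : ℝ} (hm : 1 ≤ m) (hα0 : 0 < α) (hα1 : α ≤ 1) (hκ : 0 < κ)
    (ht : 0 < t) (hq : 0 < q) (htq : t ≤ m * q ^ (-(1 / (α * κ)))) (hM : m * t ^ (-α) ≤ M) :
    q ≤ M ^ κ := by
  have hm1 : (1 : ℝ) ≤ m := by exact_mod_cast hm
  have hqm : q ^ (1 / (α * κ)) ≤ m / t := by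
    rw [Real.rpow_neg hq.le, ← div_eq_mul_inv, le_div_iff₀ (by positivity)] at htq
    rw [le_div_iff₀ ht]
    linarith
  calc q = (q ^ (1 / (α * κ))) ^ (α * κ) := by
        rw [← Real.rpow_mul hq.le, one_div_mul_cancel (by positivity), Real.rpow_one]
    _ ≤ (m / t) ^ (α * κ) := by gcongr
    _ = (m ^ α * t ^ (-α)) ^ κ := by
        rw [Real.rpow_mul (by positivity), Real.div_rpow (by positivity) ht.le,
          Real.rpow_neg ht.le, div_eq_mul_inv]
    _ ≤ (m ^ (1 : ℝ) * t ^ (-α)) ^ κ := by gcongr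
    _ ≤ M ^ κ := by rw [Real.rpow_one]; gcongr

lemma isApproximant_of_eq_div {t : ℝ} {u q : ℤ} (hq : 1 ≤ q) (huq : Int.gcd u q = 1)
    (ht : t = u / q) : IsApproximant t u q := by
  have : (1 : ℝ) ≤ q := by exact_mod_cast hq
  refine ⟨hq, huq, ?_⟩
  rw [ht, sub_self, abs_zero]
  positivity

lemma exists_abs_sineSum_sub_le_of_mem_Bset (hn : 2 ≤ n) (hΔ1 : Δ ≤ 1) {η : ℝ} (hη : 0 < η)
    (hηΔ : η < Δ / 2 ^ (n - 1)) :
    ∃ C > (0 : ℝ), ∀ t ∈ Bset n Δ m α, ∀ (y : ℝ) (a b : ℕ), 1 ≤ a → m * t ^ (-α) ≤ a → a ≤ b →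
      |sineSum n t y b - sineSum n t y a| ≤ C * (a : ℝ) ^ (-η) := by
  obtain ⟨C, hC, hweyl⟩ := exists_abs_sineSum_sub_le_of_isApproximant hn hΔ1 hη hηΔ
  exact ⟨C, hC, fun t ht y a b ha hMa hab => hweyl t y a b ha hab fun j haj _ =>
    ht.2 j (hMa.trans (by exact_mod_cast haj))⟩

lemma exists_abs_sineSum_sub_le_of_eq_div (hn : 2 ≤ n) (hodd : Odd n) (hΔ0 : 0 < Δ)
    (hΔ1 : Δ < 1) (hm : 1 ≤ m) (hα0 : 0 < α) (hα1 : α ≤ 1) {η : ℝ} (hη : 0 < η)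
    (hηΔ : η < Δ / 2 ^ (n - 1)) :
    ∃ C > (0 : ℝ), ∀ (t : ℝ) (u : ℤ) (q : ℕ), 0 < t → 2 ≤ q → Int.gcd u q = 1 →
      t = u / q → t ≤ m * (q : ℝ) ^ (-(1 / (α * ((n : ℝ) - Δ)))) →
      ∀ (y : ℝ) (a b : ℕ), 1 ≤ a → m * t ^ (-α) ≤ a → a ≤ q → a ≤ b →
        |sineSum n t y b - sineSum n t y a| ≤ C * (a : ℝ) ^ (-η) := by
  obtain ⟨C₁, hC₁, hweyl⟩ := exists_abs_sineSum_sub_le_of_isApproximant hn hΔ1.le hη hηΔ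
  obtain ⟨C₂, hC₂, hrat⟩ := exists_abs_sineSum_sub_le_of_rational hn hodd hΔ1 hηΔ
  refine ⟨C₁ + C₂, by positivity, fun t u q ht hq huq htq htle y a b ha hMa haq hab => ?_⟩
  have hq1 : (1 : ℝ) < q := by exact_mod_cast hq
  have hn2 : (2 : ℝ) ≤ n := by exact_mod_cast hn
  have ha0 : (0 : ℝ) < a := by exact_mod_cast ha
  have hbelow (b : ℕ) (hab : a ≤ b) (hbq : b ≤ q) :
      |sineSum n t y b - sineSum n t y a| ≤ C₁ * (a : ℝ) ^ (-η) := by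
    refine hweyl t y a b ha hab fun j haj hjb =>
      ⟨u, q, isApproximant_of_eq_div (by lia) huq (by exact_mod_cast htq), ?_, ?_⟩
    · calc (j : ℝ) ^ Δ ≤ (q : ℝ) ^ Δ := by gcongr; exact hjb.trans hbq
        _ < (q : ℝ) ^ (1 : ℝ) := Real.rpow_lt_rpow_of_exponent_lt hq1 hΔ1
        _ = _ := by simp
    · exact le_rpow_of_le_mul_rpow hm hα0 hα1 (by linarith) ht (by simp; lia)
        (by exact_mod_cast htle) (hMa.trans (by exact_mod_cast haj))
  have : 0 < (a : ℝ) ^ (-η) := by positivity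
  rcases le_total b q with hbq | hqb
  · exact (hbelow b hab hbq).trans (by nlinarith)
  · calc |sineSum n t y b - sineSum n t y a|
        ≤ |sineSum n t y b - sineSum n t y q| + |sineSum n t y q - sineSum n t y a| :=
          abs_sub_le _ _ _
      _ ≤ C₂ * (q : ℝ) ^ (-η) + C₁ * (a : ℝ) ^ (-η) := by
          gcongr
          exacts [by simpa only [htq] using hrat u q hq huq y b hqb, hbelow q haq le_rfl]
      _ ≤ C₂ * (a : ℝ) ^ (-η) + C₁ * (a : ℝ) ^ (-η) := by
          gcongr C₂ * ?_ + _
          exact Real.rpow_le_rpow_of_nonpos ha0 (by exact_mod_cast haq) (by linarith)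
      _ = (C₁ + C₂) * (a : ℝ) ^ (-η) := by ring

lemma ceil_inv_le_of_eq_div {t : ℝ} {u : ℤ} {q : ℕ} (ht : 0 < t) (htq : t = u / q) :
    ⌈t⁻¹⌉₊ ≤ q := by
  rcases q.eq_zero_or_pos with rfl | hq
  · simp [htq] at ht
  have hq0 : (0 : ℝ) < q := by exact_mod_cast hq
  have hu : (0 : ℝ) < u := by rwa [htq, div_pos_iff_of_pos_right hq0] at ht
  rw [Nat.ceil_le, htq, inv_div]
  exact div_le_self hq0.le (by exact_mod_cast hu)

lemma IsAdmissible.exists_nat {t : ℝ} (h : IsAdmissible n Δ m α t) (ht : t ∈ Set.Ioo (0 : ℝ) 1) :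
    t ∈ Bset n Δ m α ∨ ∃ (u : ℤ) (q : ℕ), 2 ≤ q ∧ Int.gcd u q = 1 ∧ t = u / q ∧
      t ≤ m * (q : ℝ) ^ (-(1 / (α * ((n : ℝ) - Δ)))) ∧ ⌈t⁻¹⌉₊ ≤ q := by
  refine h.imp_right ?_
  rintro ⟨u, q, hq, huq, htq, htle⟩
  lift q to ℕ using by lia
  have hceil : ⌈t⁻¹⌉₊ ≤ q := ceil_inv_le_of_eq_div ht.1 htq
  have hceil1 : 1 < ⌈t⁻¹⌉₊ := Nat.lt_ceil.2 (by simpa using (one_lt_inv₀ ht.1).2 ht.2)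
  exact ⟨u, q, hceil1.trans_le hceil, huq, htq, htle, hceil⟩

lemma IsAdmissible.cauchySeq_sineSum {t : ℝ} (h : IsAdmissible n Δ m α t)
    (ht : t ∈ Set.Ioo (0 : ℝ) 1) (hn : 2 ≤ n) (hodd : Odd n) (hΔ0 : 0 < Δ) (hΔ1 : Δ ≤ 1)
    (y : ℝ) : CauchySeq (sineSum n t y) := by
  rcases h.exists_nat ht with hB | ⟨u, q, hq, -, rfl, -⟩
  · have hη : 0 < Δ / 2 ^ (n - 1) := by positivity
    obtain ⟨C, -, hbound⟩ :=
      exists_abs_sineSum_sub_le_of_mem_Bset hn hΔ1 (half_pos hη) (half_lt_self hη) (m := m) (α := α)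
    have hlim := ((tendsto_rpow_neg_atTop (half_pos hη)).comp
      tendsto_natCast_atTop_atTop).const_mul C
    rw [mul_zero] at hlim
    refine cauchySeq_of_abs_sub_le (N := ⌈m * t ^ (-α)⌉₊ + 1) hlim fun a b ha hab => ?_
    exact hbound t hB y a b (by lia) (Nat.ceil_le.1 (by lia)) hab
  · have : NeZero q := ⟨by lia⟩
    exact cauchySeq_sineSum_intCast_div_natCast n u q hodd y

lemma exists_tendsto_sineSum_of_isAdmissible (hn : 2 ≤ n) (hodd : Odd n) (hΔ0 : 0 < Δ)
    (hΔ1 : Δ < 1) (hm : 1 ≤ m) (hα0 : 0 < α) {β : ℝ} (hαβ : α < β) (hβ1 : β ≤ 1) {η : ℝ}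
    (hη : 0 < η) (hηΔ : η < Δ / 2 ^ (n - 1)) :
    ∃ C > (0 : ℝ), ∀ᶠ t : ℝ in nhdsWithin 0 (Set.Ioi 0), IsAdmissible n Δ m α t → ∀ y : ℝ,
      ∃ l : ℝ, Tendsto (sineSum n t y) atTop (nhds l) ∧
        |l - sineSum n t y ⌈t ^ (-β)⌉₊| ≤ C * t ^ (β * η) := by
  obtain ⟨C₁, hC₁, hB⟩ := exists_abs_sineSum_sub_le_of_mem_Bset hn hΔ1.le hη hηΔ (m := m) (α := α)
  obtain ⟨C₂, -, hrat⟩ :=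
    exists_abs_sineSum_sub_le_of_eq_div hn hodd hΔ0 hΔ1 hm hα0 (hαβ.le.trans hβ1) hη hηΔ
  refine ⟨max C₁ C₂, by positivity, ?_⟩
  filter_upwards [Ioo_mem_nhdsGT one_pos, eventually_mul_rpow_le m (sub_pos.2 hαβ) one_pos]
    with t ht htm hadm y
  obtain ⟨l, hl⟩ :=
    cauchySeq_tendsto_of_complete (hadm.cauchySeq_sineSum ht hn hodd hΔ0 hΔ1.le y)
  refine ⟨l, hl, le_of_tendsto (hl.sub_const _).abs (eventually_atTop.2 ⟨⌈t ^ (-β)⌉₊, ?_⟩)⟩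
  intro b hb
  set a := ⌈t ^ (-β)⌉₊
  have ht0 : 0 < t := ht.1
  have haβ : t ^ (-β) ≤ a := Nat.le_ceil _
  have ha : 1 ≤ a := Nat.one_le_ceil_iff.2 (by positivity)
  have hMa : m * t ^ (-α) ≤ a := by
    refine le_trans ?_ haβ
    calc (m : ℝ) * t ^ (-α) = m * t ^ (β - α) * t ^ (-β) := by
          rw [mul_assoc, ← Real.rpow_add ht0]; ring_nf
      _ ≤ 1 * t ^ (-β) := by gcongr
      _ = t ^ (-β) := one_mul _
  have ha_inv : a ≤ ⌈t⁻¹⌉₊ := by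
    refine Nat.ceil_mono ?_
    rw [← Real.rpow_neg_one]
    exact Real.rpow_le_rpow_of_exponent_ge ht0 ht.2.le (by linarith)
  have hmax : |sineSum n t y b - sineSum n t y a| ≤ max C₁ C₂ * (a : ℝ) ^ (-η) := by
    rcases hadm.exists_nat ht with htB | ⟨u, q, hq, huq, htq, htle, hceil⟩
    · exact (hB t htB y a b ha hMa hb).trans (by gcongr; exact le_max_left _ _)
    · exact (hrat t u q ht0 hq huq htq htle y a b ha hMa (ha_inv.trans hceil) hb).trans
        (by gcongr; exact le_max_right _ _)
  refine hmax.trans (mul_le_mul_of_nonneg_left ?_ (by positivity))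
  calc (a : ℝ) ^ (-η) ≤ (t ^ (-β)) ^ (-η) :=
        Real.rpow_le_rpow_of_nonpos (by positivity) haβ (by linarith)
    _ = t ^ (β * η) := by rw [← Real.rpow_mul ht0.le]; ring_nf

end Admissible

section MiddleRange

lemma add_one_pow_sub_pow_le_of_le (n : ℕ) {x y : ℝ} (hx : 0 ≤ x) (hxy : x ≤ y) :
    (x + 1) ^ n - x ^ n ≤ (y + 1) ^ n - y ^ n := by
  induction n with
  | zero => simp
  | succ n ih =>
    have hsplit (z : ℝ) :
        (z + 1) ^ (n + 1) - z ^ (n + 1) = z * ((z + 1) ^ n - z ^ n) + (z + 1) ^ n := by ring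
    have : 0 ≤ (x + 1) ^ n - x ^ n := sub_nonneg.2 (by gcongr; linarith)
    have : 0 ≤ y := hx.trans hxy
    rw [hsplit, hsplit]
    gcongr

lemma pow_pred_le_add_one_pow_sub_pow {n : ℕ} (hn : n ≠ 0) {x : ℝ} (hx : 0 ≤ x) :
    x ^ (n - 1) ≤ (x + 1) ^ n - x ^ n := by
  obtain ⟨d, rfl⟩ := Nat.exists_eq_succ_of_ne_zero hn
  have : x ^ d ≤ (x + 1) ^ d := by gcongr; linarith
  simp only [Nat.succ_eq_add_one, Nat.add_sub_cancel, pow_succ]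
  nlinarith

lemma add_one_pow_sub_pow_le (n : ℕ) {x : ℝ} (hx : 0 ≤ x) :
    (x + 1) ^ n - x ^ n ≤ n * (x + 1) ^ (n - 1) := by
  have h := abs_pow_sub_pow_le (x + 1) x n
  rw [abs_of_nonneg (by linarith : 0 ≤ x + 1), abs_of_nonneg hx, max_eq_left (by linarith),
    add_sub_cancel_left, abs_one, one_mul] at h
  exact (le_abs_self _).trans h

lemma abs_sineSum_sub_le_of_phase_diff (n : ℕ) {t y δ : ℝ} (ht : 0 ≤ t) (hδ : 0 < δ) {a b : ℕ}
    (ha : 1 ≤ a) (hab : a ≤ b) (hlow : δ ≤ y + t * (((a : ℝ) + 1) ^ n - (a : ℝ) ^ n))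
    (hupp : y + t * (((b : ℝ) + 1) ^ n - (b : ℝ) ^ n) ≤ 1 - δ) :
    |sineSum n t y b - sineSum n t y a| ≤ 2 / δ ^ 2 / a := by
  refine (abs_sineSum_sub_le_norm_sum n t y ha hab).trans
    (norm_sum_Ico_div_natCast_le (fun k => ee (t * (k : ℝ) ^ n + y * k)) ha hab fun j haj hjb => ?_)
  have hdiff (k : ℕ) : t * ((k + 1 : ℕ) : ℝ) ^ n + y * (k + 1 : ℕ) - (t * (k : ℝ) ^ n + y * k) =
      y + t * (((k : ℝ) + 1) ^ n - (k : ℝ) ^ n) := by push_cast; ring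
  have hmono {k l : ℕ} (hkl : k ≤ l) : y + t * (((k : ℝ) + 1) ^ n - (k : ℝ) ^ n) ≤
      y + t * (((l : ℝ) + 1) ^ n - (l : ℝ) ^ n) := by
    have := add_one_pow_sub_pow_le_of_le n (Nat.cast_nonneg k) (Nat.cast_le (α := ℝ).2 hkl)
    gcongr
  refine norm_sum_ee_le_of_monotone_diff (fun k : ℕ => t * (k : ℝ) ^ n + y * k) hδ haj
    (fun k hak hkj => ?_) fun k _ _ => ?_
  · rw [hdiff]
    exact ⟨hlow.trans (hmono hak), (hmono (hkj.trans hjb)).trans hupp⟩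
  · rw [hdiff, hdiff (k + 1)]
    exact hmono k.le_succ

lemma eventually_mul_add_one_pow_sub_pow_le {n : ℕ} (hn : 1 ≤ n) {β : ℝ} (hβ0 : 0 ≤ β)
    (hβ : β * (n - 1) < 1) {c : ℝ} (hc : 0 < c) :
    ∀ᶠ t : ℝ in nhdsWithin 0 (Set.Ioi 0),
      t * (((⌈t ^ (-β)⌉₊ : ℝ) + 1) ^ n - (⌈t ^ (-β)⌉₊ : ℝ) ^ n) ≤ c := by
  filter_upwards [Ioc_mem_nhdsGT one_pos,
    eventually_mul_rpow_le (n * 3 ^ (n - 1)) (sub_pos.2 hβ) hc] with t ht htc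
  obtain ⟨ht0, ht1⟩ := ht
  set N := ⌈t ^ (-β)⌉₊
  have hone : 1 ≤ t ^ (-β) := Real.one_le_rpow_of_pos_of_le_one_of_nonpos ht0 ht1 (by linarith)
  have hN : (N : ℝ) < t ^ (-β) + 1 := Nat.ceil_lt_add_one (by positivity)
  calc t * (((N : ℝ) + 1) ^ n - (N : ℝ) ^ n) ≤ t * (n * ((N : ℝ) + 1) ^ (n - 1)) := by
        gcongr; exact add_one_pow_sub_pow_le n (by positivity)
    _ ≤ t * (n * (3 * t ^ (-β)) ^ (n - 1)) := by gcongr; linarith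
    _ = n * 3 ^ (n - 1) * (t * (t ^ (-β)) ^ (n - 1)) := by rw [mul_pow]; ring
    _ = n * 3 ^ (n - 1) * t ^ (1 - β * (n - 1)) := by
        rw [← Real.rpow_mul_natCast ht0.le, ← Real.rpow_one_add' ht0.le] <;>
          rw [Nat.cast_sub hn, Nat.cast_one, neg_mul, ← sub_eq_add_neg]
        exact (sub_pos.2 hβ).ne'
    _ ≤ c := htc

end MiddleRange

section HeadScale

/-- The scale separating the head `k < N` of the sine sum from its middle range: `τ` is
`t^{1/(3n-2)}` and `N` is `τ⁻³` rounded up, which makes both `1/N` and `tN^{n-1}` of size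
at most `τ` while `t N^n` is still large. -/
structure IsHeadScale (n : ℕ) (t τ : ℝ) (N : ℕ) : Prop where
  pos : 0 < τ
  le_one : τ ≤ 1
  mul_sq : t * τ ^ 2 = τ ^ (3 * n)
  one_le : 1 ≤ N * τ ^ 3
  le_two : N * τ ^ 3 ≤ 2

lemma isHeadScale_rpow {n : ℕ} (hn : 1 ≤ n) {t : ℝ} (ht : t ∈ Set.Ioc (0 : ℝ) 1) :
    IsHeadScale n t (t ^ (3 * n - 2 : ℝ)⁻¹) ⌈t ^ (-(3 * (3 * n - 2 : ℝ)⁻¹))⌉₊ := by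
  obtain ⟨ht0, ht1⟩ := ht
  have hn1 : (1 : ℝ) ≤ n := by exact_mod_cast hn
  have hden : (0 : ℝ) < 3 * n - 2 := by linarith
  set κ : ℝ := (3 * n - 2)⁻¹
  have hκ0 : 0 < κ := inv_pos.2 hden
  have hτ1 : t ^ κ ≤ 1 := Real.rpow_le_one ht0.le ht1 hκ0.le
  have hcube : t ^ (-(3 * κ)) * (t ^ κ) ^ 3 = 1 := by
    rw [← Real.rpow_natCast, ← Real.rpow_mul ht0.le, ← Real.rpow_add ht0]
    push_cast
    rw [show -(3 * κ) + κ * 3 = 0 by ring, Real.rpow_zero]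
  refine ⟨by positivity, hτ1, ?_, ?_, ?_⟩
  · rw [← Real.rpow_natCast, ← Real.rpow_natCast, ← Real.rpow_mul ht0.le, ← Real.rpow_mul ht0.le,
      ← Real.rpow_one_add' ht0.le (by positivity)]
    congr 1
    push_cast
    linarith [inv_mul_cancel₀ hden.ne']
  · rw [← hcube]
    gcongr
    exact Nat.le_ceil _
  · calc (⌈t ^ (-(3 * κ))⌉₊ : ℝ) * (t ^ κ) ^ 3 ≤ (t ^ (-(3 * κ)) + 1) * (t ^ κ) ^ 3 := by
          gcongr; exact (Nat.ceil_lt_add_one (by positivity)).le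
      _ = 1 + (t ^ κ) ^ 3 := by rw [add_mul, hcube, one_mul]
      _ ≤ 2 := by linarith [pow_le_one₀ (n := 3) (by positivity) hτ1]

namespace IsHeadScale

variable {n N : ℕ} {t τ : ℝ}

lemma base_pos (h : IsHeadScale n t τ N) : 0 < t := by
  have hτ := h.pos
  exact pos_of_mul_pos_left (by rw [h.mul_sq]; positivity) (by positivity)

lemma cutoff_pos (h : IsHeadScale n t τ N) : 0 < N := by
  rcases N.eq_zero_or_pos with rfl | hN
  · simpa using zero_lt_one.trans_le h.one_le
  · exact hN

lemma mul_pow_pred_eq (h : IsHeadScale n t τ N) (hn : 1 ≤ n) :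
    t * (N : ℝ) ^ (n - 1) = τ * (N * τ ^ 3) ^ (n - 1) := by
  have hτ := h.pos
  obtain ⟨d, rfl⟩ := Nat.exists_eq_add_of_le' hn
  refine mul_right_cancel₀ (pow_ne_zero 2 hτ.ne') ?_
  rw [mul_right_comm, h.mul_sq, Nat.add_sub_cancel]
  ring

lemma le_mul_pow_pred (h : IsHeadScale n t τ N) (hn : 1 ≤ n) : τ ≤ t * (N : ℝ) ^ (n - 1) := by
  rw [h.mul_pow_pred_eq hn]
  exact le_mul_of_one_le_right h.pos.le (one_le_pow₀ h.one_le)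

lemma mul_pow_pred_le (h : IsHeadScale n t τ N) (hn : 1 ≤ n) :
    t * (N : ℝ) ^ (n - 1) ≤ 2 ^ (n - 1) * τ := by
  have hτ := h.pos
  rw [h.mul_pow_pred_eq hn, mul_comm]
  gcongr
  exact h.le_two

lemma one_le_mul_pow_mul_sq (h : IsHeadScale n t τ N) : 1 ≤ t * (N : ℝ) ^ n * τ ^ 2 := by
  rw [mul_right_comm, h.mul_sq, pow_mul, ← mul_pow, mul_comm]
  exact one_le_pow₀ h.one_le

lemma one_div_le (h : IsHeadScale n t τ N) : 1 / (N : ℝ) ≤ τ := by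
  have hN : (0 : ℝ) < N := by exact_mod_cast h.cutoff_pos
  have hτ := h.pos
  rw [div_le_iff₀ hN]
  calc 1 ≤ N * τ ^ 3 := h.one_le
    _ ≤ N * τ ^ 1 := by gcongr N * ?_; exact pow_le_pow_of_le_one hτ.le h.le_one (by simp)
    _ = τ * N := by ring

lemma mul_one_add_log_le (h : IsHeadScale n t τ N) : τ * (1 + Real.log N) ≤ 7 := by
  have hN : (0 : ℝ) < N := by exact_mod_cast h.cutoff_pos
  have hτ := h.pos
  have hlog : Real.log N ≤ Real.log (2 * τ⁻¹ ^ 3) :=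
    Real.log_le_log hN <| by
      rw [inv_pow, ← div_eq_mul_inv, le_div_iff₀ (by positivity)]
      exact h.le_two
  rw [Real.log_mul two_ne_zero (by positivity), Real.log_pow, Nat.cast_ofNat] at hlog
  have hlogτ : Real.log τ⁻¹ ≤ τ⁻¹ := (Real.log_le_sub_one_of_pos (by positivity)).trans (by simp)
  have hlog2 : Real.log 2 ≤ 1 := (Real.log_le_sub_one_of_pos two_pos).trans (by norm_num)
  calc τ * (1 + Real.log N) ≤ τ * (1 + (1 + 3 * τ⁻¹)) := by gcongr; linarith
    _ = 2 * τ + 3 := by field_simp; ring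
    _ ≤ 7 := by linarith [h.le_one]

lemma rpow_inv_le (h : IsHeadScale n t τ N) (hn : 2 ≤ n) : t ^ (n : ℝ)⁻¹ ≤ τ ^ 2 := by
  have hτ := h.pos
  have hle : t ≤ (τ ^ 2) ^ n := by
    refine le_of_mul_le_mul_right ?_ (pow_pos hτ 2)
    rw [h.mul_sq, ← pow_mul, ← pow_add]
    exact pow_le_pow_of_le_one hτ.le h.le_one (by lia)
  calc t ^ (n : ℝ)⁻¹ ≤ ((τ ^ 2) ^ n) ^ (n : ℝ)⁻¹ := by gcongr; exact h.base_pos.le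
    _ = τ ^ 2 := Real.pow_rpow_inv_natCast (by positivity) (by lia)

lemma abs_sineSum_sub_le_of_abs_le (h : IsHeadScale n t τ N) (hn : 1 ≤ n) (hτ4 : τ ≤ 1 / 4) {y : ℝ}
    (hy : |y| ≤ τ / 4) {b : ℕ} (hNb : N ≤ b)
    (hb : t * (((b : ℝ) + 1) ^ n - (b : ℝ) ^ n) ≤ 1 / 4) :
    |sineSum n t y b - sineSum n t y N| ≤ 8 * τ := by
  have hτ := h.pos
  have hN : (0 : ℝ) < N := by exact_mod_cast h.cutoff_pos
  obtain ⟨hy1, hy2⟩ := abs_le.1 hy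
  have hdiff : t * (N : ℝ) ^ (n - 1) ≤ t * (((N : ℝ) + 1) ^ n - (N : ℝ) ^ n) :=
    mul_le_mul_of_nonneg_left (pow_pred_le_add_one_pow_sub_pow (by lia) hN.le) h.base_pos.le
  refine (abs_sineSum_sub_le_of_phase_diff n h.base_pos.le (half_pos hτ) h.cutoff_pos hNb
    (by linarith [h.le_mul_pow_pred hn]) (by linarith)).trans ?_
  rw [div_le_iff₀ hN, div_le_iff₀ (by positivity)]
  linarith [h.one_le]

lemma abs_sineSum_sub_le_of_mem_Icc (h : IsHeadScale n t τ N) {c y : ℝ} (hc : 0 < c)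
    (hy : y ∈ Set.Icc c (1 - c)) {b : ℕ} (hNb : N ≤ b)
    (hb : t * (((b : ℝ) + 1) ^ n - (b : ℝ) ^ n) ≤ c / 2) :
    |sineSum n t y b - sineSum n t y N| ≤ 2 / (c / 2) ^ 2 * τ := by
  have hdiff : 0 ≤ t * (((N : ℝ) + 1) ^ n - (N : ℝ) ^ n) :=
    mul_nonneg h.base_pos.le (sub_nonneg.2 (by gcongr; linarith))
  refine (abs_sineSum_sub_le_of_phase_diff n h.base_pos.le (half_pos hc) h.cutoff_pos hNb
    (by linarith [hy.1]) (by linarith [hy.2])).trans ?_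
  rw [div_eq_mul_one_div _ (N : ℝ)]
  gcongr
  exact h.one_div_le

end IsHeadScale

end HeadScale

section Sawtooth

lemma norm_sum_ee_mul_natCast_le {c y : ℝ} (hc : 0 < c) (hy : y ∈ Set.Icc c (1 - c)) {a b : ℕ}
    (hab : a ≤ b) : ‖∑ k ∈ Ico a b, ee (y * k)‖ ≤ 1 / (2 * c) := by
  rw [le_div_iff₀ (by positivity)]
  nlinarith [norm_sum_ee_mul_natCast_mul_distInt_le y hab, le_distInt_of_mem_Icc hy,
    norm_nonneg (∑ k ∈ Ico a b, ee (y * k))]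

lemma norm_sum_ee_div_natCast_le {c y : ℝ} (hc : 0 < c) (hy : y ∈ Set.Icc c (1 - c)) {a b : ℕ}
    (ha : 1 ≤ a) (hab : a ≤ b) : ‖∑ k ∈ Ico a b, ee (y * k) / k‖ ≤ 1 / (2 * c) / a :=
  norm_sum_Ico_div_natCast_le (fun k => ee (y * k)) ha hab
    fun _ haj _ => norm_sum_ee_mul_natCast_le hc hy haj

lemma one_sub_ee (y : ℝ) : 1 - ee y = ((2 * Real.sin (Real.pi * y) : ℝ) : ℂ) *
    (Complex.cos ↑(Real.pi * y - Real.pi / 2) +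
      Complex.sin ↑(Real.pi * y - Real.pi / 2) * Complex.I) := by
  have htwo : 2 * Real.pi * y = 2 * (Real.pi * y) := by ring
  rw [← Complex.ofReal_cos, ← Complex.ofReal_sin, Real.cos_sub_pi_div_two,
    Real.sin_sub_pi_div_two]
  apply Complex.ext
  · simp only [Complex.sub_re, Complex.one_re, ee_re, htwo, Real.cos_two_mul, Real.cos_sq',
      Complex.re_ofReal_mul, Complex.add_re, Complex.ofReal_re, Complex.re_ofReal_mul,
      Complex.I_re]
    ring
  · simp only [Complex.sub_im, Complex.one_im, ee_im, htwo, Real.sin_two_mul,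
      Complex.im_ofReal_mul, Complex.add_im, Complex.ofReal_im, Complex.I_im]
    ring

lemma sin_pi_mul_pos {y : ℝ} (hy : y ∈ Set.Ioo (0 : ℝ) 1) : 0 < Real.sin (Real.pi * y) :=
  Real.sin_pos_of_pos_of_lt_pi (mul_pos Real.pi_pos hy.1) (by nlinarith [Real.pi_pos, hy.2])

lemma arg_one_sub_ee {y : ℝ} (hy : y ∈ Set.Ioo (0 : ℝ) 1) :
    (1 - ee y).arg = Real.pi * y - Real.pi / 2 := by
  have := sin_pi_mul_pos hy
  rw [one_sub_ee, Complex.arg_mul_cos_add_sin_mul_I (by positivity)]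
  constructor <;> nlinarith [Real.pi_pos, hy.1, hy.2]

lemma one_sub_ee_mem_slitPlane {y : ℝ} (hy : y ∈ Set.Ioo (0 : ℝ) 1) :
    1 - ee y ∈ Complex.slitPlane := by
  have := sin_pi_mul_pos hy
  refine Or.inl ?_
  rw [one_sub_ee, Complex.re_ofReal_mul, Complex.add_re, Complex.mul_I_re, Complex.sin_ofReal_im,
    neg_zero, add_zero, Complex.cos_ofReal_re, Real.cos_sub_pi_div_two]
  positivity

lemma exists_mem_Icc_of_mem_Ioo {y : ℝ} (hy : y ∈ Set.Ioo (0 : ℝ) 1) :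
    ∃ c > 0, y ∈ Set.Icc c (1 - c) :=
  ⟨min y (1 - y), lt_min hy.1 (sub_pos.2 hy.2), min_le_left _ _,
    le_sub_comm.1 (min_le_right _ _)⟩

lemma cauchySeq_sum_ee_div_natCast {y : ℝ} (hy : y ∈ Set.Ioo (0 : ℝ) 1) :
    CauchySeq (fun K => ∑ k ∈ range K, ee (y * k) / k) := by
  obtain ⟨c, hc, hyc⟩ := exists_mem_Icc_of_mem_Ioo hy
  rw [Metric.cauchySeq_iff']
  intro ε hε
  obtain ⟨N, hN⟩ := ((tendsto_const_div_atTop_nhds_zero_nat (1 / (2 * c))).eventually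
    (gt_mem_nhds hε)).exists_forall_of_atTop
  refine ⟨max 1 N, fun b hb => ?_⟩
  rw [dist_eq_norm, ← sum_Ico_eq_sub _ hb]
  exact (norm_sum_ee_div_natCast_le hc hyc (le_max_left _ _) hb).trans_lt
    (hN _ (le_max_right _ _))

/-- The logarithmic series on its circle of convergence, by Abel's limit theorem. -/
lemma tendsto_sum_ee_div_natCast {y : ℝ} (hy : y ∈ Set.Ioo (0 : ℝ) 1) :
    Tendsto (fun K => ∑ k ∈ range K, ee (y * k) / k) atTop (nhds (-Complex.log (1 - ee y))) := by
  obtain ⟨l, hl⟩ := cauchySeq_tendsto_of_complete (cauchySeq_sum_ee_div_natCast hy)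
  have habel := Complex.tendsto_tsum_powerSeries_nhdsWithin_lt hl
  have hlim : Tendsto (fun x : ℝ => -Complex.log (1 - x * ee y)) (nhdsWithin 1 (Set.Iio 1))
      (nhds (-Complex.log (1 - ee y))) := by
    have hcont : ContinuousAt (fun x : ℝ => -Complex.log (1 - x * ee y)) 1 :=
      (ContinuousAt.clog (by fun_prop) (by simpa using one_sub_ee_mem_slitPlane hy)).neg
    simpa using hcont.tendsto.mono_left (nhdsWithin_le_nhds (s := Set.Iio 1))
  suffices l = -Complex.log (1 - ee y) by rwa [this] at hl
  rw [tendsto_map'_iff] at habel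
  refine tendsto_nhds_unique (habel.congr' ?_) hlim
  filter_upwards [Ioo_mem_nhdsLT one_pos] with x hx
  have hnorm : ‖(x : ℂ) * ee y‖ < 1 := by
    rw [norm_mul, norm_ee, mul_one, Complex.norm_real, Real.norm_eq_abs, abs_of_pos hx.1]
    exact hx.2
  rw [← (Complex.hasSum_taylorSeries_neg_log hnorm).tsum_eq]
  refine tsum_congr fun k => ?_
  rw [ee_mul_natCast, mul_pow]
  ring

lemma sineSum_zero_eq_im (n : ℕ) (y : ℝ) {K : ℕ} (hK : 1 ≤ K) :
    sineSum n 0 y K = (1 / Real.pi) * (∑ k ∈ range K, ee (y * k) / k).im := by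
  have hzero : ee (y * (0 : ℕ)) / ((0 : ℕ) : ℂ) = 0 := by simp
  rw [range_eq_Ico, sum_eq_sum_Ico_succ_bot (by lia), hzero, zero_add, zero_add,
    ← sum_sin_div_eq_im, mul_sum]
  unfold sineSum
  refine sum_congr rfl fun k _ => ?_
  rw [zero_mul, zero_add, div_mul_div_comm, one_mul]

lemma tendsto_sineSum_zero (n : ℕ) {y : ℝ} (hy : y ∈ Set.Ioo (0 : ℝ) 1) :
    Tendsto (sineSum n 0 y) atTop (nhds (1 / 2 - y)) := by
  have h := ((Complex.continuous_im.tendsto _).comp (tendsto_sum_ee_div_natCast hy)).const_mul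
    (1 / Real.pi)
  rw [Complex.neg_im, Complex.log_im, arg_one_sub_ee hy] at h
  rw [show 1 / 2 - y = 1 / Real.pi * -(Real.pi * y - Real.pi / 2) by field_simp; ring]
  refine h.congr' ?_
  filter_upwards [eventually_ge_atTop 1] with K hK
  rw [sineSum_zero_eq_im n y hK, Function.comp]

lemma abs_sineSum_zero_sub_le (n : ℕ) {c y : ℝ} (hc : 0 < c) (hy : y ∈ Set.Icc c (1 - c)) {N : ℕ}
    (hN : 1 ≤ N) : |sineSum n 0 y N - (1 / 2 - y)| ≤ 1 / (2 * c) / N := by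
  have hlim : Tendsto (fun b => |sineSum n 0 y N - sineSum n 0 y b|) atTop
      (nhds |sineSum n 0 y N - (1 / 2 - y)|) :=
    (tendsto_const_nhds.sub
      (tendsto_sineSum_zero n ⟨hc.trans_le hy.1, hy.2.trans_lt (by linarith)⟩)).abs
  refine le_of_tendsto hlim ?_
  filter_upwards [eventually_ge_atTop N] with b hb
  rw [abs_sub_comm]
  refine (abs_sineSum_sub_le_norm_sum n 0 y hN hb).trans ?_
  simp only [zero_mul, zero_add]
  exact norm_sum_ee_div_natCast_le hc hy hN hb

end Sawtooth

section Perturbation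

variable {n : ℕ} {t : ℝ}

lemma norm_ee_mul_pow_sub_one_le (ht : 0 ≤ t) (k : ℕ) :
    ‖ee (t * (k : ℝ) ^ n) - 1‖ ≤ 2 * Real.pi * (t * (k : ℝ) ^ n) := by
  have h := norm_ee_sub_ee_le (t * (k : ℝ) ^ n) 0
  rwa [ee_zero, sub_zero, abs_of_nonneg (by positivity)] at h

lemma norm_ee_mul_succ_pow_sub_le (ht : 0 ≤ t) (k : ℕ) :
    ‖ee (t * ((k + 1 : ℕ) : ℝ) ^ n) - ee (t * (k : ℝ) ^ n)‖ ≤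
      2 * Real.pi * (t * (n * ((k + 1 : ℕ) : ℝ) ^ (n - 1))) := by
  have := Real.pi_pos
  refine (norm_ee_sub_ee_le _ _).trans ?_
  rw [← mul_sub, Nat.cast_succ, abs_of_nonneg (mul_nonneg ht (sub_nonneg.2 (by gcongr; linarith)))]
  gcongr
  exact add_one_pow_sub_pow_le n k.cast_nonneg

/-- The weight of `e(yk)` in the difference between the sine sums at `t` and at `0`. -/
noncomputable def chirpWeight (n : ℕ) (t : ℝ) (k : ℕ) : ℂ := (ee (t * (k : ℝ) ^ n) - 1) / k

lemma norm_chirpWeight_le (hn : 1 ≤ n) (ht : 0 ≤ t) {k : ℕ} (hk : 1 ≤ k) :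
    ‖chirpWeight n t k‖ ≤ 2 * Real.pi * (t * (k : ℝ) ^ (n - 1)) := by
  have hk0 : (0 : ℝ) < k := by exact_mod_cast hk
  rw [chirpWeight, norm_div, Complex.norm_natCast, div_le_iff₀ hk0, mul_assoc, mul_assoc t,
    pow_sub_one_mul (by lia)]
  exact norm_ee_mul_pow_sub_one_le ht k

lemma norm_chirpWeight_succ_sub_le (hn : 2 ≤ n) (ht : 0 ≤ t) {k N : ℕ} (hk : 1 ≤ k)
    (hkN : k + 1 ≤ N) :
    ‖chirpWeight n t (k + 1) - chirpWeight n t k‖ ≤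
      2 * Real.pi * (t * ((n + 1) * (N : ℝ) ^ (n - 2))) := by
  obtain ⟨d, rfl⟩ := Nat.exists_eq_add_of_le' hn
  have := Real.pi_pos
  have hk0 : (0 : ℝ) < k := by exact_mod_cast hk
  have hkC : (k : ℂ) ≠ 0 := by exact_mod_cast hk0.ne'
  have hkC' : ((k + 1 : ℕ) : ℂ) ≠ 0 := by exact_mod_cast k.succ_ne_zero
  have hsplit : chirpWeight (d + 2) t (k + 1) - chirpWeight (d + 2) t k =
      (ee (t * ((k + 1 : ℕ) : ℝ) ^ (d + 2)) - ee (t * (k : ℝ) ^ (d + 2)) -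
        chirpWeight (d + 2) t k) / (k + 1 : ℕ) := by
    unfold chirpWeight
    field_simp
    push_cast
    ring
  rw [hsplit, norm_div, Complex.norm_natCast, div_le_iff₀ (by positivity)]
  calc _ ≤ 2 * Real.pi * (t * ((d + 2 : ℕ) * ((k + 1 : ℕ) : ℝ) ^ (d + 1))) +
        2 * Real.pi * (t * (k : ℝ) ^ (d + 1)) :=
        (norm_sub_le _ _).trans (add_le_add (norm_ee_mul_succ_pow_sub_le ht k)
          (norm_chirpWeight_le (by lia) ht hk))
    _ ≤ 2 * Real.pi * (t * ((d + 2 : ℕ) * ((k + 1 : ℕ) : ℝ) ^ (d + 1))) +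
        2 * Real.pi * (t * ((k + 1 : ℕ) : ℝ) ^ (d + 1)) := by gcongr; exact k.le_succ
    _ = 2 * Real.pi * (t * (((d + 2 : ℕ) + 1) * ((k + 1 : ℕ) : ℝ) ^ d)) * (k + 1 : ℕ) := by ring
    _ ≤ 2 * Real.pi * (t * (((d + 2 : ℕ) + 1) * (N : ℝ) ^ d)) * (k + 1 : ℕ) := by gcongr

lemma sineSum_sub_sineSum_zero_eq_im (n : ℕ) (t y : ℝ) (N : ℕ) :
    sineSum n t y N - sineSum n 0 y N =
      (1 / Real.pi) * (∑ k ∈ Ico 1 N, chirpWeight n t k * ee (y * k)).im := by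
  unfold sineSum chirpWeight
  rw [← sum_sub_distrib, Complex.im_sum, mul_sum]
  refine sum_congr rfl fun k _ => ?_
  rw [div_mul_eq_mul_div (ee _ - 1), sub_mul, ← ee_add, one_mul, Complex.div_natCast_im,
    Complex.sub_im, ee_im, ee_im, zero_mul, zero_add, ← sub_div, div_mul_div_comm, one_mul]

lemma abs_sineSum_sub_sineSum_zero_le (hn : 2 ≤ n) (ht : 0 ≤ t) {c y : ℝ} (hc : 0 < c)
    (hy : y ∈ Set.Icc c (1 - c)) {N : ℕ} (hN : 1 ≤ N) :
    |sineSum n t y N - sineSum n 0 y N| ≤ (n + 2) / c * (t * (N : ℝ) ^ (n - 1)) := by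
  have := Real.pi_pos
  have hvar : ∑ k ∈ Ico 1 N, ‖chirpWeight n t (k + 1) - chirpWeight n t k‖ ≤
      2 * Real.pi * (t * ((n + 1) * (N : ℝ) ^ (n - 1))) := by
    calc _ ≤ (#(Ico 1 N)) • (2 * Real.pi * (t * ((n + 1) * (N : ℝ) ^ (n - 2)))) :=
          sum_le_card_nsmul _ _ _ fun k hk => by
            obtain ⟨hk1, hkN⟩ := mem_Ico.1 hk
            exact norm_chirpWeight_succ_sub_le hn ht hk1 hkN
      _ ≤ (N : ℝ) * (2 * Real.pi * (t * ((n + 1) * (N : ℝ) ^ (n - 2)))) := by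
          rw [nsmul_eq_mul, Nat.card_Ico]
          gcongr
          exact Nat.sub_le _ _
      _ = 2 * Real.pi * (t * ((n + 1) * (N : ℝ) ^ (n - 1))) := by
          rw [← pow_sub_one_mul (show n - 1 ≠ 0 by lia) (N : ℝ), Nat.sub_sub]
          ring
  have habel := norm_sum_Ico_mul_le (chirpWeight n t) (fun k => ee (y * k)) hN
    fun _ h1j _ => norm_sum_ee_mul_natCast_le hc hy h1j
  rw [sineSum_sub_sineSum_zero_eq_im, abs_mul, abs_of_pos (by positivity)]
  calc _ ≤ 1 / Real.pi * (1 / (2 * c) * (2 * Real.pi * (t * (N : ℝ) ^ (n - 1)) +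
        2 * Real.pi * (t * ((n + 1) * (N : ℝ) ^ (n - 1))))) := by
        gcongr
        refine (Complex.abs_im_le_norm _).trans (habel.trans ?_)
        gcongr
        exact norm_chirpWeight_le (by lia) ht hN
    _ = (n + 2) / c * (t * (N : ℝ) ^ (n - 1)) := by field_simp; ring

lemma IsHeadScale.abs_sineSum_sub_sawtooth_le {τ : ℝ} {N : ℕ} (h : IsHeadScale n t τ N)
    (hn : 2 ≤ n) {c y : ℝ} (hc : 0 < c) (hy : y ∈ Set.Icc c (1 - c)) :
    |sineSum n t y N - (1 / 2 - y)| ≤ ((n + 2) / c * 2 ^ (n - 1) + 1 / (2 * c)) * τ := by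
  have hN : 1 ≤ N := h.cutoff_pos
  calc |sineSum n t y N - (1 / 2 - y)|
      ≤ |sineSum n t y N - sineSum n 0 y N| + |sineSum n 0 y N - (1 / 2 - y)| := abs_sub_le _ _ _
    _ ≤ (n + 2) / c * (t * (N : ℝ) ^ (n - 1)) + 1 / (2 * c) * (1 / N) := by
        rw [mul_one_div]
        exact add_le_add (abs_sineSum_sub_sineSum_zero_le hn h.base_pos.le hc hy hN)
          (abs_sineSum_zero_sub_le n hc hy hN)
    _ ≤ (n + 2) / c * (2 ^ (n - 1) * τ) + 1 / (2 * c) * τ := by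
        gcongr ?_ * ?_ + ?_ * ?_
        exacts [h.mul_pow_pred_le (by lia), h.one_div_le]
    _ = _ := by ring

end Perturbation

section SincKernel

/-- The function `sin (2π (t yⁿ + r y)) / y`, extended continuously by `2πr` at `y = 0`. Writing it
through `Real.sinc` makes its continuity immediate. -/
noncomputable def sincKernel (n : ℕ) (t r y : ℝ) : ℝ :=
  2 * Real.pi * (t * y ^ (n - 1) + r) * Real.sinc (2 * Real.pi * (t * y ^ n + r * y))

lemma continuous_sincKernel (n : ℕ) (t r : ℝ) : Continuous (sincKernel n t r) := by
  have := Real.continuous_sinc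
  unfold sincKernel
  fun_prop

lemma intervalIntegrable_sincKernel (n : ℕ) (t r a b : ℝ) :
    IntervalIntegrable (sincKernel n t r) volume a b :=
  (continuous_sincKernel n t r).intervalIntegrable a b

variable {n : ℕ}

lemma mul_pow_add_mul_eq (hn : 1 ≤ n) (t r y : ℝ) :
    t * y ^ n + r * y = (t * y ^ (n - 1) + r) * y := by
  rw [add_mul, mul_assoc, pow_sub_one_mul (by lia)]

lemma sincKernel_of_ne_zero (hn : 1 ≤ n) (t r : ℝ) {y : ℝ} (hy : y ≠ 0) :
    sincKernel n t r y = Real.sin (2 * Real.pi * (t * y ^ n + r * y)) / y := by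
  rw [sincKernel, mul_pow_add_mul_eq hn]
  by_cases h : t * y ^ (n - 1) + r = 0
  · simp [h]
  · have := Real.pi_pos
    rw [Real.sinc_of_ne_zero (by positivity)]
    field_simp

lemma sincKernel_zero (hn : 2 ≤ n) (t r : ℝ) : sincKernel n t r 0 = 2 * Real.pi * r := by
  simp [sincKernel, zero_pow (by lia : n ≠ 0), zero_pow (by lia : n - 1 ≠ 0)]

lemma sincKernel_neg (hodd : Odd n) (t r y : ℝ) : sincKernel n t r (-y) = sincKernel n t r y := by
  have heven : Even (n - 1) := Nat.Odd.sub_odd hodd odd_one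
  have harg : 2 * Real.pi * (t * -y ^ n + r * -y) = -(2 * Real.pi * (t * y ^ n + r * y)) := by ring
  rw [sincKernel, heven.neg_pow, hodd.neg_pow, harg, Real.sinc_neg, sincKernel]

lemma sincKernel_pow_mul (hn : 1 ≤ n) (l s y : ℝ) :
    sincKernel n (l ^ n) (s * l) y = l * sincKernel n 1 s (l * y) := by
  have harg : l ^ n * y ^ n + s * l * y = 1 * (l * y) ^ n + s * (l * y) := by ring
  rw [sincKernel, sincKernel, harg, ← pow_sub_one_mul (by lia : n ≠ 0) l]
  ring

lemma integral_sincKernel_pow_mul (hn : 1 ≤ n) (l s Y : ℝ) :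
    ∫ y in (0 : ℝ)..Y, sincKernel n (l ^ n) (s * l) y =
      ∫ z in (0 : ℝ)..(l * Y), sincKernel n 1 s z := by
  simp_rw [sincKernel_pow_mul hn]
  rw [intervalIntegral.integral_const_mul, intervalIntegral.mul_integral_comp_mul_left, mul_zero]

lemma Jint_eq_integral_sincKernel (hn : 2 ≤ n) (s R : ℝ) :
    Jint n s R = ∫ y in (-R)..R, sincKernel n 1 s y := by
  rw [Jint]
  congr 1 with y
  split_ifs with h
  · rw [h, sincKernel_zero hn]
  · rw [sincKernel_of_ne_zero (by lia) _ _ h, one_mul]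

lemma one_div_two_pi_mul_Jint (hn : 2 ≤ n) (hodd : Odd n) (s R : ℝ) :
    1 / (2 * Real.pi) * Jint n s R = 1 / Real.pi * ∫ y in (0 : ℝ)..R, sincKernel n 1 s y := by
  have hneg : ∫ y in (-R)..0, sincKernel n 1 s y = ∫ y in (0 : ℝ)..R, sincKernel n 1 s y := by
    rw [← neg_zero, ← intervalIntegral.integral_comp_neg, neg_zero]
    simp_rw [sincKernel_neg hodd]
  rw [Jint_eq_integral_sincKernel hn, ← intervalIntegral.integral_add_adjacent_intervals
    (intervalIntegrable_sincKernel n 1 s (-R) 0) (intervalIntegrable_sincKernel n 1 s 0 R), hneg]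
  have := Real.pi_pos
  field_simp
  ring

end SincKernel

section OscillatoryIntegral

lemma abs_integral_mul_deriv_le {u u' v v' : ℝ → ℝ} {a b M : ℝ} (hab : a ≤ b)
    (hu : ∀ x ∈ Set.uIcc a b, HasDerivAt u (u' x) x)
    (hv : ∀ x ∈ Set.uIcc a b, HasDerivAt v (v' x) x) (hu' : IntervalIntegrable u' volume a b)
    (hv' : IntervalIntegrable v' volume a b) (hub : 0 ≤ u b)
    (hanti : ∀ x ∈ Set.Icc a b, u' x ≤ 0) (hvM : ∀ x ∈ Set.Icc a b, |v x| ≤ M) :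
    |∫ x in a..b, u x * v' x| ≤ 2 * M * u a := by
  have hbound : |∫ x in a..b, u' x * v x| ≤ (u a - u b) * M := by
    calc |∫ x in a..b, u' x * v x| ≤ ∫ x in a..b, -u' x * M := by
          rw [← Real.norm_eq_abs]
          refine intervalIntegral.norm_integral_le_of_norm_le hab
            (Eventually.of_forall fun x hx => ?_) (hu'.neg.mul_const M)
          have hx' := Set.Ioc_subset_Icc_self hx
          rw [Real.norm_eq_abs, abs_mul, abs_of_nonpos (hanti x hx')]
          exact mul_le_mul_of_nonneg_left (hvM x hx') (neg_nonneg.2 (hanti x hx'))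
      _ = (u a - u b) * M := by
          rw [intervalIntegral.integral_mul_const, intervalIntegral.integral_neg,
            intervalIntegral.integral_eq_sub_of_hasDerivAt hu hu', neg_sub]
  have hle : u b ≤ u a := by
    have hint : 0 ≤ ∫ x in a..b, -u' x :=
      intervalIntegral.integral_nonneg hab fun x hx => neg_nonneg.2 (hanti x hx)
    rw [intervalIntegral.integral_neg,
      intervalIntegral.integral_eq_sub_of_hasDerivAt hu hu'] at hint
    linarith
  have hb : |u b * v b| ≤ u b * M := by
    rw [abs_mul, abs_of_nonneg hub]
    exact mul_le_mul_of_nonneg_left (hvM b (Set.right_mem_Icc.2 hab)) hub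
  have ha : |u a * v a| ≤ u a * M := by
    rw [abs_mul, abs_of_nonneg (hub.trans hle)]
    exact mul_le_mul_of_nonneg_left (hvM a (Set.left_mem_Icc.2 hab)) (hub.trans hle)
  rw [intervalIntegral.integral_mul_deriv_eq_deriv_mul hu hv hu' hv']
  linarith [abs_sub (u b * v b - u a * v a) (∫ x in a..b, u' x * v x),
    abs_sub (u b * v b) (u a * v a)]

variable {n : ℕ} {s a b : ℝ}

lemma pow_le_mul_pow_add_mul (hn : 2 ≤ n) (ha : 1 ≤ a) (hs : -s ≤ a) :
    a ^ n ≤ n * a ^ n + s * a := by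
  have hn' : (2 : ℝ) ≤ n := by exact_mod_cast hn
  have hsq : a ^ 2 ≤ a ^ n := pow_le_pow_right₀ ha hn
  nlinarith

lemma deriv_phase_nonneg (hn : 2 ≤ n) (ha : 1 ≤ a) (hs : -s ≤ a) :
    0 ≤ (n : ℝ) * (n * a ^ (n - 1)) + s := by
  have hn' : (2 : ℝ) ≤ n := by exact_mod_cast hn
  have hle : a ^ 1 ≤ a ^ (n - 1) := pow_le_pow_right₀ ha (by lia)
  have hmul : 1 * (1 * a ^ (n - 1)) ≤ n * (n * a ^ (n - 1)) := by gcongr <;> linarith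
  linarith

lemma sincKernel_one_eq_inv_mul (hn : 2 ≤ n) (ha : 1 ≤ a) (hs : -s ≤ a) :
    sincKernel n 1 s a =
      (n * a ^ n + s * a)⁻¹ *
        (Real.sin (2 * Real.pi * (a ^ n + s * a)) * (n * a ^ (n - 1) + s)) := by
  have hpos : 0 < (n * a ^ (n - 1) + s) * a := by
    rw [← mul_pow_add_mul_eq (by lia)]
    exact (by positivity : 0 < a ^ n).trans_le (pow_le_mul_pow_add_mul hn ha hs)
  have ha0 : 0 < a := by linarith
  have : 0 < n * a ^ (n - 1) + s := pos_of_mul_pos_left hpos ha0.le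
  rw [sincKernel_of_ne_zero (by lia) _ _ ha0.ne', one_mul, mul_pow_add_mul_eq (by lia)]
  field_simp

lemma hasDerivAt_inv_mul_pow_add_mul {y : ℝ} (hy : n * y ^ n + s * y ≠ 0) :
    HasDerivAt (fun y : ℝ => (n * y ^ n + s * y)⁻¹)
      (-((n : ℝ) * (n * y ^ (n - 1)) + s) / (n * y ^ n + s * y) ^ 2) y := by
  have hD := ((hasDerivAt_pow n y).const_mul (n : ℝ)).add ((hasDerivAt_id y).const_mul s)
  rw [mul_one] at hD
  exact hD.inv hy

lemma hasDerivAt_neg_cos_two_pi_mul_div {φ : ℝ → ℝ} {φ' y : ℝ} (hφ : HasDerivAt φ φ' y) :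
    HasDerivAt (fun y => -Real.cos (2 * Real.pi * φ y) / (2 * Real.pi))
      (Real.sin (2 * Real.pi * φ y) * φ') y := by
  refine ((hφ.const_mul (2 * Real.pi)).cos.neg.div_const (2 * Real.pi)).congr_deriv ?_
  have := Real.pi_pos
  field_simp

lemma abs_neg_cos_two_pi_mul_div_le (x : ℝ) :
    |-Real.cos (2 * Real.pi * x) / (2 * Real.pi)| ≤ 1 / 2 := by
  rw [abs_div, abs_neg, abs_of_pos Real.two_pi_pos]
  gcongr
  · exact Real.abs_cos_le_one _
  · linarith [Real.pi_gt_three]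

-- With `φ = yⁿ + s y`, integrate `sin (2πφ) dφ` by parts against the decreasing factor
-- `1 / (y * dφ/dy)`.
lemma abs_integral_sincKernel_le (hn : 2 ≤ n) (ha : 1 ≤ a) (hs : -s ≤ a) (hab : a ≤ b) :
    |∫ y in a..b, sincKernel n 1 s y| ≤ 1 / a ^ n := by
  have hge : ∀ y ∈ Set.Icc a b, 1 ≤ y ∧ -s ≤ y := fun y hy => ⟨ha.trans hy.1, hs.trans hy.1⟩
  have hpos : ∀ y ∈ Set.Icc a b, 0 < n * y ^ n + s * y := fun y hy =>
    (pow_pos (by linarith [(hge y hy).1]) n).trans_le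
      (pow_le_mul_pow_add_mul hn (hge y hy).1 (hge y hy).2)
  have hphase : ∀ y, HasDerivAt (fun y : ℝ => y ^ n + s * y) (n * y ^ (n - 1) + s) y := fun y => by
    simpa using (hasDerivAt_pow n y).fun_add ((hasDerivAt_id y).const_mul s)
  have hcongr : ∀ y ∈ Set.uIcc a b, sincKernel n 1 s y = (n * y ^ n + s * y)⁻¹ *
      (Real.sin (2 * Real.pi * (y ^ n + s * y)) * (n * y ^ (n - 1) + s)) := fun y hy =>
    have hy' := hge y (Set.uIcc_of_le hab ▸ hy)
    sincKernel_one_eq_inv_mul hn hy'.1 hy'.2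
  have hparts := abs_integral_mul_deriv_le hab
    (fun y hy => hasDerivAt_inv_mul_pow_add_mul (hpos y (Set.uIcc_of_le hab ▸ hy)).ne')
    (fun y _ => hasDerivAt_neg_cos_two_pi_mul_div (hphase y))
    (ContinuousOn.intervalIntegrable <| by
      refine ContinuousOn.div (by fun_prop) (by fun_prop) fun y hy => ?_
      exact pow_ne_zero 2 (hpos y (Set.uIcc_of_le hab ▸ hy)).ne')
    (Continuous.intervalIntegrable (by fun_prop) a b)
    (inv_nonneg.2 (hpos b (Set.right_mem_Icc.2 hab)).le)
    (fun y hy => div_nonpos_of_nonpos_of_nonneg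
      (neg_nonpos.2 (deriv_phase_nonneg hn (hge y hy).1 (hge y hy).2)) (sq_nonneg _))
    (fun y _ => abs_neg_cos_two_pi_mul_div_le _)
  rw [intervalIntegral.integral_congr hcongr]
  calc _ ≤ 2 * (1 / 2) * (n * a ^ n + s * a)⁻¹ := hparts
    _ = 1 / (n * a ^ n + s * a) := by ring
    _ ≤ 1 / a ^ n := by gcongr; exact pow_le_mul_pow_add_mul hn ha hs

lemma exists_tendsto_integral_sincKernel (hn : 2 ≤ n) (s : ℝ) :
    ∃ J, Tendsto (fun R : ℝ => 1 / Real.pi * ∫ y in (0 : ℝ)..R, sincKernel n 1 s y) atTop (nhds J) ∧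
      ∀ Z, 1 ≤ Z → -s ≤ Z →
        |1 / Real.pi * (∫ y in (0 : ℝ)..Z, sincKernel n 1 s y) - J| ≤ 1 / Z ^ n := by
  set H : ℝ → ℝ := fun Z => 1 / Real.pi * ∫ y in (0 : ℝ)..Z, sincKernel n 1 s y
  have hpi : 1 / Real.pi ≤ 1 := by
    rw [div_le_one Real.pi_pos]
    linarith [Real.pi_gt_three]
  have htail : ∀ a b, 1 ≤ a → -s ≤ a → a ≤ b → |H b - H a| ≤ 1 / a ^ n := by
    intro a b ha hs hab
    rw [← mul_sub, intervalIntegral.integral_interval_sub_left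
      (intervalIntegrable_sincKernel _ _ _ _ _) (intervalIntegrable_sincKernel _ _ _ _ _),
      abs_mul, abs_of_pos (one_div_pos.2 Real.pi_pos)]
    exact (mul_le_of_le_one_left (abs_nonneg _) hpi).trans (abs_integral_sincKernel_le hn ha hs hab)
  have hcauchy : CauchySeq H := by
    rw [Metric.cauchySeq_iff']
    intro ε hε
    have hlim : Tendsto (fun a : ℝ => 1 / a ^ n) atTop (nhds 0) :=
      (tendsto_pow_atTop (by lia)).const_div_atTop 1
    obtain ⟨a, hlt, ha, hs⟩ := ((hlim.eventually_lt_const hε).and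
      ((eventually_ge_atTop 1).and (eventually_ge_atTop (-s)))).exists
    exact ⟨a, fun b hb => (htail a b ha hs hb).trans_lt hlt⟩
  obtain ⟨J, hJ⟩ := cauchySeq_tendsto_of_complete hcauchy
  refine ⟨J, hJ, fun Z hZ hs => ?_⟩
  rw [abs_sub_comm]
  refine le_of_tendsto (hJ.sub_const (H Z)).abs ?_
  filter_upwards [eventually_ge_atTop Z] with b hb using htail Z b hZ hs hb

end OscillatoryIntegral

section RiemannSum

lemma abs_sum_Ico_sub_integral_le {f : ℝ → ℝ} (hf : Continuous f) {B : ℕ → ℝ} {a b : ℕ}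
    (hab : a ≤ b)
    (hB : ∀ k ∈ Ico a b, ∀ y ∈ Set.Icc (k : ℝ) (k + 1), |f k - f y| ≤ B k) :
    |∑ k ∈ Ico a b, f k - ∫ y in (a : ℝ)..b, f y| ≤ ∑ k ∈ Ico a b, B k := by
  rw [← intervalIntegral.sum_integral_adjacent_intervals_Ico (a := fun k : ℕ => (k : ℝ)) hab
    fun _ _ => hf.intervalIntegrable _ _, ← sum_sub_distrib]
  refine (abs_sum_le_sum_abs _ _).trans (sum_le_sum fun k hk => ?_)
  have hconst : f k - ∫ y in (k : ℝ)..(k + 1 : ℕ), f y =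
      ∫ y in (k : ℝ)..(k + 1 : ℕ), (f k - f y) := by
    rw [intervalIntegral.integral_sub (by simp) (hf.intervalIntegrable _ _)]
    simp
  rw [hconst, ← Real.norm_eq_abs]
  refine (intervalIntegral.norm_integral_le_of_norm_le_const (C := B k) fun y hy => ?_).trans ?_
  · rw [Set.uIoc_of_le (by simp), Nat.cast_succ] at hy
    exact hB k hk y (Set.Ioc_subset_Icc_self hy)
  · simp

lemma sum_Ico_one_div_le (N : ℕ) : ∑ k ∈ Ico 1 N, 1 / (k : ℝ) ≤ 1 + Real.log N := by
  have hharm := harmonic_le_one_add_log N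
  rw [harmonic_eq_sum_Icc] at hharm
  push_cast at hharm
  simp_rw [one_div]
  exact (sum_le_sum_of_subset_of_nonneg Ico_subset_Icc_self fun _ _ _ => by positivity).trans hharm

variable {n : ℕ} {t : ℝ}

lemma abs_mul_pow_add_le (ht : 0 ≤ t) {c : ℝ} (hc : 0 ≤ c) (d : ℕ) (r : ℝ) {y : ℝ} (hy : 0 ≤ y) :
    |2 * Real.pi * (t * (c * y ^ d) + r)| ≤ 2 * Real.pi * (c * (t * y ^ d) + |r|) := by
  rw [abs_mul, abs_of_pos Real.two_pi_pos]
  gcongr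
  refine (abs_add_le _ _).trans_eq ?_
  rw [abs_of_nonneg (by positivity)]
  ring

lemma abs_sincKernel_le (ht : 0 ≤ t) (r : ℝ) {y : ℝ} (hy : 0 ≤ y) :
    |sincKernel n t r y| ≤ 2 * Real.pi * (t * y ^ (n - 1) + |r|) := by
  rw [sincKernel, abs_mul]
  refine (mul_le_of_le_one_right (abs_nonneg _) (Real.abs_sinc_le_one _)).trans ?_
  simpa using abs_mul_pow_add_le ht zero_le_one (n - 1) r hy

lemma hasDerivAt_sincKernel (hn : 1 ≤ n) (r : ℝ) {y : ℝ} (hy : y ≠ 0) :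
    HasDerivAt (sincKernel n t r)
      ((Real.cos (2 * Real.pi * (t * y ^ n + r * y)) * (2 * Real.pi * (t * (n * y ^ (n - 1)) + r))
        - sincKernel n t r y) / y) y := by
  have hphase : HasDerivAt (fun y : ℝ => 2 * Real.pi * (t * y ^ n + r * y))
      (2 * Real.pi * (t * (n * y ^ (n - 1)) + r)) y := by
    simpa using (((hasDerivAt_pow n y).const_mul t).add
      ((hasDerivAt_id y).const_mul r)).const_mul (2 * Real.pi)
  refine ((hphase.sin.div (hasDerivAt_id y) hy).congr_of_eventuallyEq ?_).congr_deriv ?_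
  · filter_upwards [eventually_ne_nhds hy] with z hz using sincKernel_of_ne_zero hn t r hz
  · rw [sincKernel_of_ne_zero hn t r hy]
    simp only [id]
    field_simp

lemma abs_deriv_sincKernel_le (hn : 2 ≤ n) (ht : 0 ≤ t) (r : ℝ) {y : ℝ} (hy : 0 < y) :
    |deriv (sincKernel n t r) y| ≤
      2 * Real.pi * ((n + 1) * (t * y ^ (n - 2)) + 2 * |r| * (1 / y)) := by
  rw [(hasDerivAt_sincKernel (by lia) r hy.ne').deriv, abs_div, abs_of_pos hy, div_le_iff₀ hy]
  have hcos : |Real.cos (2 * Real.pi * (t * y ^ n + r * y)) *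
      (2 * Real.pi * (t * (n * y ^ (n - 1)) + r))| ≤
      2 * Real.pi * (n * (t * y ^ (n - 1)) + |r|) := by
    rw [abs_mul]
    exact (mul_le_of_le_one_left (abs_nonneg _) (Real.abs_cos_le_one _)).trans
      (abs_mul_pow_add_le ht n.cast_nonneg (n - 1) r hy.le)
  calc _ ≤ 2 * Real.pi * (n * (t * y ^ (n - 1)) + |r|) + 2 * Real.pi * (t * y ^ (n - 1) + |r|) :=
        (abs_sub _ _).trans (add_le_add hcos (abs_sincKernel_le ht r hy.le))
    _ = _ := by
        rw [show n - 1 = n - 2 + 1 by lia, pow_succ]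
        field_simp
        ring

lemma abs_sincKernel_sub_le (hn : 2 ≤ n) (ht : 0 ≤ t) (r : ℝ) {k N y : ℝ} (hk : 1 ≤ k)
    (hkN : k + 1 ≤ N) (hy : y ∈ Set.Icc k (k + 1)) :
    |sincKernel n t r k - sincKernel n t r y| ≤
      2 * Real.pi * ((n + 1) * (t * N ^ (n - 2)) + 2 * |r| * (1 / k)) := by
  have hdiff : ∀ x ∈ Set.Icc k (k + 1), DifferentiableAt ℝ (sincKernel n t r) x := fun x hx =>
    (hasDerivAt_sincKernel (by lia) r (by linarith [hx.1])).differentiableAt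
  have hbound : ∀ x ∈ Set.Icc k (k + 1), ‖deriv (sincKernel n t r) x‖ ≤
      2 * Real.pi * ((n + 1) * (t * N ^ (n - 2)) + 2 * |r| * (1 / k)) := fun x hx => by
    have hx0 : 0 < x := by linarith [hx.1]
    refine (abs_deriv_sincKernel_le hn ht r hx0).trans ?_
    gcongr
    · exact hx.2.trans hkN
    · exact hx.1
  refine ((convex_Icc k (k + 1)).norm_image_sub_le_of_norm_deriv_le hdiff hbound hy
    (Set.left_mem_Icc.2 (by linarith))).trans
    (mul_le_of_le_one_right ((norm_nonneg _).trans (hbound y hy)) ?_)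
  rw [Real.norm_eq_abs, abs_le]
  constructor <;> linarith [hy.1, hy.2]

lemma abs_integral_zero_one_sincKernel_le (n : ℕ) (ht : 0 ≤ t) (r : ℝ) :
    |∫ y in (0 : ℝ)..1, sincKernel n t r y| ≤ 2 * Real.pi * (t + |r|) := by
  have hbound : ∀ y ∈ Set.uIoc (0 : ℝ) 1, ‖sincKernel n t r y‖ ≤ 2 * Real.pi * (t + |r|) := by
    intro y hy
    rw [Set.uIoc_of_le zero_le_one] at hy
    refine (abs_sincKernel_le ht r hy.1.le).trans ?_
    gcongr
    exact mul_le_of_le_one_right ht (pow_le_one₀ hy.1.le hy.2)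
  simpa using intervalIntegral.norm_integral_le_of_norm_le_const hbound

lemma abs_sum_sincKernel_sub_integral_le (hn : 2 ≤ n) (ht : 0 ≤ t) (r : ℝ) {N : ℕ} (hN : 1 ≤ N) :
    |∑ k ∈ Ico 1 N, sincKernel n t r k - ∫ y in (0 : ℝ)..N, sincKernel n t r y| ≤
      2 * Real.pi * ((n + 2) * (t * (N : ℝ) ^ (n - 1)) + 3 * (|r| * (1 + Real.log N))) := by
  have hN1 : (1 : ℝ) ≤ N := by exact_mod_cast hN
  have hsum := abs_sum_Ico_sub_integral_le (continuous_sincKernel n t r) hN fun k hk y hy =>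
    abs_sincKernel_sub_le hn ht r (N := N) (by exact_mod_cast (mem_Ico.1 hk).1)
      (by exact_mod_cast (mem_Ico.1 hk).2) hy
  have hsplit := intervalIntegral.integral_add_adjacent_intervals
    (intervalIntegrable_sincKernel n t r 0 1) (intervalIntegrable_sincKernel n t r 1 N)
  have hcount : ((N - 1 : ℕ) : ℝ) * ((n + 1) * (t * (N : ℝ) ^ (n - 2))) ≤
      (n + 1) * (t * (N : ℝ) ^ (n - 1)) :=
    calc _ ≤ (N : ℝ) * ((n + 1) * (t * (N : ℝ) ^ (n - 2))) := by gcongr; exact Nat.sub_le _ _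
      _ = (n + 1) * (t * (N : ℝ) ^ (n - 1)) := by rw [show n - 1 = n - 2 + 1 by lia]; ring
  have hharm : 2 * |r| * ∑ k ∈ Ico 1 N, 1 / (k : ℝ) ≤ 2 * |r| * (1 + Real.log N) := by
    gcongr; exact sum_Ico_one_div_le N
  have ht' : t ≤ t * (N : ℝ) ^ (n - 1) := le_mul_of_one_le_right ht (one_le_pow₀ hN1)
  have hr : |r| ≤ |r| * (1 + Real.log N) :=
    le_mul_of_one_le_right (abs_nonneg _) (by linarith [Real.log_nonneg hN1])
  rw [← mul_sum, sum_add_distrib, sum_const, nsmul_eq_mul, Nat.card_Ico, ← mul_sum,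
    Nat.cast_one] at hsum
  rw [← hsplit, add_comm, ← sub_sub]
  calc _ ≤ 2 * Real.pi * ((n + 1) * (t * (N : ℝ) ^ (n - 1)) + 2 * |r| * (1 + Real.log N))
        + 2 * Real.pi * (t * (N : ℝ) ^ (n - 1) + |r| * (1 + Real.log N)) := by
        refine (abs_sub _ _).trans (add_le_add (hsum.trans ?_)
          ((abs_integral_zero_one_sincKernel_le n ht r).trans ?_)) <;> gcongr
    _ = _ := by ring

lemma sineSum_eq_sum_sincKernel (hn : 1 ≤ n) (t r : ℝ) (N : ℕ) :
    sineSum n t r N = 1 / Real.pi * ∑ k ∈ Ico 1 N, sincKernel n t r k := by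
  rw [sineSum, mul_sum]
  refine sum_congr rfl fun k hk => ?_
  have hk : (k : ℝ) ≠ 0 := by exact_mod_cast Nat.ne_of_gt (mem_Ico.1 hk).1
  rw [sincKernel_of_ne_zero hn _ _ hk, div_mul_div_comm, one_mul]

namespace IsHeadScale

variable {τ : ℝ} {N : ℕ}

lemma abs_sineSum_sub_integral_le (h : IsHeadScale n t τ N) (hn : 2 ≤ n) (s : ℝ) :
    |sineSum n t (s * t ^ (n : ℝ)⁻¹) N -
        1 / Real.pi * ∫ y in (0 : ℝ)..(t ^ (n : ℝ)⁻¹ * N), sincKernel n 1 s y| ≤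
      2 * ((n + 2) * 2 ^ (n - 1) + 21 * |s|) * τ := by
  have hτ := h.pos
  have ht := h.base_pos
  have hln : (t ^ (n : ℝ)⁻¹) ^ n = t := Real.rpow_inv_natCast_pow ht.le (by lia)
  have hint := integral_sincKernel_pow_mul (n := n) (by lia) (t ^ (n : ℝ)⁻¹) s N
  rw [hln] at hint
  have : 0 ≤ Real.log N := Real.log_natCast_nonneg N
  have hr : |s * t ^ (n : ℝ)⁻¹| * (1 + Real.log N) ≤ |s| * 7 * τ := by
    rw [abs_mul, abs_of_pos (by positivity : 0 < t ^ (n : ℝ)⁻¹)]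
    calc |s| * t ^ (n : ℝ)⁻¹ * (1 + Real.log N) ≤ |s| * τ ^ 2 * (1 + Real.log N) := by
          gcongr; exact h.rpow_inv_le hn
      _ = |s| * τ * (τ * (1 + Real.log N)) := by ring
      _ ≤ |s| * τ * 7 := by gcongr; exact h.mul_one_add_log_le
      _ = |s| * 7 * τ := by ring
  rw [sineSum_eq_sum_sincKernel (by lia), ← hint, ← mul_sub, abs_mul,
    abs_of_pos (one_div_pos.2 Real.pi_pos)]
  calc _ ≤ 1 / Real.pi *
        (2 * Real.pi * ((n + 2) * (2 ^ (n - 1) * τ) + 3 * (|s| * 7 * τ))) := by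
        gcongr
        refine (abs_sum_sincKernel_sub_integral_le hn ht.le _ h.cutoff_pos).trans ?_
        gcongr ?_ * ((n + 2) * ?_ + 3 * ?_)
        exact h.mul_pow_pred_le (by lia)
    _ = _ := by
        have := Real.pi_pos
        field_simp
        ring

lemma one_add_le_rpow_inv_mul (h : IsHeadScale n t τ N) (hn : n ≠ 0) {S : ℝ}
    (hS : τ * (1 + S) ^ n ≤ 1) : 1 + S ≤ t ^ (n : ℝ)⁻¹ * N := by
  have hτ := h.pos
  have ht := h.base_pos
  refine le_of_pow_le_pow_left₀ hn (by positivity) (le_of_mul_le_mul_left ?_ hτ)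
  rw [mul_pow, Real.rpow_inv_natCast_pow ht.le hn]
  calc τ * (1 + S) ^ n ≤ t * (N : ℝ) ^ n * τ ^ 2 := hS.trans h.one_le_mul_pow_mul_sq
    _ ≤ t * (N : ℝ) ^ n * τ ^ 1 := by
        gcongr _ * ?_; exact pow_le_pow_of_le_one hτ.le h.le_one one_le_two
    _ = τ * (t * (N : ℝ) ^ n) := by ring

lemma one_div_rpow_inv_mul_pow_le (h : IsHeadScale n t τ N) (hn : n ≠ 0) :
    1 / (t ^ (n : ℝ)⁻¹ * N) ^ n ≤ τ := by
  have hτ := h.pos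
  have ht := h.base_pos
  have : (0 : ℝ) < N := by exact_mod_cast h.cutoff_pos
  rw [div_le_iff₀ (by positivity), mul_pow, Real.rpow_inv_natCast_pow ht.le hn]
  calc 1 ≤ t * (N : ℝ) ^ n * τ ^ 2 := h.one_le_mul_pow_mul_sq
    _ ≤ t * (N : ℝ) ^ n * τ ^ 1 := by
        gcongr _ * ?_; exact pow_le_pow_of_le_one hτ.le h.le_one one_le_two
    _ = τ * (t * (N : ℝ) ^ n) := by ring

end IsHeadScale

end RiemannSum

section RingingProfile

lemma exists_tendsto_Jint {n : ℕ} (hn : 2 ≤ n) (hodd : Odd n) (s : ℝ) :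
    ∃ J, Tendsto (fun R : ℝ => 1 / (2 * Real.pi) * Jint n s R) atTop (nhds J) ∧
      ∀ {t τ : ℝ} {N : ℕ}, IsHeadScale n t τ N → τ * (1 + |s|) ^ n ≤ 1 →
        |sineSum n t (s * t ^ (n : ℝ)⁻¹) N - J| ≤
          (2 * ((n + 2) * 2 ^ (n - 1) + 21 * |s|) + 1) * τ := by
  obtain ⟨J, hJ, htail⟩ := exists_tendsto_integral_sincKernel hn s
  simp_rw [one_div_two_pi_mul_Jint hn hodd]
  refine ⟨J, hJ, fun {t τ N} h hsτ => ?_⟩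
  have hZ := h.one_add_le_rpow_inv_mul (by lia) hsτ
  have htail' := (htail (t ^ (n : ℝ)⁻¹ * N) (by linarith [abs_nonneg s])
    (by linarith [neg_abs_le s])).trans (h.one_div_rpow_inv_mul_pow_le (by lia))
  linarith [abs_sub_le (sineSum n t (s * t ^ (n : ℝ)⁻¹) N)
    (1 / Real.pi * ∫ y in (0 : ℝ)..(t ^ (n : ℝ)⁻¹ * N), sincKernel n 1 s y) J,
    h.abs_sineSum_sub_integral_le hn s]

end RingingProfile

section PartialSums

variable {n : ℕ} {γ t x : ℝ}

lemma sineSum_add_one (n : ℕ) (t y : ℝ) : sineSum n t (y + 1) = sineSum n t y := by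
  funext K
  refine sum_congr rfl fun k _ => ?_
  rw [show 2 * Real.pi * (t * (k : ℝ) ^ n + (y + 1) * k) =
    2 * Real.pi * (t * (k : ℝ) ^ n + y * k) + k * (2 * Real.pi) by ring,
    Real.sin_add_nat_mul_two_pi]

lemma sin_div_mul_ee_add_neg (hodd : Odd n) (γ t x k : ℝ) :
    Complex.ofReal (Real.sin (2 * Real.pi * γ * k) / (Real.pi * k)) * ee (t * k ^ n + x * k) +
        Complex.ofReal (Real.sin (2 * Real.pi * γ * -k) / (Real.pi * -k)) *
          ee (t * (-k) ^ n + x * -k) =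
      ((Real.sin (2 * Real.pi * (t * k ^ n + (x + γ) * k)) / (Real.pi * k) -
        Real.sin (2 * Real.pi * (t * k ^ n + (x - γ) * k)) / (Real.pi * k) : ℝ) : ℂ) := by
  have hadd : 2 * Real.pi * (t * k ^ n + (x + γ) * k) =
      2 * Real.pi * (t * k ^ n + x * k) + 2 * Real.pi * γ * k := by ring
  have hsub : 2 * Real.pi * (t * k ^ n + (x - γ) * k) =
      2 * Real.pi * (t * k ^ n + x * k) - 2 * Real.pi * γ * k := by ring
  have hneg : t * (-k) ^ n + x * -k = -(t * k ^ n + x * k) := by rw [hodd.neg_pow]; ring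
  rw [hadd, hsub, hneg, Real.sin_add, Real.sin_sub, ee_neg, mul_neg, mul_neg, Real.sin_neg,
    neg_div_neg_eq, ← mul_add, Complex.add_conj, ee_re]
  push_cast
  ring

lemma Upartial_succ (n : ℕ) (γ t x : ℝ) (K : ℕ) :
    Upartial n γ t x (K + 1) = Upartial n γ t x K +
      (Complex.ofReal (Real.sin (2 * Real.pi * γ * ((K + 1 : ℕ) : ℝ)) /
          (Real.pi * ((K + 1 : ℕ) : ℝ))) * ee (t * ((K + 1 : ℕ) : ℝ) ^ n + x * ((K + 1 : ℕ) : ℝ)) +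
        Complex.ofReal (Real.sin (2 * Real.pi * γ * -((K + 1 : ℕ) : ℝ)) /
          (Real.pi * -((K + 1 : ℕ) : ℝ))) *
            ee (t * (-((K + 1 : ℕ) : ℝ)) ^ n + x * -((K + 1 : ℕ) : ℝ))) := by
  have hindex : (Icc (-((K + 1 : ℕ) : ℤ)) ((K + 1 : ℕ) : ℤ)).filter (· ≠ 0) =
      insert ((K + 1 : ℕ) : ℤ) (insert (-((K + 1 : ℕ) : ℤ))
        ((Icc (-(K : ℤ)) (K : ℤ)).filter (· ≠ 0))) := by
    ext k
    simp only [mem_filter, mem_Icc, mem_insert]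
    lia
  rw [Upartial, hindex, sum_insert, sum_insert, Upartial]
  · simp only [Int.cast_neg, Int.cast_natCast]
    ring
  · simp only [mem_filter, mem_Icc]
    lia
  · simp only [mem_filter, mem_Icc, mem_insert]
    lia

lemma Upartial_eq_sineSum (hodd : Odd n) (γ t x : ℝ) (K : ℕ) :
    Upartial n γ t x K =
      ((2 * γ + sineSum n t (x + γ) (K + 1) - sineSum n t (x - γ) (K + 1) : ℝ) : ℂ) := by
  induction K with
  | zero => simp [Upartial, sineSum, filter_singleton]
  | succ K ih =>
    have hsucc (y : ℝ) : sineSum n t y (K + 1 + 1) = sineSum n t y (K + 1) + _ :=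
      sum_Ico_succ_top (by lia) _
    rw [Upartial_succ, ih, sin_div_mul_ee_add_neg hodd, ← Complex.ofReal_add, hsucc, hsucc]
    congr 1
    ring

lemma tendsto_Upartial (hodd : Odd n) {a b : ℝ}
    (ha : Tendsto (sineSum n t (x + γ)) atTop (nhds a))
    (hb : Tendsto (sineSum n t (x - γ)) atTop (nhds b)) :
    Tendsto (Upartial n γ t x) atTop (nhds ((2 * γ + a - b : ℝ) : ℂ)) := by
  rw [funext (Upartial_eq_sineSum hodd γ t x)]
  exact ((Complex.continuous_ofReal.tendsto _).comp ((ha.const_add (2 * γ)).sub hb)).comp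
    (tendsto_add_atTop_nat 1)

lemma exists_tendsto_Upartial {σ s c J E₀ E₁ : ℝ} (hodd : Odd n) (hσ : σ = 1 ∨ σ = -1)
    (hcγ : c ≤ γ) (hcγ' : 2 * c ≤ 1 - 2 * γ) (hs : |s| ≤ c)
    (hnear : ∃ l, Tendsto (sineSum n t s) atTop (nhds l) ∧ |l - J| ≤ E₀)
    (hfar : ∀ y ∈ Set.Icc c (1 - c),
      ∃ l, Tendsto (sineSum n t y) atTop (nhds l) ∧ |l - (1 / 2 - y)| ≤ E₁) :
    ∃ L : ℂ, Tendsto (Upartial n γ t (σ * γ + s)) atTop (nhds L) ∧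
      ‖L - (1 / 2 - Complex.ofReal (σ * J))‖ ≤ E₀ + E₁ + |s| := by
  obtain ⟨hs1, hs2⟩ := abs_le.1 hs
  obtain ⟨l₀, hl₀, hJ⟩ := hnear
  obtain ⟨hJ1, hJ2⟩ := abs_le.1 hJ
  rcases hσ with rfl | rfl
  · obtain ⟨l₁, hl₁, hsaw⟩ := hfar (2 * γ + s) ⟨by linarith, by linarith⟩
    obtain ⟨hsaw1, hsaw2⟩ := abs_le.1 hsaw
    refine ⟨_, tendsto_Upartial hodd (a := l₁) (b := l₀) ?_ ?_, ?_⟩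
    · rwa [show 1 * γ + s + γ = 2 * γ + s by ring]
    · rwa [show 1 * γ + s - γ = s by ring]
    · rw [show ((2 * γ + l₁ - l₀ : ℝ) : ℂ) - (1 / 2 - Complex.ofReal (1 * J)) =
        ((2 * γ + l₁ - l₀ - (1 / 2 - J) : ℝ) : ℂ) by push_cast; ring, Complex.norm_real,
        Real.norm_eq_abs, abs_le]
      constructor <;> linarith [neg_abs_le s, le_abs_self s]
  · obtain ⟨l₁, hl₁, hsaw⟩ := hfar (s - 2 * γ + 1) ⟨by linarith, by linarith⟩
    obtain ⟨hsaw1, hsaw2⟩ := abs_le.1 hsaw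
    rw [sineSum_add_one] at hl₁
    refine ⟨_, tendsto_Upartial hodd (a := l₀) (b := l₁) ?_ ?_, ?_⟩
    · rwa [show -1 * γ + s + γ = s by ring]
    · rwa [show -1 * γ + s - γ = s - 2 * γ by ring]
    · rw [show ((2 * γ + l₀ - l₁ : ℝ) : ℂ) - (1 / 2 - Complex.ofReal (-1 * J)) =
        ((2 * γ + l₀ - l₁ - (1 / 2 + J) : ℝ) : ℂ) by push_cast; ring, Complex.norm_real,
        Real.norm_eq_abs, abs_le]
      constructor <;> linarith [neg_abs_le s, le_abs_self s]

end PartialSums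

section Asymptotics

variable {n : ℕ} {Δ α β : ℝ} {m : ℤ}

lemma mul_div_two_pow_le_inv (hn : 3 ≤ n) (hΔ1 : Δ ≤ 1) (hα0 : 0 ≤ α)
    (hα : α * ((n : ℝ) - 1) ≤ 1) : α * Δ / 2 ^ (n - 1) ≤ (3 * n - 2 : ℝ)⁻¹ := by
  obtain ⟨d, rfl⟩ := Nat.exists_eq_add_of_le' hn
  have hpow : (1 + d : ℝ) ≤ 2 ^ d := by
    simpa [one_add_one_eq_two] using one_add_mul_le_pow (by norm_num : (-2 : ℝ) ≤ 1) d
  rw [show d + 3 - 1 = d + 2 by lia]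
  push_cast at hα ⊢
  calc α * Δ / 2 ^ (d + 2) ≤ α / 2 ^ (d + 2) := by
        gcongr
        exact mul_le_of_le_one_right hα0 hΔ1
    _ ≤ (3 * (d + 3) - 2 : ℝ)⁻¹ := by
        rw [div_le_iff₀ (by positivity), ← div_eq_inv_mul, le_div_iff₀ (by linarith), pow_add]
        linarith [mul_nonneg hα0 (Nat.cast_nonneg (α := ℝ) d)]

lemma exists_between_max_inv (hn : 2 ≤ n) (hα : α < ((n : ℝ) - 1)⁻¹) :
    ∃ β, α < β ∧ 3 * (3 * n - 2 : ℝ)⁻¹ ≤ β ∧ β * ((n : ℝ) - 1) < 1 := by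
  have hn' : (2 : ℝ) ≤ n := by exact_mod_cast hn
  have hhead : 3 * (3 * n - 2 : ℝ)⁻¹ < ((n : ℝ) - 1)⁻¹ := by
    rw [← div_eq_mul_inv, inv_eq_one_div, div_lt_div_iff₀ (by linarith) (by linarith)]
    linarith
  obtain ⟨β, hβ, hβ'⟩ := exists_between (max_lt hα hhead)
  obtain ⟨hαβ, hheadβ⟩ := max_lt_iff.1 hβ
  exact ⟨β, hαβ, hheadβ.le, (lt_inv_mul_iff₀' (by linarith)).1 (by rwa [mul_one])⟩

lemma ceil_rpow_neg_mono {t a b : ℝ} (ht : t ∈ Set.Ioc (0 : ℝ) 1) (hab : a ≤ b) :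
    ⌈t ^ (-a)⌉₊ ≤ ⌈t ^ (-b)⌉₊ :=
  Nat.ceil_mono (Real.rpow_le_rpow_of_exponent_ge ht.1 ht.2 (neg_le_neg hab))

lemma exists_abs_sineSum_sub_sawtooth_le (hn : 2 ≤ n) (hβ : 3 * (3 * n - 2 : ℝ)⁻¹ ≤ β)
    (hβ' : β * ((n : ℝ) - 1) < 1) {c : ℝ} (hc : 0 < c) :
    ∃ C > (0 : ℝ), ∀ᶠ t : ℝ in nhdsWithin 0 (Set.Ioi 0), ∀ y ∈ Set.Icc c (1 - c),
      |sineSum n t y ⌈t ^ (-β)⌉₊ - (1 / 2 - y)| ≤ C * t ^ (3 * n - 2 : ℝ)⁻¹ := by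
  have hn' : (2 : ℝ) ≤ n := by exact_mod_cast hn
  have hβ0 : 0 ≤ β := (mul_nonneg three_pos.le (inv_nonneg.2 (by linarith))).trans hβ
  refine ⟨2 / (c / 2) ^ 2 + ((n + 2) / c * 2 ^ (n - 1) + 1 / (2 * c)), by positivity, ?_⟩
  filter_upwards [Ioc_mem_nhdsGT one_pos,
    eventually_mul_add_one_pow_sub_pow_le (by lia) hβ0 hβ' (half_pos hc)] with t ht hdiff y hy
  have hhead := isHeadScale_rpow (n := n) (by lia) ht
  rw [add_mul]
  exact (abs_sub_le _ _ _).trans (add_le_add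
    (hhead.abs_sineSum_sub_le_of_mem_Icc hc hy (ceil_rpow_neg_mono ht hβ) hdiff)
    (hhead.abs_sineSum_sub_sawtooth_le hn hc hy))

lemma exists_abs_sineSum_sub_ringing_le (hn : 2 ≤ n) (hodd : Odd n)
    (hβ : 3 * (3 * n - 2 : ℝ)⁻¹ ≤ β) (hβ' : β * ((n : ℝ) - 1) < 1) (S : ℝ) :
    ∃ C > (0 : ℝ), ∀ᶠ t : ℝ in nhdsWithin 0 (Set.Ioi 0), ∀ s ∈ Set.Icc (-S) S, ∀ J,
      Tendsto (fun R : ℝ => 1 / (2 * Real.pi) * Jint n s R) atTop (nhds J) →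
      |sineSum n t (s * t ^ (n : ℝ)⁻¹) ⌈t ^ (-β)⌉₊ - J| ≤ C * t ^ (3 * n - 2 : ℝ)⁻¹ := by
  have hn' : (2 : ℝ) ≤ n := by exact_mod_cast hn
  have hκ0 : (0 : ℝ) < (3 * n - 2 : ℝ)⁻¹ := inv_pos.2 (by linarith)
  have hβ0 : 0 ≤ β := (mul_nonneg three_pos.le hκ0.le).trans hβ
  refine ⟨8 + (2 * ((n + 2) * 2 ^ (n - 1) + 21 * |S|) + 1), by positivity, ?_⟩
  filter_upwards [Ioc_mem_nhdsGT one_pos,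
    eventually_mul_add_one_pow_sub_pow_le (by lia) hβ0 hβ' (by norm_num : (0 : ℝ) < 1 / 4),
    eventually_mul_rpow_le 1 hκ0 (by norm_num : (0 : ℝ) < 1 / 4),
    eventually_mul_rpow_le |S| hκ0 (by norm_num : (0 : ℝ) < 1 / 4),
    eventually_mul_rpow_le ((1 + |S|) ^ n) hκ0 one_pos] with t ht hdiff hτ hSτ hSτ' s hs J hJ
  have hhead := isHeadScale_rpow (n := n) (by lia) ht
  set τ := t ^ (3 * n - 2 : ℝ)⁻¹
  rw [one_mul] at hτ
  have hτ0 : 0 ≤ τ := hhead.pos.le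
  have hsS : |s| ≤ |S| := (abs_le.2 hs).trans (le_abs_self S)
  have hy : |s * t ^ (n : ℝ)⁻¹| ≤ τ / 4 :=
    calc |s * t ^ (n : ℝ)⁻¹| = |s| * t ^ (n : ℝ)⁻¹ := by
          rw [abs_mul, abs_of_nonneg (Real.rpow_nonneg ht.1.le _)]
      _ ≤ |S| * τ ^ 2 :=
        mul_le_mul hsS (hhead.rpow_inv_le hn) (Real.rpow_nonneg ht.1.le _) (abs_nonneg S)
      _ = |S| * τ * τ := by ring
      _ ≤ 1 / 4 * τ := by gcongr
      _ = τ / 4 := by ring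
  obtain ⟨J', hJ', happrox⟩ := exists_tendsto_Jint hn hodd s
  obtain rfl := tendsto_nhds_unique hJ hJ'
  have hbound : τ * (1 + |s|) ^ n ≤ 1 := by
    rw [mul_comm]
    exact le_trans (by gcongr) hSτ'
  rw [add_mul]
  refine (abs_sub_le _ _ _).trans (add_le_add
    (hhead.abs_sineSum_sub_le_of_abs_le (by lia) hτ hy (ceil_rpow_neg_mono ht hβ) hdiff)
    ((happrox hhead hbound).trans ?_))
  gcongr

lemma exists_tendsto_sineSum_abs_sub_le (hn : 2 ≤ n) (hodd : Odd n) (hΔ0 : 0 < Δ) (hΔ1 : Δ < 1)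
    (hm : 1 ≤ m) (hα0 : 0 < α) (hαβ : α < β) (hβ1 : β ≤ 1) :
    ∃ C > (0 : ℝ), ∀ᶠ t : ℝ in nhdsWithin 0 (Set.Ioi 0), IsAdmissible n Δ m α t → ∀ y v : ℝ,
      ∃ l, Tendsto (sineSum n t y) atTop (nhds l) ∧
        |l - v| ≤ C * t ^ (α * Δ / 2 ^ (n - 1)) + |sineSum n t y ⌈t ^ (-β)⌉₊ - v| := by
  have hβ0 : 0 < β := hα0.trans hαβ
  have hD : 0 < Δ / 2 ^ (n - 1) := by positivity
  obtain ⟨C, hC, htail⟩ := exists_tendsto_sineSum_of_isAdmissible hn hodd hΔ0 hΔ1 hm hα0 hαβ hβ1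
    (η := α / β * (Δ / 2 ^ (n - 1))) (by positivity)
    (mul_lt_of_lt_one_left hD ((div_lt_one hβ0).2 hαβ))
  have hexp : β * (α / β * (Δ / 2 ^ (n - 1))) = α * Δ / 2 ^ (n - 1) := by field_simp
  rw [hexp] at htail
  refine ⟨C, hC, htail.mono fun t ht hadm y v => ?_⟩
  obtain ⟨l, hl, hle⟩ := ht hadm y
  exact ⟨l, hl, (abs_sub_le _ _ _).trans (by gcongr)⟩

lemma exists_tendsto_sineSum_near_and_away (hn : 3 ≤ n) (hodd : Odd n) (hΔ0 : 0 < Δ)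
    (hΔ1 : Δ < 1) (hm : 1 ≤ m) (hα0 : 0 < α) (hα : α < ((n : ℝ) - 1)⁻¹) (S : ℝ) {c : ℝ}
    (hc : 0 < c) :
    ∃ C > (0 : ℝ), ∀ᶠ t : ℝ in nhdsWithin 0 (Set.Ioi 0), IsAdmissible n Δ m α t →
      (∀ s ∈ Set.Icc (-S) S, ∀ J,
        Tendsto (fun R : ℝ => 1 / (2 * Real.pi) * Jint n s R) atTop (nhds J) →
        ∃ l, Tendsto (sineSum n t (s * t ^ (n : ℝ)⁻¹)) atTop (nhds l) ∧
          |l - J| ≤ C * t ^ (α * Δ / 2 ^ (n - 1))) ∧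
      ∀ y ∈ Set.Icc c (1 - c), ∃ l, Tendsto (sineSum n t y) atTop (nhds l) ∧
        |l - (1 / 2 - y)| ≤ C * t ^ (α * Δ / 2 ^ (n - 1)) := by
  have hn2 : 2 ≤ n := by lia
  have hn' : (3 : ℝ) ≤ n := by exact_mod_cast hn
  obtain ⟨β, hαβ, hheadβ, hβ⟩ := exists_between_max_inv hn2 hα
  have hκ : α * Δ / 2 ^ (n - 1) ≤ (3 * n - 2 : ℝ)⁻¹ :=
    mul_div_two_pow_le_inv hn hΔ1.le hα0.le (by nlinarith)
  obtain ⟨C₀, hC₀, htail⟩ :=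
    exists_tendsto_sineSum_abs_sub_le hn2 hodd hΔ0 hΔ1 hm hα0 hαβ (by nlinarith)
  obtain ⟨C₁, hC₁, haway⟩ := exists_abs_sineSum_sub_sawtooth_le hn2 hheadβ hβ hc
  obtain ⟨C₂, -, hnear⟩ := exists_abs_sineSum_sub_ringing_le hn2 hodd hheadβ hβ S
  refine ⟨C₀ + max C₁ C₂, by positivity, ?_⟩
  filter_upwards [Ioc_mem_nhdsGT one_pos, htail, haway, hnear]
    with t ht htail haway hnear hadm
  have hτ : t ^ (3 * n - 2 : ℝ)⁻¹ ≤ t ^ (α * Δ / 2 ^ (n - 1)) :=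
    Real.rpow_le_rpow_of_exponent_ge ht.1 ht.2 hκ
  have hτ0 : 0 ≤ t ^ (3 * n - 2 : ℝ)⁻¹ := Real.rpow_nonneg ht.1.le _
  simp only [add_mul]
  refine ⟨fun s hs J hJ => (htail hadm _ J).imp fun l hl => ⟨hl.1, hl.2.trans ?_⟩,
    fun y hy => (htail hadm y _).imp fun l hl => ⟨hl.1, hl.2.trans ?_⟩⟩
  · exact add_le_add_right ((hnear s hs J hJ).trans
      (mul_le_mul (le_max_right _ _) hτ hτ0 (by positivity))) _
  · exact add_le_add_right ((haway y hy).trans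
      (mul_le_mul (le_max_left _ _) hτ hτ0 (by positivity))) _

end Asymptotics

theorem stmt13_general (n : ℕ) (hn : 3 ≤ n) (hno : Odd n) (Δ : ℝ) (hΔ0 : 0 < Δ) (hΔ1 : Δ < 1)
    (γ : ℝ) (hγ : γ ∈ Set.Ioo (0 : ℝ) (1 / 2)) (m : ℤ) (hm : 1 ≤ m) (α : ℝ) (hα0 : 0 < α)
    (hα : α < ((n : ℝ) - 1)⁻¹) (S : ℝ) :
    ∃ C > (0 : ℝ), ∃ t₁ ∈ Set.Ioc (0 : ℝ) 1, ∀ t ∈ Set.Ioc (0 : ℝ) t₁, IsAdmissible n Δ m α t →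
      ∀ s ∈ Set.Icc (-S) S, ∀ σ : ℝ, (σ = 1 ∨ σ = -1) →
        ∃ (Js : ℝ) (L : ℂ),
          Tendsto (fun R : ℝ => (1 / (2 * Real.pi)) * Jint n s R) atTop (nhds Js) ∧
          Tendsto (fun K : ℕ => Upartial n γ t (σ * γ + s * t ^ ((n : ℝ)⁻¹)) K)
            atTop (nhds L) ∧
          ‖L - (1 / 2 - Complex.ofReal (σ * Js))‖ ≤ C * t ^ (α * Δ / 2 ^ (n - 1)) := by
  have hn' : (3 : ℝ) ≤ n := by exact_mod_cast hn
  have hc : 0 < min γ ((1 - 2 * γ) / 2) := lt_min hγ.1 (by linarith [hγ.2])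
  have hexp : α * Δ / 2 ^ (n - 1) ≤ (n : ℝ)⁻¹ :=
    (mul_div_two_pow_le_inv hn hΔ1.le hα0.le
      ((lt_inv_mul_iff₀' (by linarith)).1 (by rwa [mul_one])).le).trans
      (inv_anti₀ (by linarith) (by linarith))
  obtain ⟨C, hC, hlim⟩ :=
    exists_tendsto_sineSum_near_and_away hn hno hΔ0 hΔ1 hm hα0 hα S hc
  obtain ⟨t₁, ht₁, hsmall⟩ := mem_nhdsGT_iff_exists_Ioc_subset.1
    ((hlim.and (eventually_mul_rpow_le |S| (inv_pos.2 (by linarith : (0 : ℝ) < n)) hc)).and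
      (Ioc_mem_nhdsGT one_pos))
  refine ⟨C + C + |S|, by positivity, t₁, (hsmall ⟨ht₁, le_rfl⟩).2,
    fun t ht hadm s hs σ hσ => ?_⟩
  obtain ⟨⟨hlim, hSt⟩, ht⟩ := hsmall ht
  have hst : |s * t ^ (n : ℝ)⁻¹| ≤ |S| * t ^ (n : ℝ)⁻¹ := by
    rw [abs_mul, abs_of_nonneg (Real.rpow_nonneg ht.1.le _)]
    exact mul_le_mul_of_nonneg_right ((abs_le.2 hs).trans (le_abs_self S))
      (Real.rpow_nonneg ht.1.le _)
  obtain ⟨J, hJ, -⟩ := exists_tendsto_Jint (by lia) hno s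
  obtain ⟨hnear, haway⟩ := hlim hadm
  obtain ⟨L, hL, hLJ⟩ := exists_tendsto_Upartial hno hσ (min_le_left _ _)
    (by linarith [min_le_right γ ((1 - 2 * γ) / 2)]) (hst.trans hSt) (hnear s hs J hJ) haway
  refine ⟨J, L, hJ, hL, hLJ.trans ?_⟩
  rw [add_mul, add_mul]
  gcongr
  exact hst.trans (mul_le_mul_of_nonneg_left
    (Real.rpow_le_rpow_of_exponent_ge ht.1 ht.2 hexp) (abs_nonneg S))

/-- `n ≥ 3` odd: the ringing profile. With `J(s) = (1/2π)·lim_{R→∞}∫_{−R}^R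
sin(2π(y^n + sy))dy/y`, for admissible `t → 0⁺` and `s ∈ [−S,S]`, `σ = ±1`,
`U(t, σγ + s·t^{1/n}) = 1/2 − σ·J(s) + O(t^{αΔ/2^{n−1}−ε} + t^{αn−1})`. -/
theorem stmt13 (n : ℕ) (hn : 3 ≤ n) (hno : Odd n) (Δ : ℝ) (hΔ0 : 0 < Δ) (hΔ1 : Δ < 1)
    (γ : ℝ) (hγ : γ ∈ Set.Ioo (0 : ℝ) (1 / 2))
    (m : ℤ) (hm : 2 ≤ m) (α : ℝ) (hα1 : ((n : ℝ) - Δ)⁻¹ < α) (hα2 : α < ((n : ℝ) - 1)⁻¹)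
    (ε : ℝ) (hε : 0 < ε) (S : ℝ) (hS : 0 < S) :
    ∃ C > (0 : ℝ), ∃ t₁ > (0 : ℝ), ∀ t ∈ Set.Ioc (0 : ℝ) t₁,
      ((Irrational t ∧ t ∈ Bset n Δ m α) ∨
        (∃ u q : ℤ, 1 ≤ q ∧ Int.gcd u q = 1 ∧ t = (u : ℝ) / (q : ℝ) ∧
          t ≤ (m : ℝ) * (q : ℝ) ^ (-(1 / (α * ((n : ℝ) - Δ)))))) →
      ∀ s ∈ Set.Icc (-S) S, ∀ σ : ℝ, (σ = 1 ∨ σ = -1) →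
        ∃ (Js : ℝ) (L : ℂ),
          Tendsto (fun R : ℝ => (1 / (2 * Real.pi)) * Jint n s R) atTop (nhds Js) ∧
          Tendsto (fun K : ℕ => Upartial n γ t (σ * γ + s * t ^ ((n : ℝ)⁻¹)) K)
            atTop (nhds L) ∧
          ‖L - (1 / 2 - Complex.ofReal (σ * Js))‖ ≤
            C * (t ^ (α * Δ / 2 ^ (n - 1) - ε) + t ^ (α * n - 1)) := by
  have hn' : (3 : ℝ) ≤ n := by exact_mod_cast hn
  obtain ⟨C, hC, t₁, ⟨ht₁0, ht₁1⟩, hU⟩ := stmt13_general n hn hno Δ hΔ0 hΔ1 γ hγ m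
    (one_le_two.trans hm) α ((inv_pos.2 (by linarith)).trans hα1) hα2 S
  refine ⟨C, hC, t₁, ht₁0, fun t ht hadm s hs σ hσ => ?_⟩
  obtain ⟨J, L, hJ, hL, hLJ⟩ := hU t ht (hadm.imp_left And.right) s hs σ hσ
  refine ⟨J, L, hJ, hL, hLJ.trans (mul_le_mul_of_nonneg_left ?_ hC.le)⟩
  exact (Real.rpow_le_rpow_of_exponent_ge ht.1 (ht.2.trans ht₁1) (sub_le_self _ hε.le)).trans
    (le_add_of_nonneg_right (Real.rpow_nonneg ht.1.le _))
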